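/- Let α ∈ ℝ, R ≥ 0, N ≥ n ≥ 1, let Ω ⊆ ℝ² be open and convex, let κ ∈ [0,1), and set c(κ) := 4.7·10⁻⁴ κ/(1+2κ) (if R = 0 one may instead take c(κ) ≡ 1 and κ = 0). Then for every symmetric Ψ ∈ C_c^∞((ℝ²)^N ∖ △△; ℂ) and every fixed configuration (x_{n+1},…,x_N) ∈ (ℝ²)^{N−n} of the last N−n particles: Σ_{j=1}^n ∫_{Ω^n} |D_jΨ|² dx ≥ (1/n) ∫_{Ω^n} |Σ_{j=1}^n D_jΨ|² dx + (1/n) Σ_{1≤j<k≤n} ∫_{Ω^n} ( (1−κ)|∂_{r_jk}|Ψ||² + c(κ)² α_N² r_jk^{-2} 1_A(x_j,x_k) |Ψ|² ) dx, where 1_A(x_j,x_k) := 1_{B_{δ(X_jk)−3R}(0) ∖ B_{3R}(0)}(r_jk), the integrals are over the first n coordinates (the derivatives D_j depend on the positions of all N particles), and ∂_{r_jk}|Ψ| denotes the almost-everywhere defined derivative of the locally Lipschitz function |Ψ| in the radial direction of the relative coordinate r_jk. (Long-range magnetic interaction, Theorem 1.3, first inequality.) -/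

import Mathlib

/-!
The inequality holds pair by pair. Lagrange's identity
`∑ ‖z_j‖² = n⁻¹ ‖∑ z_j‖² + n⁻¹ ∑_{j<k} ‖z_j - z_k‖²` (`lagrange_identity`), applied to the
components of `D_jΨ`, reduces it to bounding `∫ |D_jΨ - D_kΨ|²` from below for each pair.

In the relative coordinate `r = (x_j - x_k)/2 = ρ(cos φ, sin φ)`, with the centre of mass and the
other particles fixed, `D_j - D_k` is a magnetic derivative in `r`. Its radial part dominates
`|∂_r|Ψ||` by the diamagnetic inequality (`radDerAbs_sq_add_angSq_le`). Its angular part on the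
circle of radius `ρ` is a magnetic momentum whose potential has mean
`Φ(ρ) = α(1 + 2 ∑_l flux_l(ρ))`, where `flux_l(ρ)` is the normalized flux of particle `l` through
the disk of radius `ρ` about the centre of mass (`potential_pairConf`). As `Ψ` is symmetric, it is
invariant under `r ↦ -r`, so the angular momenta are even and the spectral gap is
`dist(Φ(ρ), 2ℤ)/ρ` (`circle_gap`, `circle_step`).

For `R = 0` every `flux_l` is `0` or `1` on almost every circle, so `Φ` is an odd multiple of `α`
and its distance to `2ℤ` is at least `α_N`. For `R > 0` the flux can be near `2ℤ`, but it does not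
stay there. By Stokes' theorem the derivative of `flux_l` is comparable to the length of the chord
that the particle cuts out of the circle (`hasDerivAt_flux`, `hasDerivAt_flux_bounds`). Either all
chords are short, and then `Φ` is close to an odd multiple of `α`, hence away from `2ℤ`; or `Φ`
moves quickly. Thus in each window of length `R/2` beyond radius `3R`, `Φ` is within `α_N/1000` of
`2ℤ` for at most half of the window (`volume_bad_window`). The share `κ |∂_r|Ψ||²` of the radial
energy transports the bound from the good half to the whole window (`window_ineq`,
`window_step`). Covering the annulus by such windows, which do not leave the disk of radius
`δ(X)` because the annulus ends at `δ(X) - 3R`, gives the inequality for a fixed centre of mass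
(`polar_ineq`, `relative_ineq`).

Finally one integrates over the centre of mass and the other particles (`pair_lintegral`): for `Ω`
convex the centre of mass of two points of `Ω` lies in `Ω`, and the disk of radius `δ(X)` about it
is contained in `Ω`.
-/

open MeasureTheory Real Set

noncomputable section

/-- The plane `ℝ²`. -/
abbrev Plane : Type := EuclideanSpace ℝ (Fin 2)

/-- Counterclockwise rotation by `π/2`: `(a,b)^⊥ = (-b,a)`. -/
def perp (v : Plane) : Plane := (WithLp.equiv 2 (Fin 2 → ℝ)).symm ![-(v 1), v 0]

/-- The total magnetic vector potential `A_j(y) = Σ_{k≠j} (y-x_k)^⊥ / |y-x_k|_R²`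
felt by particle `j` at position `y`, where `|x|_R := max{|x|, R}`. -/
def magA (R : ℝ) {N : ℕ} (x : Fin N → Plane) (j : Fin N) (y : Plane) : Plane :=
  ∑ k ∈ Finset.univ.erase j, ((max ‖y - x k‖ R) ^ 2)⁻¹ • perp (y - x k)

/-- The `i`-th component of the magnetic one-particle derivative
`D_jΨ = -i∇_{x_j}Ψ + αA_j(x_j)Ψ`. -/
def covDer (α R : ℝ) {N : ℕ} (Ψ : (Fin N → Plane) → ℂ) (j : Fin N)
    (x : Fin N → Plane) (i : Fin 2) : ℂ :=
  -Complex.I * fderiv ℝ Ψ x (Pi.single j (EuclideanSpace.single i 1))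
    + (α * magA R x j (x j) i) * Ψ x

/-- `α_N := min_{p ∈ {0,…,N-2}} min_{q ∈ ℤ} |(2p+1)α - 2q|`. -/
def alphaN (α : ℝ) (N : ℕ) : ℝ :=
  sInf {t : ℝ | ∃ p : ℕ, p + 1 < N ∧ ∃ q : ℤ, t = |(2 * (p : ℝ) + 1) * α - 2 * (q : ℝ)|}

/-- Unit vector in the direction of the relative coordinate `r_jk = (x_j - x_k)/2`. -/
def relUnit {N : ℕ} (x : Fin N → Plane) (j k : Fin N) : Plane :=
  ‖x j - x k‖⁻¹ • (x j - x k)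

/-- `r_jk := |x_j - x_k|/2`, the length of the relative coordinate. -/
def relLen {N : ℕ} (x : Fin N → Plane) (j k : Fin N) : ℝ :=
  ‖(2:ℝ)⁻¹ • (x j - x k)‖

/-- `X_jk := (x_j + x_k)/2`, the center of mass of the pair. -/
def comXY {N : ℕ} (x : Fin N → Plane) (j k : Fin N) : Plane :=
  (2:ℝ)⁻¹ • (x j + x k)

/-- The (a.e. defined) radial derivative `∂_{r_jk}|Ψ|` of `|Ψ|` in the radial direction of
the relative coordinate `r_jk`; `fderiv` is interpreted as `0` where `|Ψ|` fails to be
differentiable, which happens only on a Lebesgue null set since `|Ψ|` is locally Lipschitz. -/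
def radDerAbs {N : ℕ} (Ψ : (Fin N → Plane) → ℂ) (j k : Fin N) (x : Fin N → Plane) : ℝ :=
  fderiv ℝ (fun w => ‖Ψ w‖) x (Pi.single j (relUnit x j k) - Pi.single k (relUnit x j k))

/-- Indicator `1_A(x_j, x_k)` of the annulus `B_{δ(X_jk)-3R}(0) ∖ B_{3R}(0)` in the relative
coordinate `r_jk`, where `δ(X) := dist(X, ∂Ω)`. -/
def annulusInd (Ω : Set Plane) (R : ℝ) {N : ℕ} (x : Fin N → Plane) (j k : Fin N) : ℝ :=
  if 3 * R ≤ relLen x j k ∧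
      relLen x j k < Metric.infDist (comXY x j k) (frontier Ω) - 3 * R then 1 else 0

/-! ### Spectral gap on the half circle -/

/-- Integration by parts on a period turns the derivative into multiplication by the frequency. -/
theorem fourierCoeffOn_deriv_of_periodic {a b : ℝ} (hab : a < b) {v v' : ℝ → ℂ}
    (hv : ∀ x, HasDerivAt v (v' x) x) (hv' : Continuous v') (hper : v b = v a) (n : ℤ) :
    fourierCoeffOn hab v' n
      = (2 * π * n / (b - a) : ℝ) * Complex.I * fourierCoeffOn hab v n := by
  have hpos : (0:ℝ) < b - a := sub_pos.2 hab
  have hne : ((b:ℂ) - a) ≠ 0 := by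
    rw [← Complex.ofReal_sub]; exact_mod_cast hpos.ne'
  rcases eq_or_ne n 0 with rfl | hn
  · rw [fourierCoeffOn_eq_integral]
    have : ∫ x in a..b, v' x = v b - v a :=
      intervalIntegral.integral_eq_sub_of_hasDerivAt (fun x _ => hv x)
        (hv'.intervalIntegrable _ _)
    simp [this, hper]
  · rw [fourierCoeffOn_of_hasDerivAt hab hn (fun x _ => hv x) (hv'.intervalIntegrable _ _), hper]
    have hn' : (n:ℂ) ≠ 0 := by exact_mod_cast hn
    have hpi : (π:ℂ) ≠ 0 := by exact_mod_cast Real.pi_ne_zero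
    push_cast
    field_simp
    simp

/-- **Spectral gap of the magnetic momentum on a half circle.**  For a wave function with
antipodal symmetry and total flux `π Φ` along the half circle, the operator `-i∂ + a` is
gauge equivalent to `-i∂ + Φ` with periodic boundary conditions, whose eigenvalues are
`Φ + 2q`, `q ∈ ℤ`. -/
theorem circle_gap (b : ℝ) {u u' : ℝ → ℂ} (hu : ∀ x, HasDerivAt u (u' x) x)
    (hu' : Continuous u') {a : ℝ → ℝ} (ha : Continuous a) (hper : u (b + π) = u b)
    {Φ : ℝ} (hΦ : ∫ x in b..(b + π), a x = π * Φ) {γ : ℝ} (hγ0 : 0 ≤ γ)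
    (hγ : ∀ q : ℤ, γ ≤ |Φ - 2 * q|) :
    γ ^ 2 * ∫ x in b..(b + π), ‖u x‖ ^ 2
      ≤ ∫ x in b..(b + π), ‖-Complex.I * u' x + a x * u x‖ ^ 2 := by
  have hab : b < b + π := by linarith [Real.pi_pos]
  have huc : Continuous u := continuous_iff_continuousAt.2 fun x => (hu x).continuousAt
  set Θ : ℝ → ℝ := fun x => (∫ t in b..x, a t) - Φ * (x - b) with hΘ
  have hΘd : ∀ x, HasDerivAt Θ (a x - Φ) x := fun x => by
    have h1 := ha.integral_hasStrictDerivAt b x |>.hasDerivAt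
    have h2 : HasDerivAt (fun x : ℝ => Φ * (x - b)) (Φ * 1) x :=
      ((hasDerivAt_id x).sub_const b).const_mul Φ
    have h3 := h1.sub h2
    rw [mul_one] at h3
    exact h3
  have hΘc : Continuous Θ := continuous_iff_continuousAt.2 fun x => (hΘd x).continuousAt
  set E : ℝ → ℂ := fun x => Complex.exp (Complex.I * (Θ x : ℂ)) with hE
  have hEd : ∀ x, HasDerivAt E (E x * (Complex.I * ((a x - Φ : ℝ) : ℂ))) x := fun x =>
    ((hΘd x).ofReal_comp.const_mul Complex.I).cexp
  have hEc : Continuous E := by fun_prop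
  have hEn : ∀ x, ‖E x‖ = 1 := fun x => by
    simp [hE, Complex.norm_exp]
  set v : ℝ → ℂ := fun x => u x * E x with hv
  set v' : ℝ → ℂ := fun x => u' x * E x + u x * (E x * (Complex.I * ((a x - Φ : ℝ) : ℂ))) with hv'
  have hvd : ∀ x, HasDerivAt v (v' x) x := fun x => (hu x).mul (hEd x)
  have hvc : Continuous v := huc.mul hEc
  have hv'c : Continuous v' := by fun_prop
  have hvper : v (b + π) = v b := by
    have : Θ (b + π) = Θ b := by simp only [hΘ, hΦ]; simp; ring
    simp only [hv, hE, this, hper]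
  set y : ℝ → ℂ := fun x => v' x + (Complex.I * Φ) * v x with hy
  have hyc : Continuous y := by fun_prop
  have hyn : ∀ x, ‖y x‖ = ‖-Complex.I * u' x + a x * u x‖ := fun x => by
    have : y x = E x * Complex.I * (-Complex.I * u' x + a x * u x) := by
      simp only [hy, hv, hv']; push_cast; ring_nf; simp
    rw [this, norm_mul, norm_mul, hEn]; simp
  have hvn : ∀ x, ‖v x‖ = ‖u x‖ := fun x => by simp [hv, hEn]
  have hcoef : ∀ n : ℤ, ‖fourierCoeffOn hab y n‖ = |Φ + 2 * n| * ‖fourierCoeffOn hab v n‖ := by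
    intro n
    have h1 : fourierCoeffOn hab y n
        = fourierCoeffOn hab v' n + (Complex.I * Φ) * fourierCoeffOn hab v n := by
      simp only [fourierCoeffOn_eq_integral, hy]
      have hc : Continuous fun x : ℝ => (fourier (-n)) (x : AddCircle (b + π - b)) :=
        (map_continuous (fourier (-n))).comp (AddCircle.continuous_mk' _)
      have e : ∀ x : ℝ, (fourier (-n)) (x : AddCircle (b + π - b)) • (v' x + Complex.I * Φ * v x)
          = (fourier (-n)) (x : AddCircle (b + π - b)) • v' x
            + (Complex.I * Φ) * ((fourier (-n)) (x : AddCircle (b + π - b)) • v x) := by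
        intro x; simp only [smul_eq_mul]; ring
      simp_rw [e]
      have i1 : IntervalIntegrable (fun x : ℝ => (fourier (-n)) (x : AddCircle (b + π - b)) • v' x)
          volume b (b + π) := (hc.smul hv'c).intervalIntegrable _ _
      have i2 : IntervalIntegrable (fun x : ℝ => (Complex.I * Φ) *
          ((fourier (-n)) (x : AddCircle (b + π - b)) • v x))
          volume b (b + π) := (continuous_const.mul (hc.smul hvc)).intervalIntegrable _ _
      rw [intervalIntegral.integral_add i1 i2, intervalIntegral.integral_const_mul, smul_add]
      simp only [Complex.real_smul]; ring
    rw [h1, fourierCoeffOn_deriv_of_periodic hab hvd hv'c hvper n]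
    have h2 : ((2 * π * n / (b + π - b) : ℝ) : ℂ) * Complex.I * fourierCoeffOn hab v n
        + Complex.I * Φ * fourierCoeffOn hab v n
        = ((Φ + 2 * n : ℝ) : ℂ) * Complex.I * fourierCoeffOn hab v n := by
      have : 2 * π * n / (b + π - b) = 2 * (n:ℝ) := by
        have := Real.pi_ne_zero
        field_simp; ring
      rw [this]; push_cast; ring
    rw [h2, norm_mul, norm_mul, Complex.norm_real]; simp
  have L2 : ∀ f : ℝ → ℂ, Continuous f → MemLp f 2 (volume.restrict (Ioc b (b + π))) :=
    fun f hf => by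
      obtain ⟨M, hM⟩ := isCompact_Icc.exists_bound_of_continuousOn (s := Icc b (b + π))
        hf.continuousOn
      exact MemLp.of_bound hf.aestronglyMeasurable M
        ((ae_restrict_iff' measurableSet_Ioc).2 (.of_forall fun x hx => hM x (Ioc_subset_Icc_self hx)))
  have s1 := (hasSum_sq_fourierCoeffOn hab (L2 v hvc)).mul_left (γ ^ 2)
  have s2 := hasSum_sq_fourierCoeffOn hab (L2 y hyc)
  have key := hasSum_le (fun n => by
    rw [hcoef n, mul_pow]
    gcongr
    have := hγ (-n)
    push_cast at this
    rwa [mul_neg, sub_neg_eq_add] at this) s1 s2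
  simp only [hyn, hvn, smul_eq_mul, add_sub_cancel_left] at key
  rw [mul_left_comm] at key
  exact le_of_mul_le_mul_left key (inv_pos.2 Real.pi_pos)

/-! ### The flux of one smeared particle through a disk -/

theorem countable_cos_eq (c : ℝ) : {φ : ℝ | Real.cos φ = c}.Countable := by
  rcases Set.eq_empty_or_nonempty {φ : ℝ | Real.cos φ = c} with h | ⟨x, hx⟩
  · rw [h]; exact Set.countable_empty
  · refine ((Set.countable_range fun k : ℤ => 2 * k * π + x).union
      (Set.countable_range fun k : ℤ => 2 * k * π - x)).mono fun y hy => ?_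
    obtain ⟨k, hk⟩ := Real.cos_eq_cos_iff.1
      (show Real.cos x = Real.cos y from Eq.trans hx (Eq.symm hy))
    rcases hk with hk | hk
    · exact Or.inl ⟨k, hk.symm⟩
    · exact Or.inr ⟨k, hk.symm⟩

/-- Squared distance between the point of polar coordinates `(ρ, φ)` and the point `(d, 0)`. -/
def sqDist (ρ d φ : ℝ) : ℝ := ρ ^ 2 + d ^ 2 - 2 * ρ * d * Real.cos φ

/-- Tangential component along the circle of radius `ρ` (times `ρ`) of the vector potential
`x ↦ x^⊥/|x|_R²` of a particle at distance `d` from the centre, at relative angle `φ`. -/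
def fluxDens (R ρ d φ : ℝ) : ℝ := (ρ ^ 2 - ρ * d * Real.cos φ) / max (sqDist ρ d φ) (R ^ 2)

/-- Normalised magnetic flux through the disk of radius `ρ` of a particle of radius `R` whose
centre is at distance `d` from the centre of the disk. -/
def flux (R ρ d : ℝ) : ℝ := (2 * π)⁻¹ * ∫ φ in (-π)..π, fluxDens R ρ d φ

theorem sq_sub_le_sqDist {ρ d : ℝ} (hρ : 0 ≤ ρ) (hd : 0 ≤ d) (φ : ℝ) :
    (ρ - d) ^ 2 ≤ sqDist ρ d φ := by
  have := mul_le_mul_of_nonneg_left (Real.cos_le_one φ) (mul_nonneg hρ hd)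
  unfold sqDist; nlinarith

/-- A Lipschitz bound uniform in the angle, as needed to differentiate the flux under the integral. -/
theorem lipschitz_fluxDens {R : ℝ} (hR : 0 < R) {d : ℝ} (hd : 0 ≤ d) (ρ₀ : ℝ) :
    ∃ C : ℝ, ∀ φ, LipschitzOnWith (Real.nnabs C) (fun ρ => fluxDens R ρ d φ)
      (Metric.ball ρ₀ 1) := by
  set M := |ρ₀| + 1
  have hM : 0 ≤ M := by positivity
  refine ⟨(2 * M + d) / R ^ 2 + (M ^ 2 + M * d) * (2 * M + 2 * d) / (R ^ 2 * R ^ 2),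
    fun φ => LipschitzOnWith.of_dist_le_mul fun x hx y hy => ?_⟩
  have hxM : |x| ≤ M := by
    rw [Metric.mem_ball, Real.dist_eq] at hx
    have := abs_sub_abs_le_abs_sub x ρ₀
    simp only [M]; linarith
  have hyM : |y| ≤ M := by
    rw [Metric.mem_ball, Real.dist_eq] at hy
    have := abs_sub_abs_le_abs_sub y ρ₀
    simp only [M]; linarith
  have hc := Real.abs_cos_le_one φ
  set c := Real.cos φ
  have hR2 : 0 < R ^ 2 := by positivity
  set m₁ := max (sqDist x d φ) (R ^ 2)
  set m₂ := max (sqDist y d φ) (R ^ 2)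
  have h₁ : R ^ 2 ≤ m₁ := le_max_right _ _
  have h₂ : R ^ 2 ≤ m₂ := le_max_right _ _
  have p₁ : 0 < m₁ := hR2.trans_le h₁
  have p₂ : 0 < m₂ := hR2.trans_le h₂
  have hm : |m₁ - m₂| ≤ (2 * M + 2 * d) * |x - y| := by
    refine (abs_max_sub_max_le_abs _ _ _).trans ?_
    have : sqDist x d φ - sqDist y d φ = (x + y - 2 * d * c) * (x - y) := by
      simp only [sqDist, c]; ring
    rw [this, abs_mul]
    gcongr
    calc |x + y - 2 * d * c| ≤ |x| + |y| + |2 * d * c| :=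
          (abs_sub _ _).trans (by gcongr; exact abs_add_le _ _)
      _ ≤ M + M + 2 * d * 1 := by
          rw [abs_mul, abs_of_nonneg (by positivity : 0 ≤ 2 * d)]; gcongr
      _ = 2 * M + 2 * d := by ring
  have hn : |(x ^ 2 - x * d * c) - (y ^ 2 - y * d * c)| ≤ (2 * M + d) * |x - y| := by
    have : (x ^ 2 - x * d * c) - (y ^ 2 - y * d * c) = (x + y - d * c) * (x - y) := by ring
    rw [this, abs_mul]
    gcongr
    calc |x + y - d * c| ≤ |x| + |y| + |d * c| :=
          (abs_sub _ _).trans (by gcongr; exact abs_add_le _ _)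
      _ ≤ M + M + d * 1 := by rw [abs_mul, abs_of_nonneg hd]; gcongr
      _ = 2 * M + d := by ring
  have hn2 : |y ^ 2 - y * d * c| ≤ M ^ 2 + M * d := by
    calc |y ^ 2 - y * d * c| ≤ |y ^ 2| + |y * d * c| := abs_sub _ _
      _ ≤ M ^ 2 + M * d * 1 := by
        rw [abs_mul, abs_mul, abs_pow, abs_of_nonneg hd]; gcongr
      _ = _ := by ring
  have e : (x ^ 2 - x * d * c) / m₁ - (y ^ 2 - y * d * c) / m₂
      = ((x ^ 2 - x * d * c) - (y ^ 2 - y * d * c)) / m₁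
        - (y ^ 2 - y * d * c) * (m₁ - m₂) / (m₁ * m₂) := by
    field_simp; ring
  rw [Real.dist_eq, Real.dist_eq, Real.coe_nnabs]
  change |(x ^ 2 - x * d * c) / m₁ - (y ^ 2 - y * d * c) / m₂| ≤ _
  have hK : 0 ≤ (2 * M + d) / R ^ 2 + (M ^ 2 + M * d) * (2 * M + 2 * d) / (R ^ 2 * R ^ 2) := by
    positivity
  rw [e, abs_of_nonneg hK, add_mul]
  refine (abs_sub _ _).trans (add_le_add ?_ ?_)
  · rw [abs_div, abs_of_pos p₁]
    calc _ ≤ ((2 * M + d) * |x - y|) / R ^ 2 := by gcongr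
      _ = _ := by ring
  · rw [abs_div, abs_mul, abs_of_pos (mul_pos p₁ p₂)]
    calc _ ≤ ((M ^ 2 + M * d) * ((2 * M + 2 * d) * |x - y|)) / (R ^ 2 * R ^ 2) := by gcongr
      _ = _ := by ring

/-- The part of the angles at which the circle of radius `ρ` runs inside the particle. -/
def insideAngles (R ρ d : ℝ) : Set ℝ := {φ | sqDist ρ d φ < R ^ 2}

theorem measurableSet_insideAngles (R ρ d : ℝ) : MeasurableSet (insideAngles R ρ d) := by
  unfold insideAngles sqDist
  exact measurableSet_lt (by fun_prop) measurable_const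

/-- **Stokes' theorem for one smeared flux**: the flux through the disk of radius `ρ` grows in
proportion to the length of the arc inside the particle, because the field is `2/R²` there and
vanishes elsewhere.  The radial derivative of the potential differs from the field by an angular
derivative, which integrates to zero over the circle. -/
theorem hasDerivAt_flux {R : ℝ} (hR : 0 < R) {d : ℝ} (hd : 0 < d) {ρ : ℝ} (hρ : 0 < ρ) :
    HasDerivAt (fun ρ => flux R ρ d)
      (ρ / (π * R ^ 2) * volume.real (Ioc (-π) π ∩ insideAngles R ρ d)) ρ := by
  have hR2 : 0 < R ^ 2 := by positivity
  have hpi := Real.pi_pos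
  have hle : -π ≤ π := by linarith
  obtain ⟨C, hC⟩ := lipschitz_fluxDens hR hd.le ρ
  set S := insideAngles R ρ d
  have hS : MeasurableSet S := measurableSet_insideAngles R ρ d
  classical
  set G' : ℝ → ℝ := fun φ => if sqDist ρ d φ < R ^ 2 then -d * Real.cos φ / R ^ 2 else
    (-d * Real.cos φ * sqDist ρ d φ + 2 * ρ * d ^ 2 * Real.sin φ ^ 2) / sqDist ρ d φ ^ 2 with hG'
  set F' : ℝ → ℝ := fun φ => S.indicator (fun _ => 2 * ρ / R ^ 2) φ + G' φ with hF'
  have hexc : {φ : ℝ | sqDist ρ d φ = R ^ 2}.Countable := by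
    refine (countable_cos_eq ((ρ ^ 2 + d ^ 2 - R ^ 2) / (2 * ρ * d))).mono fun φ hφ => ?_
    have h : sqDist ρ d φ = R ^ 2 := hφ
    unfold sqDist at h
    simp only [mem_ofPred_eq]
    field_simp
    linarith
  have hmG : Measurable G' := by
    apply Measurable.ite hS
    · fun_prop
    · unfold sqDist; fun_prop
  have hcont : ∀ x, Continuous fun φ => fluxDens R x d φ := fun x => by
    unfold fluxDens sqDist
    refine Continuous.div (by fun_prop) (by fun_prop) fun φ => ?_
    exact (hR2.trans_le (le_max_right _ _)).ne'
  have hdiff : ∀ φ, sqDist ρ d φ ≠ R ^ 2 → HasDerivAt (fun x => fluxDens R x d φ) (F' φ) ρ := by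
    intro φ hφ
    have hn : HasDerivAt (fun x : ℝ => x ^ 2 - x * d * Real.cos φ) (2 * ρ - d * Real.cos φ) ρ := by
      have h1 := (hasDerivAt_pow 2 ρ).sub (((hasDerivAt_id ρ).mul_const d).mul_const (Real.cos φ))
      convert! h1 using 1
      simp
    have hD : HasDerivAt (fun x : ℝ => sqDist x d φ) (2 * ρ - 2 * d * Real.cos φ) ρ := by
      unfold sqDist
      have h1 := ((hasDerivAt_pow 2 ρ).add_const (d ^ 2)).sub
        ((((hasDerivAt_id ρ).const_mul 2).mul_const d).mul_const (Real.cos φ))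
      convert! h1 using 1
      simp
    rcases lt_or_gt_of_ne hφ with h | h
    · have hev : (fun x => fluxDens R x d φ) =ᶠ[nhds ρ]
          fun x => (x ^ 2 - x * d * Real.cos φ) / R ^ 2 := by
        filter_upwards [hD.continuousAt.eventually_lt_const h] with x hx
        unfold fluxDens; rw [max_eq_right hx.le]
      refine (hn.div_const (R ^ 2)).congr_of_eventuallyEq hev |>.congr_deriv ?_
      have : φ ∈ S := h
      simp only [hF', hG', indicator_of_mem this, if_pos h]; ring
    · have hev : (fun x => fluxDens R x d φ) =ᶠ[nhds ρ]
          fun x => (x ^ 2 - x * d * Real.cos φ) / sqDist x d φ := by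
        filter_upwards [hD.continuousAt.eventually_const_lt h] with x hx
        unfold fluxDens; rw [max_eq_left hx.le]
      have hpos : 0 < sqDist ρ d φ := hR2.trans h
      refine (hn.div hD hpos.ne').congr_of_eventuallyEq hev |>.congr_deriv ?_
      have : φ ∉ S := not_lt.2 h.le
      simp only [hF', hG', indicator_of_notMem this, if_neg (not_lt.2 h.le), zero_add]
      congr 1
      rw [Real.sin_sq]; unfold sqDist; ring
  have hae : ∀ᵐ φ ∂(volume.restrict (Ioc (-π) π)), sqDist ρ d φ ≠ R ^ 2 :=
    ae_restrict_of_ae (hexc.ae_notMem volume)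
  have main := hasDerivAt_integral_of_dominated_loc_of_lip
    (μ := volume.restrict (Ioc (-π) π)) (F := fun x φ => fluxDens R x d φ) (F' := F')
    (bound := fun _ => C) (Metric.ball_mem_nhds ρ one_pos)
    (.of_forall fun x => (hcont x).aestronglyMeasurable)
    ((hcont ρ).integrableOn_Ioc)
    (((measurable_const.indicator hS).add hmG).aestronglyMeasurable)
    (.of_forall hC) (integrable_const C)
    (hae.mono fun φ hφ => hdiff φ hφ)
  obtain ⟨hInt, hder⟩ := main
  have hI1 : IntegrableOn (S.indicator fun _ => 2 * ρ / R ^ 2) (Ioc (-π) π) :=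
    (integrable_const _).indicator hS
  have hI2 : IntegrableOn G' (Ioc (-π) π) := by
    have h : IntegrableOn (fun φ => F' φ - S.indicator (fun _ => 2 * ρ / R ^ 2) φ) (Ioc (-π) π) :=
      hInt.sub hI1
    refine h.congr_fun (fun φ _ => ?_) measurableSet_Ioc
    simp [hF']
  have hG0 : ∫ φ in Ioc (-π) π, G' φ = 0 := by
    rw [← intervalIntegral.integral_of_le hle]
    have hGc : Continuous fun φ => -d * Real.sin φ / max (sqDist ρ d φ) (R ^ 2) := by
      unfold sqDist
      refine Continuous.div (by fun_prop) (by fun_prop) fun φ => ?_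
      exact (hR2.trans_le (le_max_right _ _)).ne'
    have hder : ∀ φ ∈ Ioo (-π) π \ {φ : ℝ | sqDist ρ d φ = R ^ 2},
        HasDerivAt (fun φ => -d * Real.sin φ / max (sqDist ρ d φ) (R ^ 2)) (G' φ) φ := by
      rintro φ ⟨-, hφ⟩
      have hφ : sqDist ρ d φ ≠ R ^ 2 := hφ
      have hn : HasDerivAt (fun φ : ℝ => -d * Real.sin φ) (-d * Real.cos φ) φ :=
        (Real.hasDerivAt_sin φ).const_mul _
      have hD : HasDerivAt (fun φ : ℝ => sqDist ρ d φ) (2 * ρ * d * Real.sin φ) φ := by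
        have h1 := ((Real.hasDerivAt_cos φ).const_mul (2 * ρ * d)).const_sub (ρ ^ 2 + d ^ 2)
        convert! h1 using 1
        ring
      rcases lt_or_gt_of_ne hφ with h | h
      · have hev : (fun φ => -d * Real.sin φ / max (sqDist ρ d φ) (R ^ 2)) =ᶠ[nhds φ]
            fun φ => -d * Real.sin φ / R ^ 2 := by
          filter_upwards [hD.continuousAt.eventually_lt_const h] with x hx
          rw [max_eq_right hx.le]
        refine (hn.div_const (R ^ 2)).congr_of_eventuallyEq hev |>.congr_deriv ?_
        simp only [hG', if_pos h]
      · have hev : (fun φ => -d * Real.sin φ / max (sqDist ρ d φ) (R ^ 2)) =ᶠ[nhds φ]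
            fun φ => -d * Real.sin φ / sqDist ρ d φ := by
          filter_upwards [hD.continuousAt.eventually_const_lt h] with x hx
          rw [max_eq_left hx.le]
        have hpos : 0 < sqDist ρ d φ := hR2.trans h
        refine (hn.div hD hpos.ne').congr_of_eventuallyEq hev |>.congr_deriv ?_
        simp only [hG', if_neg (not_lt.2 h.le)]
        congr 1; ring
    rw [MeasureTheory.integral_eq_of_hasDerivAt_off_countable_of_le _ _ hle hexc hGc.continuousOn
      hder ((intervalIntegrable_iff_integrableOn_Ioc_of_le hle).2 hI2)]
    simp
  have hval : ∫ φ in Ioc (-π) π, F' φ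
      = 2 * ρ / R ^ 2 * volume.real (Ioc (-π) π ∩ S) := by
    have : ∫ φ in Ioc (-π) π, F' φ = (∫ φ in Ioc (-π) π, S.indicator (fun _ => 2 * ρ / R ^ 2) φ)
        + ∫ φ in Ioc (-π) π, G' φ := integral_add hI1 hI2
    rw [this, hG0, add_zero, setIntegral_indicator hS, setIntegral_const, smul_eq_mul, mul_comm]
  rw [hval] at hder
  have h2 := hder.const_mul (2 * π)⁻¹
  have hfun : (fun ρ => flux R ρ d)
      = fun x => (2 * π)⁻¹ * ∫ φ in Ioc (-π) π, fluxDens R x d φ := by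
    funext x; rw [flux, intervalIntegral.integral_of_le hle]
  rw [hfun]
  refine h2.congr_deriv ?_
  field_simp

/-! ### Bounds for the flux and its derivative -/

/-- The derivative of the flux is comparable to `√(R² - (ρ-d)²)/R²`, the half chord (zero if the
circle misses the particle) over `R²`, since the arc inside the particle is nearly straight beyond
radius `2R`. -/
theorem hasDerivAt_flux_bounds {R : ℝ} (hR : 0 < R) {d : ℝ} (hd : 0 ≤ d) {ρ : ℝ}
    (hρ : 2 * R ≤ ρ) :
    ∃ f', HasDerivAt (fun ρ => flux R ρ d) f' ρ ∧
      1 / 2 * (√(R ^ 2 - (ρ - d) ^ 2) / R ^ 2) ≤ f' ∧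
      f' ≤ 3 / 2 * (√(R ^ 2 - (ρ - d) ^ 2) / R ^ 2) := by
  have hR2 : 0 < R ^ 2 := by positivity
  have hpi := Real.pi_pos
  have hρ0 : 0 < ρ := by linarith
  rcases hd.eq_or_lt with rfl | hd
  · refine ⟨0, ?_, ?_⟩
    · refine (hasDerivAt_const ρ (1:ℝ)).congr_of_eventuallyEq ?_
      filter_upwards [lt_mem_nhds (show R < ρ by linarith)] with x hx
      have hx2 : R ^ 2 ≤ x ^ 2 := by gcongr
      have : ∀ φ, fluxDens R x 0 φ = 1 := fun φ => by
        have hx3 : x ^ 2 ≠ 0 := (hR2.trans_le hx2).ne'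
        simp [fluxDens, sqDist, max_eq_left hx2, hx3]
      simp only [flux, this]
      simp; field_simp; ring
    · rw [Real.sqrt_eq_zero_of_nonpos (by nlinarith)]
      simp
  refine ⟨_, hasDerivAt_flux hR hd hρ0, ?_⟩
  set S := Ioc (-π) π ∩ insideAngles R ρ d
  by_cases hq : R ^ 2 ≤ (ρ - d) ^ 2
  · have hS : S = ∅ := by
      ext φ
      simp only [S, insideAngles, mem_inter_iff, mem_ofPred_eq, mem_empty_iff_false, iff_false,
        not_and, not_lt]
      exact fun _ => hq.trans (sq_sub_le_sqDist hρ0.le hd.le φ)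
    rw [hS, Real.sqrt_eq_zero_of_nonpos (by linarith)]
    simp
  have hq := not_le.1 hq
  have hqa := abs_lt_of_sq_lt_sq hq hR.le
  rw [abs_lt] at hqa
  have hρd : 0 < ρ * d := by positivity
  set q := √(R ^ 2 - (ρ - d) ^ 2) with hqdef
  have hq0 : 0 ≤ q := Real.sqrt_nonneg _
  have hqsq : q ^ 2 = R ^ 2 - (ρ - d) ^ 2 := Real.sq_sqrt (by linarith)
  set w := q / √(ρ * d) with hw
  have hw0 : 0 ≤ w := by positivity
  have hwsq : w ^ 2 * (ρ * d) = q ^ 2 := by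
    rw [hw, div_pow, Real.sq_sqrt hρd.le]; field_simp
  have hmem : ∀ φ, φ ∈ insideAngles R ρ d ↔ 2 * (1 - Real.cos φ) < w ^ 2 := fun φ => by
    have : sqDist ρ d φ - R ^ 2 = (2 * (1 - Real.cos φ) - w ^ 2) * (ρ * d) := by
      rw [sub_mul, hwsq, hqsq]; unfold sqDist; ring
    constructor
    · intro h
      have h' : sqDist ρ d φ - R ^ 2 < 0 := sub_neg.2 h
      rw [this] at h'
      nlinarith
    · intro h
      have : sqDist ρ d φ - R ^ 2 < 0 := by rw [this]; nlinarith
      exact sub_neg.1 this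
  -- the arc is `2(1 - cos φ) < w²`, which lies between `|φ| < w` and `|φ| < πw/2`
  have hw1 : w < π := by
    have : w ^ 2 < 1 ^ 2 := by
      by_contra! hcon
      nlinarith [mul_le_mul hρ (show R ≤ d by linarith) hR.le hρ0.le, sq_nonneg (ρ - d)]
    have := lt_of_pow_lt_pow_left₀ 2 zero_le_one this
    linarith [Real.pi_gt_three]
  have hlow : 2 * w ≤ volume.real S := by
    have hsub : Ioo (-w) w ⊆ S := fun φ hφ => by
      refine ⟨⟨by linarith [hφ.1], by linarith [hφ.2]⟩, (hmem φ).2 ?_⟩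
      have h1 := Real.one_sub_sq_div_two_le_cos (x := φ)
      have h2 : φ ^ 2 < w ^ 2 := sq_lt_sq' hφ.1 hφ.2
      linarith
    have := measureReal_mono (μ := volume) hsub
      ((measure_mono inter_subset_left).trans_lt measure_Ioc_lt_top).ne
    rw [Real.volume_real_Ioo_of_le (by linarith)] at this
    linarith
  have hup : volume.real S ≤ π * w := by
    have hsub : S ⊆ Ioo (-(π / 2 * w)) (π / 2 * w) := fun φ hφ => by
      have h1 := (hmem φ).1 hφ.2
      have h2 := Real.cos_le_one_sub_mul_cos_sq (abs_le.2 ⟨hφ.1.1.le, hφ.1.2⟩)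
      have h3 : φ ^ 2 < (π / 2 * w) ^ 2 := by
        have : 4 * φ ^ 2 / π ^ 2 < w ^ 2 := by
          calc 4 * φ ^ 2 / π ^ 2 = 2 * (2 / π ^ 2 * φ ^ 2) := by ring
            _ ≤ 2 * (1 - Real.cos φ) := by linarith
            _ < w ^ 2 := h1
        rw [div_lt_iff₀ (by positivity)] at this
        nlinarith
      exact abs_lt.1 (abs_lt_of_sq_lt_sq h3 (by positivity))
    have := measureReal_mono (μ := volume) hsub measure_Ioo_lt_top.ne
    rw [Real.volume_real_Ioo_of_le (by nlinarith)] at this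
    linarith
  have hr : ρ * w = q * √(ρ / d) := by
    rw [hw, Real.sqrt_div hρ0.le, Real.sqrt_mul hρ0.le]
    have h1 := Real.sqrt_pos.2 hρ0
    have h2 := Real.sqrt_pos.2 hd
    field_simp
    rw [Real.sq_sqrt hρ0.le]; ring
  set s := √(ρ / d)
  have hs1 : 4 / 5 ≤ s := Real.le_sqrt_of_sq_le (by rw [le_div_iff₀ hd]; nlinarith)
  have hs2 : s ≤ 3 / 2 := Real.sqrt_le_iff.2 ⟨by norm_num, by rw [div_le_iff₀ hd]; nlinarith⟩
  constructor
  · calc 1 / 2 * (q / R ^ 2) ≤ 2 / π * s * (q / R ^ 2) := by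
          gcongr
          rw [div_mul_eq_mul_div, le_div_iff₀ hpi]
          linarith [Real.pi_lt_d2]
      _ = ρ / (π * R ^ 2) * (2 * w) := by
          rw [show ρ / (π * R ^ 2) * (2 * w) = 2 * (ρ * w) / (π * R ^ 2) by ring, hr]; field_simp
      _ ≤ _ := by gcongr
  · calc _ ≤ ρ / (π * R ^ 2) * (π * w) := by gcongr
      _ = s * (q / R ^ 2) := by
          rw [show ρ / (π * R ^ 2) * (π * w) = (ρ * w) / R ^ 2 by field_simp, hr]; ring
      _ ≤ _ := by gcongr

/-- Away from the particle the potential on the circle is the real part of `ζ/(ζ-d)`, so its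
mean is the winding number of the circle around the particle. -/
theorem flux_eq_circleIntegral {R : ℝ} (hR : 0 ≤ R) {d ρ : ℝ} (hd : 0 ≤ d) (hρ : 0 < ρ)
    (hne : ρ ≠ d) (h : R ≤ |ρ - d|) :
    flux R ρ d = ((2 * π * Complex.I)⁻¹ * ∮ z in C(0, ρ), (z - d)⁻¹).re := by
  have hpi := Real.pi_pos
  have hper : Function.Periodic (fluxDens R ρ d) (2 * π) := fun x => by
    simp [fluxDens, sqDist]
  have e1 : ∫ φ in (-π)..π, fluxDens R ρ d φ = ∫ φ in (0:ℝ)..(2 * π), fluxDens R ρ d φ := by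
    have := hper.intervalIntegral_add_eq (-π) 0
    rwa [show -π + 2 * π = π by ring, zero_add] at this
  have hpos : ∀ φ, 0 < sqDist ρ d φ := fun φ =>
    lt_of_lt_of_le (by have := sub_ne_zero.2 hne; positivity) (sq_sub_le_sqDist hρ.le hd φ)
  have hmax : ∀ φ, max (sqDist ρ d φ) (R ^ 2) = sqDist ρ d φ := fun φ => by
    refine max_eq_left (le_trans ?_ (sq_sub_le_sqDist hρ.le hd φ))
    rw [← sq_abs (ρ - d)]; gcongr
  have hns : ∀ φ, Complex.normSq (circleMap 0 ρ φ - d) = sqDist ρ d φ := fun φ => by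
    rw [circleMap_zero, Complex.normSq_apply]
    simp [Complex.exp_ofReal_mul_I_re, Complex.exp_ofReal_mul_I_im]
    unfold sqDist
    linear_combination ρ ^ 2 * Real.sin_sq_add_cos_sq φ
  have hre : ∀ φ, fluxDens R ρ d φ = (circleMap 0 ρ φ * (circleMap 0 ρ φ - d)⁻¹).re := fun φ => by
    rw [Complex.mul_re, Complex.inv_re, Complex.inv_im, hns, fluxDens, hmax, circleMap_zero]
    have := (hpos φ).ne'
    simp [Complex.exp_ofReal_mul_I_re, Complex.exp_ofReal_mul_I_im]
    field_simp
    linear_combination - ρ * Real.sin_sq_add_cos_sq φ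
  have hcont : Continuous fun φ => circleMap 0 ρ φ * (circleMap 0 ρ φ - d)⁻¹ := by
    refine (continuous_circleMap 0 ρ).mul (Continuous.inv₀ ?_ fun φ => ?_)
    · exact (continuous_circleMap 0 ρ).sub continuous_const
    · intro h0
      have := hns φ
      rw [h0] at this
      simp at this
      exact (hpos φ).ne this
  have e2 : (∮ z in C(0, ρ), (z - d)⁻¹)
      = Complex.I * ∫ φ in (0:ℝ)..(2 * π), circleMap 0 ρ φ * (circleMap 0 ρ φ - d)⁻¹ := by
    rw [circleIntegral, ← intervalIntegral.integral_const_mul]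
    congr 1; funext φ
    rw [deriv_circleMap, smul_eq_mul]; ring
  have e3 : (∫ φ in (0:ℝ)..(2 * π), circleMap 0 ρ φ * (circleMap 0 ρ φ - d)⁻¹).re
      = ∫ φ in (0:ℝ)..(2 * π), fluxDens R ρ d φ := by
    have := Complex.reCLM.intervalIntegral_comp_comm
      (hcont.intervalIntegrable (μ := volume) 0 (2 * π))
    simp only [Complex.reCLM_apply] at this
    rw [← this]; simp_rw [hre]
  rw [flux, e1, e2, ← e3]
  rw [show (2 * π * Complex.I)⁻¹ * (Complex.I * ∫ φ in (0:ℝ)..(2 * π),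
      circleMap 0 ρ φ * (circleMap 0 ρ φ - d)⁻¹) = (((2 * π)⁻¹ : ℝ) : ℂ) * ∫ φ in (0:ℝ)..(2 * π),
      circleMap 0 ρ φ * (circleMap 0 ρ φ - d)⁻¹ by
    have : (π:ℂ) ≠ 0 := by exact_mod_cast hpi.ne'
    push_cast; field_simp, Complex.re_ofReal_mul]

theorem flux_eq_one {R : ℝ} (hR : 0 ≤ R) {d ρ : ℝ} (hd : 0 ≤ d) (hρ : d < ρ)
    (h : R ≤ ρ - d) : flux R ρ d = 1 := by
  rw [flux_eq_circleIntegral hR hd (hd.trans_lt hρ) hρ.ne' (h.trans (le_abs_self _)),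
    circleIntegral.integral_sub_inv_of_mem_ball]
  · rw [inv_mul_cancel₀ (by simp [Real.pi_ne_zero])]; simp
  · simp [abs_of_nonneg hd, hρ]

theorem flux_eq_zero {R : ℝ} (hR : 0 ≤ R) {d ρ : ℝ} (hρ0 : 0 < ρ) (hρ : ρ < d)
    (h : R ≤ d - ρ) : flux R ρ d = 0 := by
  have hd : 0 ≤ d := hρ0.le.trans hρ.le
  rw [flux_eq_circleIntegral hR hd hρ0 hρ.ne (by rw [abs_sub_comm]; exact h.trans (le_abs_self _)),
    Complex.circleIntegral_eq_zero_of_differentiable_on_off_countable hρ0.le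
      Set.countable_empty]
  · simp
  · refine ContinuousOn.inv₀ (by fun_prop) fun z hz => ?_
    intro h0
    rw [sub_eq_zero] at h0
    subst h0
    simp [abs_of_nonneg hd] at hz
    linarith
  · rintro z ⟨hz, -⟩
    refine DifferentiableAt.inv (by fun_prop) ?_
    intro h0
    rw [sub_eq_zero] at h0
    subst h0
    simp [abs_of_nonneg hd] at hz
    linarith

/-! ### Time spent near the even integers -/

/-- The reals within distance `ε` of an even integer. -/
def nearEven (ε : ℝ) : Set ℝ := {x | ∃ q : ℤ, |x - 2 * (q : ℝ)| ≤ ε}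

theorem isClosed_nearEven (ε : ℝ) : IsClosed (nearEven ε) := by
  have hE : IsClosed (Set.range fun q : ℤ => 2 * (q : ℝ)) :=
    (((Homeomorph.mulLeft₀ (2 : ℝ) two_ne_zero).isClosedEmbedding).comp
      Int.isClosedEmbedding_coe_real).isClosed_range
  have : nearEven ε = {x | Metric.infDist x (Set.range fun q : ℤ => 2 * (q : ℝ)) ≤ ε} := by
    ext x
    constructor
    · rintro ⟨q, hq⟩
      exact (Metric.infDist_le_dist_of_mem (mem_range_self q)).trans (by rwa [Real.dist_eq])
    · intro hx
      obtain ⟨y, ⟨q, rfl⟩, hy⟩ := hE.exists_infDist_eq_dist (Set.range_nonempty _) x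
      refine ⟨q, ?_⟩
      rw [← Real.dist_eq, ← hy]; exact hx
  rw [this]
  exact isClosed_le (Metric.continuous_infDist_pt _) continuous_const

theorem neg_mem_nearEven {ε x : ℝ} : -x ∈ nearEven ε ↔ x ∈ nearEven ε := by
  constructor <;> rintro ⟨q, hq⟩ <;> refine ⟨-q, ?_⟩ <;> rw [← abs_neg] <;> push_cast <;>
    (convert! hq using 2; ring)

/-- A function whose difference quotients lie between `m` and `K * m`, with `m` nondecreasing,
spends a fraction of at most about `ε * K` of its time near even integers, apart from
the first passage: each passage lasts at most `2ε/m` and is preceded by a gap of length at least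
`(2-2ε)/(K m)`. -/
theorem volume_nearEven_le {T m : ℝ → ℝ} {a b K ε : ℝ} (hT : ContinuousOn T (Icc a b))
    (hm0 : 0 < m a) (hm : MonotoneOn m (Icc a b)) (hK : 0 ≤ K) (hε0 : 0 ≤ ε) (hε1 : ε < 1)
    (hlow : ∀ x ∈ Icc a b, ∀ y ∈ Icc a b, x ≤ y → m x * (y - x) ≤ T y - T x)
    (hup : ∀ x ∈ Icc a b, ∀ y ∈ Icc a b, x ≤ y → T y - T x ≤ K * m y * (y - x))
    (hab : a ≤ b) :
    volume (Icc a b ∩ T ⁻¹' nearEven ε) ≤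
      ENNReal.ofReal (2 * ε / m a + ε * K / (1 - ε) * (b - a)) := by
  have hmpos : ∀ x ∈ Icc a b, 0 < m x := fun x hx =>
    hm0.trans_le (hm ⟨le_rfl, hab⟩ hx hx.1)
  have hmono : MonotoneOn T (Icc a b) := fun x hx y hy hxy => by
    have := hlow x hx y hy hxy
    nlinarith [mul_nonneg (hmpos x hx).le (sub_nonneg.2 hxy)]
  set δ := ε * K / (1 - ε) with hδ
  have hδ0 : 0 ≤ δ := div_nonneg (mul_nonneg hε0 hK) (by linarith)
  set q₁ : ℤ := ⌈(T a - ε) / 2⌉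
  have hq1 : T a ≤ 2 * q₁ + ε := by
    have := Int.le_ceil ((T a - ε) / 2); linarith
  have hq2 : 2 * (q₁ : ℝ) - 2 + ε < T a := by
    have := Int.ceil_lt_add_one ((T a - ε) / 2); linarith
  -- induction on the number of even integers passed; the first passage costs `2ε/m(a)`,
  -- every later one is charged to the gap before it
  have key : ∀ n : ℕ, ∀ c ∈ Icc a b, T c ≤ 2 * (q₁ + n) + ε →
      volume (Icc a c ∩ T ⁻¹' nearEven ε) ≤ ENNReal.ofReal (2 * ε / m a + δ * (c - a)) := by
    intro n
    induction n with
    | zero =>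
      intro c hc hTc
      rw [Nat.cast_zero, add_zero] at hTc
      have hsub : ∀ x ∈ Icc a c ∩ T ⁻¹' nearEven ε, |T x - 2 * q₁| ≤ ε := by
        rintro x ⟨hx, q, hq⟩
        have hx' : x ∈ Icc a b := ⟨hx.1, hx.2.trans hc.2⟩
        have h1 := hmono ⟨le_rfl, hab⟩ hx' hx.1
        have h2 := hmono hx' hc hx.2
        have hq' := abs_le.1 hq
        have : q = q₁ := by
          have e1 : (q₁ : ℝ) - 1 < q := by linarith
          have e2 : (q : ℝ) < q₁ + 1 := by linarith
          have e1 : q₁ - 1 < q := by exact_mod_cast e1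
          have e2 : q < q₁ + 1 := by exact_mod_cast e2
          omega
        rwa [this] at hq
      refine (Real.volume_le_diam _).trans ?_
      refine Metric.ediam_le_of_forall_dist_le fun x hx y hy => ?_
      wlog hxy : x ≤ y generalizing x y
      · rw [dist_comm]; exact this y hy x hx (le_of_not_ge hxy)
      have hx' : x ∈ Icc a b := ⟨hx.1.1, hx.1.2.trans hc.2⟩
      have hy' : y ∈ Icc a b := ⟨hy.1.1, hy.1.2.trans hc.2⟩
      have h1 := hlow x hx' y hy' hxy
      have h2 := abs_le.1 (hsub x hx)
      have h3 := abs_le.1 (hsub y hy)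
      have h4 : m a * (y - x) ≤ m x * (y - x) :=
        mul_le_mul_of_nonneg_right (hm ⟨le_rfl, hab⟩ hx' hx'.1) (by linarith)
      rw [dist_comm, Real.dist_eq, abs_of_nonneg (by linarith)]
      have : y - x ≤ 2 * ε / m a := by rw [le_div_iff₀ hm0]; linarith
      have : 0 ≤ δ * (c - a) := mul_nonneg hδ0 (by linarith [hc.1])
      linarith
    | succ n ih =>
      intro c hc hTc
      push_cast at hTc
      set q : ℤ := q₁ + n with hqdef
      have hqc : (q : ℝ) = q₁ + n := by push_cast [hqdef]; rfl
      by_cases hle : T c ≤ 2 * (q₁ + n) + ε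
      · exact ih c hc hle
      push Not at hle
      obtain ⟨c', hc', hTc'⟩ : 2 * ((q₁ : ℝ) + n) + ε ∈ T '' Icc a c :=
        intermediate_value_Icc hc.1 (hT.mono (Icc_subset_Icc_right hc.2))
          ⟨by nlinarith [(Nat.cast_nonneg n : (0 : ℝ) ≤ n)], hle.le⟩
      have hc'b : c' ∈ Icc a b := ⟨hc'.1, hc'.2.trans hc.2⟩
      have hsplit : Icc a c ∩ T ⁻¹' nearEven ε ⊆
          (Icc a c' ∩ T ⁻¹' nearEven ε) ∪ (Icc c' c ∩ {x | |T x - 2 * (q + 1)| ≤ ε}) := by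
        rintro x ⟨hx, p, hp⟩
        rcases le_or_gt x c' with h | h
        · exact Or.inl ⟨⟨hx.1, h⟩, p, hp⟩
        by_cases hTx : T x = T c'
        · exfalso
          have hx' : x ∈ Icc a b := ⟨hx.1, hx.2.trans hc.2⟩
          have := hlow c' hc'b x hx' h.le
          nlinarith [mul_pos (hmpos c' hc'b) (sub_pos.2 h)]
        refine Or.inr ⟨⟨h.le, hx.2⟩, ?_⟩
        have hx' : x ∈ Icc a b := ⟨hx.1, hx.2.trans hc.2⟩
        have h1 := lt_of_le_of_ne (hmono hc'b hx' h.le) (Ne.symm hTx)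
        have h2 := hmono hx' hc hx.2
        have hp' := abs_le.1 hp
        have : p = q + 1 := by
          have e1 : (q : ℝ) < p := by linarith
          have e2 : (p : ℝ) < q + 2 := by linarith
          have e1 : q < p := by exact_mod_cast e1
          have e2 : p < q + 2 := by exact_mod_cast e2
          omega
        rw [this] at hp
        push_cast at hp
        exact hp
      have hB : volume (Icc c' c ∩ {x | |T x - 2 * ((q : ℝ) + 1)| ≤ ε}) ≤
          ENNReal.ofReal (δ * (c - c')) := by
        refine (Real.volume_le_diam _).trans ?_
        refine Metric.ediam_le_of_forall_dist_le fun x hx y hy => ?_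
        wlog hxy : x ≤ y generalizing x y
        · rw [dist_comm]; exact this y hy x hx (le_of_not_ge hxy)
        have hx' : x ∈ Icc a b := ⟨hc'.1.trans hx.1.1, hx.1.2.trans hc.2⟩
        have hy' : y ∈ Icc a b := ⟨hc'.1.trans hy.1.1, hy.1.2.trans hc.2⟩
        have h1 := hlow x hx' y hy' hxy
        have h2 := abs_le.1 (show |T x - 2 * ((q : ℝ) + 1)| ≤ ε from hx.2)
        have h3 := abs_le.1 (show |T y - 2 * ((q : ℝ) + 1)| ≤ ε from hy.2)
        have h4 := hup c' hc'b x hx' hx.1.1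
        rw [dist_comm, Real.dist_eq, abs_of_nonneg (by linarith)]
        have hmx := hmpos x hx'
        have h5 : 2 * (1 - ε) ≤ K * m x * (x - c') := by linarith
        have h6 : m x * (y - x) ≤ 2 * ε := by linarith
        have h7 : m x * ((1 - ε) * (y - x)) ≤ m x * (ε * K * (x - c')) := by nlinarith
        have h8 : (1 - ε) * (y - x) ≤ ε * K * (x - c') := le_of_mul_le_mul_left h7 hmx
        have h9 : y - x ≤ δ * (x - c') := by
          rw [hδ, div_mul_eq_mul_div, le_div_iff₀ (by linarith)]; linarith
        have : δ * (x - c') ≤ δ * (c - c') :=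
          mul_le_mul_of_nonneg_left (by linarith [hx.1.2]) hδ0
        linarith
      calc _ ≤ _ := measure_mono hsplit
        _ ≤ _ := measure_union_le _ _
        _ ≤ ENNReal.ofReal (2 * ε / m a + δ * (c' - a)) + ENNReal.ofReal (δ * (c - c')) :=
          add_le_add (ih c' hc'b hTc'.le) hB
        _ = _ := by
          rw [← ENNReal.ofReal_add]
          · congr 1; ring
          · have := mul_nonneg hδ0 (sub_nonneg.2 hc'.1); positivity
          · exact mul_nonneg hδ0 (sub_nonneg.2 hc'.2)
  obtain ⟨n, hn⟩ := exists_nat_ge (T b)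
  refine key (n + q₁.natAbs) b ⟨hab, le_rfl⟩ ?_
  have h1 : -(q₁ : ℝ) ≤ (q₁.natAbs : ℝ) := by
    rw [Nat.cast_natAbs, Int.cast_abs]; exact neg_le_abs _
  push_cast at hn h1 ⊢
  have : (0 : ℝ) ≤ n := Nat.cast_nonneg n
  linarith

/-- The part of a window on which the increasing contribution `U` to the derivative dominates
the decreasing contribution `D`. -/
theorem volume_nearEven_half {T T' D U : ℝ → ℝ} {s e M₀ H ε : ℝ}
    (hT : ∀ t ∈ Icc s e, HasDerivAt T (T' t) t) (hU : MonotoneOn U (Icc s e))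
    (hD : AntitoneOn D (Icc s e)) (hUc : ContinuousOn U (Icc s e)) (hDc : ContinuousOn D (Icc s e))
    (hD0 : ∀ t ∈ Icc s e, 0 ≤ D t) (hM₀ : 0 ≤ M₀)
    (hlow : ∀ t ∈ Icc s e, 1 / 2 * (D t + U t + 4 / 5 * M₀) ≤ T' t)
    (hup : ∀ t ∈ Icc s e, T' t ≤ 3 / 2 * (D t + U t + M₀))
    (hH : 0 < H) (hbad : ∀ t ∈ Icc s e, T t ∈ nearEven ε → H ≤ D t + U t + M₀)
    (hε0 : 0 ≤ ε) (hε1 : ε < 1) :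
    volume (Icc s e ∩ {t | D t ≤ U t} ∩ T ⁻¹' nearEven ε) ≤
      ENNReal.ofReal (8 * ε / H + 6 * ε / (1 - ε) * (e - s)) := by
  set S := Icc s e ∩ {t | D t ≤ U t} ∩ T ⁻¹' nearEven ε with hS
  have hTc : ContinuousOn T (Icc s e) := fun t ht => (hT t ht).continuousAt.continuousWithinAt
  have hScl : IsClosed S := by
    have h1 : IsClosed (Icc s e ∩ (fun t => U t - D t) ⁻¹' Ici 0) :=
      (hUc.sub hDc).preimage_isClosed_of_isClosed isClosed_Icc isClosed_Ici
    have h2 : IsClosed (Icc s e ∩ T ⁻¹' nearEven ε) :=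
      hTc.preimage_isClosed_of_isClosed isClosed_Icc (isClosed_nearEven ε)
    convert! h1.inter h2 using 1
    ext t; simp [hS]; tauto
  rcases S.eq_empty_or_nonempty with h0 | hne
  · rw [h0]; simp
  have hSb : BddBelow S := ⟨s, fun t ht => ht.1.1.1⟩
  have ha := hScl.csInf_mem hne hSb
  -- from the first bad time on, `U` dominates `D`
  set a := sInf S
  have hae := ha.1.1
  have hsub : S ⊆ Icc a e ∩ T ⁻¹' nearEven ε := fun t ht => ⟨⟨csInf_le hSb ht, ht.1.1.2⟩, ht.2⟩
  have hI : Icc a e ⊆ Icc s e := Icc_subset_Icc_left hae.1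
  have hDU : ∀ t ∈ Icc a e, D t ≤ U t := fun t ht =>
    (hD hae (hI ht) ht.1).trans ((ha.1.2 : D a ≤ U a).trans (hU hae (hI ht) ht.1))
  have hgap : ∀ x ∈ Icc a e, ∀ y ∈ Icc a e, x ≤ y → ∃ c ∈ Icc x y, T y - T x = T' c * (y - x) := by
    intro x hx y hy hxy
    rcases hxy.eq_or_lt with rfl | hlt
    · exact ⟨x, ⟨le_rfl, le_rfl⟩, by simp⟩
    have hxy' : Icc x y ⊆ Icc s e := Icc_subset_Icc (hI hx).1 (hI hy).2
    obtain ⟨c, hc, h⟩ := exists_hasDerivAt_eq_slope T T' hlt (hTc.mono hxy')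
      fun t ht => hT t (hxy' (Ioo_subset_Icc_self ht))
    exact ⟨c, Ioo_subset_Icc_self hc, by rw [h]; field_simp [(sub_pos.2 hlt).ne']⟩
  have hmH : H ≤ 4 * ((U a + 4 / 5 * M₀) / 2) := by
    have := hbad a hae ha.2
    have := hDU a ⟨le_rfl, hae.2⟩
    linarith
  have main := volume_nearEven_le (T := T) (m := fun t => (U t + 4 / 5 * M₀) / 2) (a := a) (b := e)
    (K := 6) (ε := ε) (hTc.mono hI) (by linarith)
    (fun x hx y hy hxy => by
      have := hU (hI hx) (hI hy) hxy
      linarith) (by norm_num) hε0 hε1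
    (fun x hx y hy hxy => by
      obtain ⟨c, hc, h⟩ := hgap x hx y hy hxy
      have hc' : c ∈ Icc a e := ⟨hx.1.trans hc.1, hc.2.trans hy.2⟩
      rw [h]
      refine mul_le_mul_of_nonneg_right ?_ (by linarith)
      have h1 := hlow c (hI hc')
      have h2 := hU (hI hx) (hI hc') hc.1
      have h3 := hD0 c (hI hc')
      linarith)
    (fun x hx y hy hxy => by
      obtain ⟨c, hc, h⟩ := hgap x hx y hy hxy
      have hc' : c ∈ Icc a e := ⟨hx.1.trans hc.1, hc.2.trans hy.2⟩
      rw [h]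
      refine mul_le_mul_of_nonneg_right ?_ (by linarith)
      have h1 := hup c (hI hc')
      have h2 := hU (hI hc') (hI hy) hc.2
      have h3 := hDU c hc'
      linarith) hae.2
  refine (measure_mono hsub).trans (main.trans (ENNReal.ofReal_le_ofReal ?_))
  have h1 : 2 * ε / ((U a + 4 / 5 * M₀) / 2) ≤ 8 * ε / H := by
    rw [div_le_div_iff₀ (by linarith) hH]; nlinarith
  have h2 : ε * 6 / (1 - ε) * (e - a) ≤ 6 * ε / (1 - ε) * (e - s) := by
    rw [mul_comm ε 6]
    refine mul_le_mul_of_nonneg_left (by linarith [hae.1]) (div_nonneg (by linarith) (by linarith))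
  linarith

/-- On a window the derivative is comparable to a decreasing part `D`, an increasing part `U` and a
constant. Where `U` dominates, `volume_nearEven_half` applies; where `D` dominates, it applies
after reversing the direction of the window. -/
theorem volume_nearEven_window {T T' D U : ℝ → ℝ} {s e M₀ H ε : ℝ}
    (hT : ∀ t ∈ Icc s e, HasDerivAt T (T' t) t) (hU : MonotoneOn U (Icc s e))
    (hD : AntitoneOn D (Icc s e)) (hUc : ContinuousOn U (Icc s e)) (hDc : ContinuousOn D (Icc s e))
    (hU0 : ∀ t ∈ Icc s e, 0 ≤ U t) (hD0 : ∀ t ∈ Icc s e, 0 ≤ D t) (hM₀ : 0 ≤ M₀)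
    (hlow : ∀ t ∈ Icc s e, 1 / 2 * (D t + U t + 4 / 5 * M₀) ≤ T' t)
    (hup : ∀ t ∈ Icc s e, T' t ≤ 3 / 2 * (D t + U t + M₀))
    (hH : 0 < H) (hbad : ∀ t ∈ Icc s e, T t ∈ nearEven ε → H ≤ D t + U t + M₀)
    (hε0 : 0 ≤ ε) (hε1 : ε < 1) :
    volume (Icc s e ∩ T ⁻¹' nearEven ε) ≤
      2 * ENNReal.ofReal (8 * ε / H + 6 * ε / (1 - ε) * (e - s)) := by
  have h1 := volume_nearEven_half hT hU hD hUc hDc hD0 hM₀ hlow hup hH hbad hε0 hε1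
  have hneg : MapsTo (fun t : ℝ => -t) (Icc (-e) (-s)) (Icc s e) :=
    fun t ht => ⟨by linarith [ht.2], by linarith [ht.1]⟩
  have h2 := volume_nearEven_half (T := fun t => -T (-t)) (T' := fun t => T' (-t))
    (D := fun t => U (-t)) (U := fun t => D (-t)) (s := -e) (e := -s) (M₀ := M₀) (H := H) (ε := ε)
    (fun t ht => by
      have := ((hT (-t) (hneg ht)).scomp t (hasDerivAt_neg t)).neg
      convert! this using 1
      simp)
    (fun x hx y hy hxy => hD (hneg hy) (hneg hx) (neg_le_neg hxy))
    (fun x hx y hy hxy => hU (hneg hy) (hneg hx) (neg_le_neg hxy))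
    (hDc.comp continuous_neg.continuousOn hneg) (hUc.comp continuous_neg.continuousOn hneg)
    (fun t ht => hU0 _ (hneg ht)) hM₀
    (fun t ht => by have := hlow _ (hneg ht); linarith)
    (fun t ht => by have := hup _ (hneg ht); linarith) hH
    (fun t ht h => by
      have := hbad _ (hneg ht) (neg_mem_nearEven.1 h); linarith) hε0 hε1
  have h3 : volume (Icc s e ∩ {t | U t ≤ D t} ∩ T ⁻¹' nearEven ε) ≤
      ENNReal.ofReal (8 * ε / H + 6 * ε / (1 - ε) * (e - s)) := by
    have e1 : Icc s e ∩ {t | U t ≤ D t} ∩ T ⁻¹' nearEven ε =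
        -(Icc (-e) (-s) ∩ {t | U (-t) ≤ D (-t)} ∩ (fun t => -T (-t)) ⁻¹' nearEven ε) := by
      ext t
      simp only [mem_inter_iff, Set.mem_neg, mem_Icc, mem_preimage, neg_neg, neg_mem_nearEven,
        neg_le_neg_iff, mem_ofPred_eq]
      tauto
    rw [e1, Measure.measure_neg]
    refine h2.trans_eq ?_
    congr 3; ring
  rw [two_mul]
  refine le_trans (measure_mono fun t ht => ?_) ((measure_union_le _ _).trans (add_le_add h1 h3))
  rcases le_total (D t) (U t) with h | h
  · exact Or.inl ⟨⟨ht.1, h⟩, ht.2⟩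
  · exact Or.inr ⟨⟨ht.1, h⟩, ht.2⟩

/-! ### The good part of a window -/

/-- `√(R² - (t-d)²)`, half the length of the chord cut out of the line at distance
`|t - d|` from the centre of a disk of radius `R`. -/
def chord (R d t : ℝ) : ℝ := √(R ^ 2 - (t - d) ^ 2)

theorem chord_nonneg (R d t : ℝ) : 0 ≤ chord R d t := Real.sqrt_nonneg _

theorem continuous_chord (R d : ℝ) : Continuous (chord R d) := by unfold chord; fun_prop

theorem chord_le_chord {R d x y : ℝ} (h : (y - d) ^ 2 ≤ (x - d) ^ 2) : chord R d x ≤ chord R d y :=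
  Real.sqrt_le_sqrt (by linarith)

/-- The flux is close to `0` or `1` unless the circle cuts a long chord of the particle. -/
theorem exists_flux_near {R d ρ : ℝ} (hR : 0 < R) (hd : 0 ≤ d) (hρ : 3 * R ≤ ρ) :
    ∃ b : ℕ, b ≤ 1 ∧ |flux R ρ d - b| ≤ 3 / 2 * (chord R d ρ / R) := by
  have hmvt : ∀ x y : ℝ, 2 * R ≤ x → x < y → ∃ c ∈ Ioo x y,
      0 ≤ flux R y d - flux R x d ∧
      flux R y d - flux R x d ≤ 3 / 2 * (chord R d c / R ^ 2) * (y - x) := by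
    intro x y hx hxy
    have hder : ∀ t, x ≤ t → HasDerivAt (fun ρ => flux R ρ d) (deriv (fun ρ => flux R ρ d) t) t :=
      fun t ht => by
        obtain ⟨f', hf', -⟩ := hasDerivAt_flux_bounds hR hd (hx.trans ht)
        exact hf'.differentiableAt.hasDerivAt
    obtain ⟨c, hc, h⟩ := exists_hasDerivAt_eq_slope (fun ρ => flux R ρ d) _ hxy
      (fun t ht => (hder t ht.1).continuousAt.continuousWithinAt) fun t ht => hder t ht.1.le
    obtain ⟨f', hf', h1, h2⟩ := hasDerivAt_flux_bounds hR hd (hx.trans hc.1.le)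
    rw [hf'.deriv, eq_div_iff (sub_pos.2 hxy).ne'] at h
    refine ⟨c, hc, ?_, ?_⟩
    · rw [← h]
      exact mul_nonneg (le_trans (by positivity) h1) (by linarith)
    · rw [← h]
      exact mul_le_mul_of_nonneg_right h2 (by linarith)
  have hfin : ∀ x : ℝ, 0 ≤ x → x ≤ R → ∀ c, (ρ - d) ^ 2 ≤ (c - d) ^ 2 →
      3 / 2 * (chord R d c / R ^ 2) * x ≤ 3 / 2 * (chord R d ρ / R) := by
    intro x hx hxR c hc
    have h1 := chord_le_chord (R := R) hc
    calc 3 / 2 * (chord R d c / R ^ 2) * x ≤ 3 / 2 * (chord R d ρ / R ^ 2) * R := by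
          have := chord_nonneg R d ρ; gcongr
      _ = _ := by field_simp
  have hnn : 0 ≤ 3 / 2 * (chord R d ρ / R) := by have := chord_nonneg R d ρ; positivity
  rcases le_or_gt d ρ with h | h
  · refine ⟨1, le_rfl, ?_⟩
    rcases le_or_gt (d + R) ρ with h' | h'
    · rw [flux_eq_one hR.le hd (by linarith) (by linarith)]; simpa using hnn
    obtain ⟨c, hc, h1, h2⟩ := hmvt ρ (d + R) (by linarith) h'
    rw [flux_eq_one hR.le hd (by linarith : d < d + R) (by linarith)] at h1 h2
    rw [Nat.cast_one, abs_sub_comm, abs_of_nonneg h1]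
    exact h2.trans (hfin _ (by linarith) (by linarith) c (by nlinarith [hc.1]))
  · refine ⟨0, zero_le_one, ?_⟩
    rcases le_or_gt ρ (d - R) with h' | h'
    · rw [flux_eq_zero hR.le (by linarith) h (by linarith)]; simpa using hnn
    obtain ⟨c, hc, h1, h2⟩ := hmvt (d - R) ρ (by linarith) h'
    rw [flux_eq_zero hR.le (by linarith : 0 < d - R) (by linarith) (by linarith)] at h1 h2
    rw [Nat.cast_zero, ← abs_neg, abs_neg, abs_of_nonneg (by linarith)]
    rw [sub_zero] at h1 h2 ⊢
    exact h2.trans (hfin _ (by linarith) (by linarith) c (by nlinarith [hc.2]))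

/-- In any window of length `R/2` the total flux stays away from the even integers at least half
of the time. -/
theorem volume_bad_window {ι : Type*} (S : Finset ι) (d : ι → ℝ) (hd : ∀ l, 0 ≤ d l) {R : ℝ}
    (hR : 0 < R) {A a : ℝ} (ha : 0 ≤ a) (hA0 : 0 < A) (hA1 : A ≤ 1)
    (hA : ∀ p : ℕ, p ≤ S.card → ∀ q : ℤ, A ≤ |(2 * (p : ℝ) + 1) * a - 2 * (q : ℝ)|)
    {s : ℝ} (hs : 3 * R ≤ s) :
    volume (Icc s (s + R / 2) ∩
      (fun ρ => a * (1 + 2 * ∑ l ∈ S, flux R ρ (d l))) ⁻¹' nearEven (A / 1000)) ≤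
      ENNReal.ofReal (R / 4) := by
  classical
  -- the chords of particles centred below the window shrink, those centred above it grow,
  -- and those centred inside it stay between `4R/5` and `R`
  set D : ℝ → ℝ := fun t => 2 * a / R ^ 2 * ∑ l ∈ S with d l ≤ s, chord R (d l) t with hD
  set U : ℝ → ℝ := fun t => 2 * a / R ^ 2 * ∑ l ∈ S with ¬ d l ≤ s ∧ s + R / 2 ≤ d l,
    chord R (d l) t with hU
  set P := S.filter fun l => ¬ d l ≤ s ∧ ¬ s + R / 2 ≤ d l with hP
  set M₀ : ℝ := 2 * a / R ^ 2 * (P.card * R) with hM₀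
  have hc : 0 ≤ 2 * a / R ^ 2 := by positivity
  have hsum : ∀ t, 2 * a / R ^ 2 * ∑ l ∈ S, chord R (d l) t =
      D t + U t + 2 * a / R ^ 2 * ∑ l ∈ P, chord R (d l) t := by
    intro t
    rw [hD, hU, hP, ← mul_add, ← mul_add]
    congr 1
    rw [← Finset.sum_filter_add_sum_filter_not S (fun l => d l ≤ s), add_assoc]
    congr 1
    rw [← Finset.sum_filter_add_sum_filter_not (S.filter fun l => ¬ d l ≤ s)
      (fun l => s + R / 2 ≤ d l), Finset.filter_filter, Finset.filter_filter]
  have hM : ∀ t ∈ Icc s (s + R / 2), 4 / 5 * M₀ ≤ 2 * a / R ^ 2 * ∑ l ∈ P, chord R (d l) t ∧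
      2 * a / R ^ 2 * ∑ l ∈ P, chord R (d l) t ≤ M₀ := by
    intro t ht
    have h1 : ∀ l ∈ P, 4 / 5 * R ≤ chord R (d l) t ∧ chord R (d l) t ≤ R := by
      intro l hl
      have hl' := (Finset.mem_filter.1 hl).2
      rw [not_le, not_le] at hl'
      have h2 : (t - d l) ^ 2 ≤ (R / 2) ^ 2 :=
        sq_le_sq' (by linarith [ht.1]) (by linarith [ht.2])
      exact ⟨Real.le_sqrt_of_sq_le (by nlinarith),
        Real.sqrt_le_iff.2 ⟨hR.le, by nlinarith [sq_nonneg (t - d l)]⟩⟩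
    constructor
    · have := Finset.card_nsmul_le_sum P _ _ fun l hl => (h1 l hl).1
      rw [nsmul_eq_mul] at this
      calc 4 / 5 * M₀ = 2 * a / R ^ 2 * (P.card * (4 / 5 * R)) := by rw [hM₀]; ring
        _ ≤ _ := by gcongr
    · have := Finset.sum_le_card_nsmul P _ _ fun l hl => (h1 l hl).2
      rw [nsmul_eq_mul] at this
      exact mul_le_mul_of_nonneg_left this hc
  set T : ℝ → ℝ := fun ρ => a * (1 + 2 * ∑ l ∈ S, flux R ρ (d l)) with hT
  set f' : ι → ℝ → ℝ := fun l t => deriv (fun ρ => flux R ρ (d l)) t with hf'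
  have hder : ∀ l, ∀ t ∈ Icc s (s + R / 2), HasDerivAt (fun ρ => flux R ρ (d l)) (f' l t) t ∧
      1 / 2 * (chord R (d l) t / R ^ 2) ≤ f' l t ∧ f' l t ≤ 3 / 2 * (chord R (d l) t / R ^ 2) := by
    intro l t ht
    obtain ⟨g, hg, h1, h2⟩ := hasDerivAt_flux_bounds hR (hd l)
      (show 2 * R ≤ t by linarith [ht.1])
    have e : f' l t = g := hg.deriv
    rw [e]
    exact ⟨hg, h1, h2⟩
  have hTd : ∀ t ∈ Icc s (s + R / 2), HasDerivAt T (a * (2 * ∑ l ∈ S, f' l t)) t := by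
    intro t ht
    have := ((HasDerivAt.fun_sum fun l (_ : l ∈ S) => (hder l t ht).1).const_mul 2).const_add 1
    exact this.const_mul a
  have hnonneg : ∀ Q : Finset ι, ∀ t, 0 ≤ 2 * a / R ^ 2 * ∑ l ∈ Q, chord R (d l) t := fun Q t =>
    mul_nonneg hc (Finset.sum_nonneg fun l _ => chord_nonneg _ _ _)
  have hcont : ∀ Q : Finset ι, Continuous fun t => 2 * a / R ^ 2 * ∑ l ∈ Q, chord R (d l) t :=
    fun Q => continuous_const.mul (continuous_finsetSum _ fun l _ => continuous_chord _ _)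
  -- near an even integer the chords have at least this total weighted length
  have hH : 0 < 2 / 3 * (999 / 1000) * A / R := by positivity
  refine (volume_nearEven_window (T := T) (D := D) (U := U) (M₀ := M₀) hTd ?_ ?_
    (hcont _).continuousOn (hcont _).continuousOn (fun t _ => hnonneg _ t) (fun t _ => hnonneg _ t)
    (by positivity) ?_ ?_ hH ?_ (by positivity) (by linarith)).trans ?_
  · intro x hx y hy hxy
    refine mul_le_mul_of_nonneg_left (Finset.sum_le_sum fun l hl => chord_le_chord ?_) hc
    have := (Finset.mem_filter.1 hl).2.2
    nlinarith [hx.2, hy.2]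
  · intro x hx y hy hxy
    refine mul_le_mul_of_nonneg_left (Finset.sum_le_sum fun l hl => chord_le_chord ?_) hc
    have := (Finset.mem_filter.1 hl).2
    nlinarith [hx.1, hy.1]
  · intro t ht
    calc 1 / 2 * (D t + U t + 4 / 5 * M₀) ≤ 1 / 2 * (2 * a / R ^ 2 * ∑ l ∈ S, chord R (d l) t) := by
          rw [hsum]; linarith [(hM t ht).1]
      _ = a * (2 * ∑ l ∈ S, 1 / 2 * (chord R (d l) t / R ^ 2)) := by
          rw [← Finset.mul_sum, ← Finset.sum_div]; ring
      _ ≤ _ := by gcongr with l hl; exact (hder l t ht).2.1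
  · intro t ht
    calc a * (2 * ∑ l ∈ S, f' l t) ≤ a * (2 * ∑ l ∈ S, 3 / 2 * (chord R (d l) t / R ^ 2)) := by
          gcongr with l hl; exact (hder l t ht).2.2
      _ = 3 / 2 * (2 * a / R ^ 2 * ∑ l ∈ S, chord R (d l) t) := by
          rw [← Finset.mul_sum, ← Finset.sum_div]; ring
      _ ≤ _ := by rw [hsum]; linarith [(hM t ht).2]
  · rintro t ht ⟨q, hq⟩
    have hex := fun l => exists_flux_near hR (hd l) (hs.trans ht.1)
    choose b hb1 hb2 using hex
    have hp : ∑ l ∈ S, b l ≤ S.card := by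
      simpa using Finset.sum_le_card_nsmul S b 1 fun l _ => hb1 l
    have h1 := hA _ hp q
    have h2 : |(2 * ((∑ l ∈ S, b l : ℕ) : ℝ) + 1) * a - T t| ≤
        3 / 2 * R * (2 * a / R ^ 2 * ∑ l ∈ S, chord R (d l) t) := by
      calc _ = |2 * a * ∑ l ∈ S, (flux R t (d l) - b l)| := by
            rw [hT, Finset.sum_sub_distrib, ← abs_neg]; push_cast; congr 1; ring
        _ ≤ 2 * a * ∑ l ∈ S, 3 / 2 * (chord R (d l) t / R) := by
            rw [abs_mul, abs_of_nonneg (by positivity : 0 ≤ 2 * a)]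
            gcongr
            exact (Finset.abs_sum_le_sum_abs _ _).trans (Finset.sum_le_sum fun l _ => hb2 l)
        _ = _ := by rw [← Finset.mul_sum, ← Finset.sum_div]; field_simp
    have h3 : A ≤ 3 / 2 * R * (2 * a / R ^ 2 * ∑ l ∈ S, chord R (d l) t) + A / 1000 :=
      calc A ≤ _ := h1
        _ ≤ _ := abs_sub_le _ (T t) _
        _ ≤ _ := add_le_add h2 hq
    have h4 : 2 / 3 * (999 / 1000) * A / R ≤ 2 * a / R ^ 2 * ∑ l ∈ S, chord R (d l) t := by
      rw [div_le_iff₀ hR]; linarith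
    rw [hsum] at h4
    linarith [(hM t ht).2]
  · rw [show (2 : ENNReal) = ENNReal.ofReal 2 by simp, ← ENNReal.ofReal_mul two_pos.le]
    refine ENNReal.ofReal_le_ofReal ?_
    have e1 : 8 * (A / 1000) / (2 / 3 * (999 / 1000) * A / R) = 12 / 999 * R := by
      field_simp; norm_num
    have e2 : 6 * (A / 1000) / (1 - A / 1000) * (s + R / 2 - s) ≤ 6 / 999 * (R / 2) := by
      rw [add_sub_cancel_left]
      refine mul_le_mul_of_nonneg_right ?_ (by positivity)
      rw [div_le_div_iff₀ (by linarith) (by norm_num)]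
      linarith
    rw [e1]; linarith

/-! ### Transport of mass in the radial direction -/

/-- The fundamental theorem of calculus for `‖u‖`, with `w` in the role of the a.e. derivative;
zeros of `u` are handled through the regularization `√(‖u‖² + η²)`. -/
theorem abs_norm_sub_norm_le_integral {u u' : ℝ → ℂ} (hu : ∀ x, HasDerivAt u (u' x) x)
    (hu' : Continuous u') {w : ℝ → ℝ}
    (hw : ∀ x, u x ≠ 0 → w x = (starRingEnd ℂ (u x) * u' x).re / ‖u x‖)
    (hwi : ∀ x y, IntervalIntegrable (fun t => |w t|) volume x y) {x y : ℝ} (hxy : x ≤ y) :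
    |‖u y‖ - ‖u x‖| ≤ ∫ t in x..y, |w t| := by
  have huc : Continuous u := continuous_iff_continuousAt.2 fun t => (hu t).continuousAt
  have hreg : ∀ η : ℝ, 0 < η →
      |√(‖u y‖ ^ 2 + η ^ 2) - √(‖u x‖ ^ 2 + η ^ 2)| ≤ ∫ t in x..y, |w t| := by
    intro η hη
    have hpos : ∀ t, 0 < ‖u t‖ ^ 2 + η ^ 2 := fun t => by positivity
    set g' : ℝ → ℝ := fun t => (starRingEnd ℂ (u t) * u' t).re / √(‖u t‖ ^ 2 + η ^ 2) with hg'
    have hder : ∀ t, HasDerivAt (fun t => √(‖u t‖ ^ 2 + η ^ 2)) (g' t) t := by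
      intro t
      have h1 := ((hu t).norm_sq.add_const (η ^ 2)).sqrt (hpos t).ne'
      convert! h1 using 1
      rw [hg', Complex.inner]
      have : √(‖u t‖ ^ 2 + η ^ 2) ≠ 0 := (Real.sqrt_pos.2 (hpos t)).ne'
      field_simp
    have hg'c : Continuous g' := by
      refine Continuous.div ?_ ?_ fun t => (Real.sqrt_pos.2 (hpos t)).ne'
      · exact Complex.continuous_re.comp ((Complex.continuous_conj.comp huc).mul hu')
      · fun_prop
    rw [← intervalIntegral.integral_eq_sub_of_hasDerivAt (fun t _ => hder t)
      (hg'c.intervalIntegrable _ _)]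
    refine (intervalIntegral.abs_integral_le_integral_abs hxy).trans ?_
    refine intervalIntegral.integral_mono_on hxy (hg'c.abs.intervalIntegrable _ _) (hwi x y)
      fun t _ => ?_
    by_cases h0 : u t = 0
    · simp [hg', h0]
    · rw [hw t h0, hg', abs_div, abs_div, abs_of_nonneg (Real.sqrt_nonneg _),
        abs_of_nonneg (norm_nonneg _)]
      have := norm_pos_iff.2 h0
      gcongr
      exact Real.le_sqrt_of_sq_le (by nlinarith)
  have hlim : Filter.Tendsto
      (fun η : ℝ => |√(‖u y‖ ^ 2 + η ^ 2) - √(‖u x‖ ^ 2 + η ^ 2)|) (nhdsWithin 0 (Ioi 0))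
      (nhds |‖u y‖ - ‖u x‖|) := by
    have : Continuous fun η : ℝ => |√(‖u y‖ ^ 2 + η ^ 2) - √(‖u x‖ ^ 2 + η ^ 2)| := by fun_prop
    have := (this.tendsto 0).mono_left (nhdsWithin_le_nhds (s := Ioi 0))
    simpa [Real.sqrt_sq (norm_nonneg _)] using this
  exact le_of_tendsto hlim (Filter.eventually_of_mem self_mem_nhdsWithin fun η hη => hreg η hη)

/-- On a window of length `L` far from the origin, the weighted mass of `‖u‖²` is controlled by
its mass on any subset filling half of the window and by the radial energy. -/
theorem window_ineq {u u' : ℝ → ℂ} (hu : ∀ x, HasDerivAt u (u' x) x)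
    (hu' : Continuous u') {w : ℝ → ℝ} (hwm : Measurable w) (hwb : ∀ x, |w x| ≤ ‖u' x‖)
    (hw : ∀ x, u x ≠ 0 → w x = (starRingEnd ℂ (u x) * u' x).re / ‖u x‖)
    {s L C E κ : ℝ} (hL : 0 < L) (hs : 6 * L ≤ s) (hC : 0 ≤ C)
    (hCE : 14 / 3 * C ≤ E) (hCκ : C ≤ 9 * κ)
    {J : Set ℝ} (hJm : MeasurableSet J) (hJ : J ⊆ Icc s (s + L))
    (hJv : ENNReal.ofReal (L / 2) ≤ volume J) :
    ∫⁻ t in Icc s (s + L), ENNReal.ofReal (C * (‖u t‖ ^ 2 / t)) ≤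
      (∫⁻ t in J, ENNReal.ofReal (E * (‖u t‖ ^ 2 / t))) +
        ∫⁻ t in Icc s (s + L), ENNReal.ofReal (κ * (t * w t ^ 2)) := by
  have huc : Continuous u := continuous_iff_continuousAt.2 fun t => (hu t).continuousAt
  have hs0 : 0 < s := by linarith
  have hE : 0 ≤ E := by linarith
  have hκ : 0 ≤ κ := by linarith
  set I := Icc s (s + L) with hI
  have hIfin : volume I ≠ ⊤ := measure_Icc_lt_top.ne
  have hJfin : volume J ≠ ⊤ := ((measure_mono hJ).trans_lt measure_Icc_lt_top).ne
  have hcI : ∀ c : ℝ, Integrable (fun _ : ℝ => c) (volume.restrict I) := fun c =>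
    integrableOn_const hIfin
  have hcJ : ∀ c : ℝ, Integrable (fun _ : ℝ => c) (volume.restrict J) := fun c =>
    integrableOn_const hJfin
  have hIr : volume.real I = L := by rw [hI, Real.volume_real_Icc_of_le (by linarith)]; ring
  have hJr : L / 2 ≤ volume.real J := by
    rw [measureReal_def]; exact (ENNReal.ofReal_le_iff_le_toReal hJfin).1 hJv
  have hJr' : volume.real J ≤ L := by rw [← hIr]; exact measureReal_mono hJ hIfin
  -- integrability of all functions occurring below
  have hInt : ∀ f : ℝ → ℝ, Measurable f → ∀ g : ℝ → ℝ, Continuous g → (∀ t, |f t| ≤ g t) →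
      ∀ a b, IntegrableOn f (Icc a b) := fun f hf g hg hfg a b =>
    Integrable.mono' (hg.continuousOn.integrableOn_Icc) hf.aestronglyMeasurable
      (Filter.Eventually.of_forall hfg)
  have hw2 : ∀ a b, IntegrableOn (fun t => w t ^ 2) (Icc a b) := hInt _ (hwm.pow_const 2)
    (fun t => ‖u' t‖ ^ 2) (by fun_prop) fun t => by
      rw [abs_of_nonneg (sq_nonneg _), ← sq_abs]
      exact pow_le_pow_left₀ (abs_nonneg _) (hwb t) 2
  have hw1 : ∀ a b, IntegrableOn (fun t => |w t|) (Icc a b) := hInt _ hwm.abs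
    (fun t => ‖u' t‖) (by fun_prop) fun t => by simpa using hwb t
  have hwi : ∀ x y, IntervalIntegrable (fun t => |w t|) volume x y := fun x y => by
    rw [intervalIntegrable_iff]
    exact (hw1 (min x y) (max x y)).mono_set uIoc_subset_uIcc
  set K := ∫ t in I, w t ^ 2 with hK
  have hK0 : 0 ≤ K := integral_nonneg fun t => sq_nonneg _
  -- Cauchy–Schwarz on the window
  have hCS : (∫ t in I, |w t|) ^ 2 ≤ L * K := by
    set m := ∫ t in I, |w t| with hm
    have h0 : 0 ≤ ∫ t in I, (L * |w t| - m) ^ 2 := integral_nonneg fun t => sq_nonneg _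
    have h1 : ∫ t in I, (L * |w t| - m) ^ 2 = L ^ 2 * K - 2 * L * m * m + m ^ 2 * L := by
      have e : ∀ t, (L * |w t| - m) ^ 2 = (L ^ 2 * w t ^ 2 - 2 * L * m * |w t|) + m ^ 2 := by
        intro t; rw [← sq_abs (w t)]; ring
      simp_rw [e]
      have i1 : Integrable (fun t => L ^ 2 * w t ^ 2 - 2 * L * m * |w t|) (volume.restrict I) :=
        ((hw2 _ _).const_mul _).sub ((hw1 _ _).const_mul _)
      rw [integral_add i1 (hcI _), integral_sub ((hw2 _ _).const_mul _) ((hw1 _ _).const_mul _),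
        integral_const_mul, integral_const_mul, setIntegral_const, hIr, ← hm, ← hK, smul_eq_mul]
      ring
    rw [h1] at h0
    have : 0 ≤ L * (L * K - m ^ 2) := by linarith
    have := nonneg_of_mul_nonneg_right this hL
    linarith
  have hosc : ∀ x ∈ I, ∀ y ∈ I, |‖u x‖ - ‖u y‖| ≤ ∫ t in I, |w t| := by
    intro x hx y hy
    wlog hxy : y ≤ x generalizing x y
    · rw [abs_sub_comm]; exact this y hy x hx (le_of_not_ge hxy)
    refine (abs_norm_sub_norm_le_integral hu hu' hw hwi hxy).trans ?_
    rw [intervalIntegral.integral_of_le hxy]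
    exact setIntegral_mono_set (hw1 _ _) (Filter.Eventually.of_forall fun t => abs_nonneg _)
      (Filter.Eventually.of_forall (Ioc_subset_Icc_self.trans (Icc_subset_Icc hy.1 hx.2)))
  have hpt : ∀ x ∈ I, ∀ y ∈ I, ‖u x‖ ^ 2 ≤ 2 * ‖u y‖ ^ 2 + 2 * (L * K) := by
    intro x hx y hy
    have h1 := hosc x hx y hy
    have h2 : (‖u x‖ - ‖u y‖) ^ 2 ≤ (∫ t in I, |w t|) ^ 2 := by
      rw [← sq_abs]; exact pow_le_pow_left₀ (abs_nonneg _) h1 2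
    nlinarith [sq_nonneg (‖u x‖ - 2 * ‖u y‖)]
  have hIpos : ∀ t ∈ I, 0 < t := fun t ht => hs0.trans_le ht.1
  have hv : IntegrableOn (fun t => ‖u t‖ ^ 2 / t) I :=
    ContinuousOn.integrableOn_Icc (ContinuousOn.div (by fun_prop) continuousOn_id
      fun t ht => (hIpos t ht).ne')
  have hv2 : IntegrableOn (fun t => ‖u t‖ ^ 2) I :=
    ContinuousOn.integrableOn_Icc (by fun_prop)
  have hwt : IntegrableOn (fun t => t * w t ^ 2) I := hInt (fun t => t * w t ^ 2) (measurable_id.mul (hwm.pow_const 2))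
    (fun t => |t| * ‖u' t‖ ^ 2) (by fun_prop) (fun t => by
      rw [abs_mul, abs_of_nonneg (sq_nonneg (w t)), ← sq_abs (w t)]
      have := hwb t
      gcongr) _ _
  set B := ∫ t in I, ‖u t‖ ^ 2 / t with hB
  have hBy : ∀ y ∈ I, B ≤ L / s * (2 * ‖u y‖ ^ 2 + 2 * (L * K)) := by
    intro y hy
    calc B ≤ ∫ t in I, (2 * ‖u y‖ ^ 2 + 2 * (L * K)) / s := by
          refine setIntegral_mono_on hv (hcI _) measurableSet_Icc
            fun t ht => ?_
          exact div_le_div₀ (by positivity) (hpt t ht y hy) hs0 ht.1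
      _ = _ := by rw [setIntegral_const, hIr, smul_eq_mul]; ring
  have hBJ : volume.real J * B ≤ L / s * (2 * (∫ t in J, ‖u t‖ ^ 2) +
      2 * (L * K) * volume.real J) := by
    calc volume.real J * B = ∫ t in J, B := by rw [setIntegral_const, smul_eq_mul]
      _ ≤ ∫ y in J, L / s * (2 * ‖u y‖ ^ 2 + 2 * (L * K)) := by
          refine setIntegral_mono_on (hcJ _) ?_ hJm fun y hy => hBy y (hJ hy)
          exact (((hv2.mono_set hJ).const_mul 2).add (hcJ _)).const_mul _
      _ = _ := by
          rw [integral_const_mul, integral_add ((hv2.mono_set hJ).const_mul 2)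
            (hcJ _), integral_const_mul, setIntegral_const, smul_eq_mul]
          ring
  have hJv2 : (∫ t in J, ‖u t‖ ^ 2) ≤ 7 / 6 * s * ∫ t in J, ‖u t‖ ^ 2 / t := by
    rw [← integral_const_mul]
    refine setIntegral_mono_on (hv2.mono_set hJ) ((hv.mono_set hJ).const_mul _) hJm fun t ht => ?_
    have h1 := hIpos t (hJ ht)
    have h2 := (hJ ht).2
    rw [mul_div_assoc', le_div_iff₀ h1, mul_comm]
    gcongr
    linarith
  have hKw : s * K ≤ ∫ t in I, t * w t ^ 2 := by
    rw [hK, ← integral_const_mul]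
    refine setIntegral_mono_on ((hw2 _ _).const_mul _) hwt measurableSet_Icc fun t ht => ?_
    have := ht.1
    gcongr
  set PJ := ∫ t in J, ‖u t‖ ^ 2 / t with hPJ
  have hPJ0 : 0 ≤ PJ := setIntegral_nonneg hJm fun t ht =>
    div_nonneg (sq_nonneg _) (hIpos t (hJ ht)).le
  set PW := ∫ t in I, t * w t ^ 2 with hPW
  have hreal : C * B ≤ E * PJ + κ * PW := by
    have hB0 : 0 ≤ B := setIntegral_nonneg measurableSet_Icc fun t ht =>
      div_nonneg (sq_nonneg _) (hIpos t ht).le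
    have h1 : L / 2 * B ≤ L / s * (2 * (7 / 6 * s * PJ) + 2 * (L * K) * L) :=
      calc L / 2 * B ≤ volume.real J * B := by gcongr
        _ ≤ _ := hBJ
        _ ≤ _ := by gcongr
    have h2 : L * (s * B) ≤ L * (14 / 3 * (s * PJ) + 4 * (L ^ 2 * K)) := by
      have h3 : L / s * (2 * (7 / 6 * s * PJ) + 2 * (L * K) * L) * s =
        L * (2 * (7 / 6 * s * PJ) + 2 * (L * K) * L) := by field_simp
      have := mul_le_mul_of_nonneg_right h1 hs0.le
      rw [h3] at this
      linarith
    have h4 : s * B ≤ 14 / 3 * (s * PJ) + 4 * (L ^ 2 * K) := le_of_mul_le_mul_left h2 hL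
    -- here `6L ≤ s`, which makes the radial energy win
    have h5 : 36 * L ^ 2 ≤ s ^ 2 := by nlinarith
    have h6 : 36 * (L ^ 2 * K) ≤ s * PW := by nlinarith
    have h7 : s * (C * B) ≤ s * (E * PJ + κ * PW) := by
      have e1 : C * (s * B) ≤ C * (14 / 3 * (s * PJ) + 4 * (L ^ 2 * K)) :=
        mul_le_mul_of_nonneg_left h4 hC
      have e2 : 14 / 3 * C * (s * PJ) ≤ E * (s * PJ) :=
        mul_le_mul_of_nonneg_right hCE (by positivity)
      have e3 : C * (4 * (L ^ 2 * K)) ≤ 9 * κ * (4 * (L ^ 2 * K)) :=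
        mul_le_mul_of_nonneg_right hCκ (by positivity)
      have e4 : κ * (36 * (L ^ 2 * K)) ≤ κ * (s * PW) := mul_le_mul_of_nonneg_left h6 hκ
      linarith
    exact le_of_mul_le_mul_left h7 hs0
  rw [← ofReal_integral_eq_lintegral_ofReal (hv.const_mul C), ← ofReal_integral_eq_lintegral_ofReal
    ((hv.mono_set hJ).const_mul E), ← ofReal_integral_eq_lintegral_ofReal (hwt.const_mul κ),
    ← ENNReal.ofReal_add]
  · rw [integral_const_mul, integral_const_mul, integral_const_mul]
    exact ENNReal.ofReal_le_ofReal hreal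
  · rw [integral_const_mul]; exact mul_nonneg hE hPJ0
  · rw [integral_const_mul]
    exact mul_nonneg hκ (setIntegral_nonneg measurableSet_Icc fun t ht =>
      mul_nonneg (hIpos t ht).le (sq_nonneg _))
  · refine (ae_restrict_iff' measurableSet_Icc).2 (Filter.Eventually.of_forall fun t ht => ?_)
    exact mul_nonneg hκ (mul_nonneg (hIpos t ht).le (sq_nonneg _))
  · refine (ae_restrict_iff' hJm).2 (Filter.Eventually.of_forall fun t ht => ?_)
    exact mul_nonneg hE (div_nonneg (sq_nonneg _) (hIpos t (hJ ht)).le)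
  · refine (ae_restrict_iff' measurableSet_Icc).2 (Filter.Eventually.of_forall fun t ht => ?_)
    exact mul_nonneg hC (div_nonneg (sq_nonneg _) (hIpos t ht).le)

/-! ### Pair configurations and polar coordinates -/

/-- The unit vector `(cos φ, sin φ)`. -/
def dirVec (φ : ℝ) : Plane := !₂[Real.cos φ, Real.sin φ]

@[simp] theorem dirVec_zero (φ : ℝ) : dirVec φ 0 = Real.cos φ := rfl
@[simp] theorem dirVec_one (φ : ℝ) : dirVec φ 1 = Real.sin φ := rfl
@[simp] theorem perp_zero (v : Plane) : perp v 0 = -v 1 := rfl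
@[simp] theorem perp_one (v : Plane) : perp v 1 = v 0 := rfl

theorem plane_ext {v w : Plane} (h0 : v 0 = w 0) (h1 : v 1 = w 1) : v = w := by
  ext i; fin_cases i <;> assumption

theorem plane_norm_sq (v : Plane) : ‖v‖ ^ 2 = v 0 ^ 2 + v 1 ^ 2 := by
  rw [EuclideanSpace.norm_sq_eq, Fin.sum_univ_two]; simp

theorem norm_dirVec (φ : ℝ) : ‖dirVec φ‖ = 1 := by
  have : ‖dirVec φ‖ ^ 2 = 1 ^ 2 := by rw [plane_norm_sq]; simp
  exact (sq_eq_sq₀ (norm_nonneg _) zero_le_one).1 this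

theorem exists_polar (v : Plane) : ∃ ψ : ℝ, v = ‖v‖ • dirVec ψ := by
  refine ⟨Complex.arg ⟨v 0, v 1⟩, ?_⟩
  have hn : ‖(⟨v 0, v 1⟩ : ℂ)‖ = ‖v‖ := by
    rw [← sq_eq_sq₀ (norm_nonneg _) (norm_nonneg _), plane_norm_sq, Complex.sq_norm,
      Complex.normSq_mk]; ring
  apply plane_ext
  · have := Complex.norm_mul_cos_arg ⟨v 0, v 1⟩
    rw [hn] at this; simpa using this.symm
  · have := Complex.norm_mul_sin_arg ⟨v 0, v 1⟩
    rw [hn] at this; simpa using this.symm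

theorem hasDerivAt_dirVec (φ : ℝ) : HasDerivAt dirVec (perp (dirVec φ)) φ := by
  have h := ((Real.hasDerivAt_cos φ).smul_const (EuclideanSpace.single (0 : Fin 2) (1 : ℝ))).add
    ((Real.hasDerivAt_sin φ).smul_const (EuclideanSpace.single (1 : Fin 2) (1 : ℝ)))
  convert! h using 1
  · funext t; apply plane_ext <;> simp
  · apply plane_ext <;> simp

theorem continuous_dirVec : Continuous dirVec :=
  continuous_iff_continuousAt.2 fun φ => (hasDerivAt_dirVec φ).continuousAt

theorem dirVec_add_pi (φ : ℝ) : dirVec (φ + π) = -dirVec φ := by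
  apply plane_ext <;> simp

theorem plane_eq_sum (v : Plane) : v = ∑ i : Fin 2, v i • EuclideanSpace.single i (1 : ℝ) := by
  rw [Fin.sum_univ_two]; apply plane_ext <;> simp


section

variable {N : ℕ}

/-- The configuration with particles `j` and `k` at `X + r` and `X - r`, the others as in `x`. -/
def pairConf (x : Fin N → Plane) (j k : Fin N) (X r : Plane) : Fin N → Plane :=
  Function.update (Function.update x j (X + r)) k (X - r)

/-- The direction of motion in which `j` moves by `v` and `k` by `-v`. -/
def relDir (j k : Fin N) (v : Plane) : Fin N → Plane := Pi.single j v - Pi.single k v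

theorem relDir_smul (j k : Fin N) (c : ℝ) (v : Plane) :
    relDir j k (c • v) = c • relDir j k v := by
  simp [relDir, smul_sub, Pi.single_smul]

theorem relDir_eq_sum (j k : Fin N) (v : Plane) :
    relDir j k v = ∑ i : Fin 2, v i • relDir j k (EuclideanSpace.single i (1 : ℝ)) := by
  conv_lhs => rw [plane_eq_sum v]
  rw [Fin.sum_univ_two, Fin.sum_univ_two, ← relDir_smul, ← relDir_smul]
  simp only [relDir, Pi.single_add]
  abel

theorem pairConf_left {x : Fin N → Plane} {j k : Fin N} (hjk : j ≠ k) (X r : Plane) :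
    pairConf x j k X r j = X + r := by simp [pairConf, hjk]

theorem pairConf_right (x : Fin N → Plane) (j k : Fin N) (X r : Plane) :
    pairConf x j k X r k = X - r := by simp [pairConf]

theorem pairConf_of_ne {x : Fin N → Plane} {j k l : Fin N} (hj : l ≠ j) (hk : l ≠ k)
    (X r : Plane) : pairConf x j k X r l = x l := by simp [pairConf, hj, hk]

theorem pairConf_eq {x : Fin N → Plane} {j k : Fin N} (hjk : j ≠ k) (X r : Plane) :
    pairConf x j k X r = pairConf x j k X 0 + relDir j k r := by
  funext l
  by_cases hj : l = j
  · subst hj; simp [pairConf_left hjk, relDir, hjk]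
  by_cases hk : l = k
  · subst hk; simp [pairConf_right, relDir, hj, sub_eq_add_neg]
  · simp [pairConf_of_ne hj hk, relDir, hj, hk]

/-- Reflecting the relative coordinate exchanges the two particles. -/
theorem pairConf_neg {x : Fin N → Plane} {j k : Fin N} (hjk : j ≠ k) (X r : Plane) :
    pairConf x j k X (-r) = pairConf x j k X r ∘ Equiv.swap j k := by
  funext l
  by_cases hj : l = j
  · subst hj; simp [pairConf_left hjk, pairConf_right, sub_eq_add_neg]
  by_cases hk : l = k
  · subst hk; simp [pairConf_left hjk, pairConf_right]
  · simp [pairConf_of_ne hj hk, Equiv.swap_apply_of_ne_of_ne hj hk]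

/-- Derivative of a function along a curve of relative coordinates. -/
theorem hasDerivAt_comp_pairConf {Ψ : (Fin N → Plane) → ℂ} (hΨ : Differentiable ℝ Ψ)
    {x : Fin N → Plane} {j k : Fin N} (hjk : j ≠ k) (X : Plane) {r : ℝ → Plane} {r' : Plane}
    {t : ℝ} (hr : HasDerivAt r r' t) :
    HasDerivAt (fun t => Ψ (pairConf x j k X (r t)))
      (fderiv ℝ Ψ (pairConf x j k X (r t)) (relDir j k r')) t := by
  have h1 : HasDerivAt (fun t => pairConf x j k X (r t)) (relDir j k r') t := by
    simp_rw [fun t => pairConf_eq (x := x) hjk X (r t)]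
    refine HasDerivAt.const_add _ ?_
    let L : Plane →L[ℝ] (Fin N → Plane) :=
      ContinuousLinearMap.single ℝ (fun _ : Fin N => Plane) j -
        ContinuousLinearMap.single ℝ (fun _ : Fin N => Plane) k
    have hL : ∀ v, L v = relDir j k v := fun v => rfl
    have := L.hasFDerivAt.comp_hasDerivAt t hr
    simpa only [hL, Function.comp_def] using this
  exact (hΨ _).hasFDerivAt.comp_hasDerivAt t h1

/-- The squared modulus of the angular component of `D_jΨ - D_kΨ` with respect to the relative
coordinate of the pair. -/
def angSq (α R : ℝ) (Ψ : (Fin N → Plane) → ℂ) (j k : Fin N) (x : Fin N → Plane) : ℝ :=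
  ‖∑ i : Fin 2, (perp (relUnit x j k) i : ℂ) *
    (covDer α R Ψ j x i - covDer α R Ψ k x i)‖ ^ 2

theorem relUnit_pairConf {x : Fin N → Plane} {j k : Fin N} (hjk : j ≠ k) (X : Plane) {ρ : ℝ}
    (hρ : 0 < ρ) (φ : ℝ) : relUnit (pairConf x j k X (ρ • dirVec φ)) j k = dirVec φ := by
  rw [relUnit, pairConf_left hjk, pairConf_right,
    show X + ρ • dirVec φ - (X - ρ • dirVec φ) = (2 * ρ) • dirVec φ by module, norm_smul,
    norm_dirVec, Real.norm_of_nonneg (by positivity), smul_smul, mul_one,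
    inv_mul_cancel₀ (by positivity), one_smul]

theorem relLen_pairConf {x : Fin N → Plane} {j k : Fin N} (hjk : j ≠ k) (X r : Plane) :
    relLen (pairConf x j k X r) j k = ‖r‖ := by
  rw [relLen, pairConf_left hjk, pairConf_right]
  congr 1; module

theorem comXY_pairConf {x : Fin N → Plane} {j k : Fin N} (hjk : j ≠ k) (X r : Plane) :
    comXY (pairConf x j k X r) j k = X := by
  rw [comXY, pairConf_left hjk, pairConf_right]; module

/-- The component of `D_jΨ - D_kΨ` in a direction `v` is a magnetic derivative in the relative
coordinate. -/
theorem sum_mul_covDer_sub (α R : ℝ) (Ψ : (Fin N → Plane) → ℂ) (j k : Fin N)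
    (x : Fin N → Plane) (v : Plane) :
    ∑ i : Fin 2, (v i : ℂ) * (covDer α R Ψ j x i - covDer α R Ψ k x i) =
      -Complex.I * fderiv ℝ Ψ x (relDir j k v) +
        ((α * ∑ i : Fin 2, v i * (magA R x j (x j) i - magA R x k (x k) i) : ℝ) : ℂ) * Ψ x := by
  rw [relDir_eq_sum, map_sum]
  simp only [covDer, Fin.sum_univ_two, map_smul, relDir, map_sub, Complex.real_smul]
  push_cast
  ring

/-- The scalar potential seen along the circle by the relative coordinate: it is the sum of
the flux densities of the circle around the other particles and their antipodal shifts. -/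
theorem potential_pairConf {R : ℝ} (hR : 0 ≤ R) {x : Fin N → Plane} {j k : Fin N} (hjk : j ≠ k)
    (X : Plane) {ρ : ℝ} (hρ : 0 < ρ) (hρR : R ≤ 2 * ρ) (φ : ℝ) (d ψ : Fin N → ℝ)
    (hψ : ∀ l, x l - X = d l • dirVec (ψ l)) :
    ρ * ∑ i : Fin 2, perp (dirVec φ) i *
      (magA R (pairConf x j k X (ρ • dirVec φ)) j (pairConf x j k X (ρ • dirVec φ) j) i -
       magA R (pairConf x j k X (ρ • dirVec φ)) k (pairConf x j k X (ρ • dirVec φ) k) i) =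
    1 + ∑ l ∈ (Finset.univ.erase j).erase k,
      (fluxDens R ρ (d l) (φ - ψ l) + fluxDens R ρ (d l) (φ + π - ψ l)) := by
  set y := pairConf x j k X (ρ • dirVec φ) with hy
  have hcs := Real.sin_sq_add_cos_sq φ
  have hkey : ∀ (w : Plane) (t : ℝ), ∑ i : Fin 2, perp (dirVec φ) i * (t • perp w) i =
      t * (Real.cos φ * w 0 + Real.sin φ * w 1) := by
    intro w t; rw [Fin.sum_univ_two]; simp; ring
  have hmax : ∀ w : Plane, max ‖w‖ R ^ 2 = max (‖w‖ ^ 2) (R ^ 2) := by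
    intro w
    rcases le_total ‖w‖ R with h | h
    · rw [max_eq_right h, max_eq_right (pow_le_pow_left₀ (norm_nonneg _) h 2)]
    · rw [max_eq_left h, max_eq_left (pow_le_pow_left₀ hR h 2)]
  have hdist : ∀ l θ, ‖ρ • dirVec θ - d l • dirVec (ψ l)‖ ^ 2 = sqDist ρ (d l) (θ - ψ l) := by
    intro l θ
    rw [plane_norm_sq, sqDist, Real.cos_sub]
    simp only [PiLp.sub_apply, PiLp.smul_apply, dirVec_zero, dirVec_one, smul_eq_mul]
    have h1 := Real.sin_sq_add_cos_sq θ
    have h2 := Real.sin_sq_add_cos_sq (ψ l)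
    linear_combination ρ ^ 2 * h1 + d l ^ 2 * h2
  have hl : ∀ l, l ≠ j → l ≠ k →
      ρ * (((max ‖y j - y l‖ R) ^ 2)⁻¹ * (Real.cos φ * (y j - y l) 0 + Real.sin φ * (y j - y l) 1))
        = fluxDens R ρ (d l) (φ - ψ l) ∧
      ρ * (((max ‖y k - y l‖ R) ^ 2)⁻¹ * (Real.cos φ * (y k - y l) 0 + Real.sin φ * (y k - y l) 1))
        = -fluxDens R ρ (d l) (φ + π - ψ l) := by
    intro l hlj hlk
    have e1 : y j - y l = ρ • dirVec φ - d l • dirVec (ψ l) := by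
      rw [hy, pairConf_left hjk, pairConf_of_ne hlj hlk, ← hψ l]; abel
    have e2 : y k - y l = ρ • dirVec (φ + π) - d l • dirVec (ψ l) := by
      rw [hy, pairConf_right, pairConf_of_ne hlj hlk, ← hψ l, dirVec_add_pi, smul_neg]; abel
    rw [hmax, hmax, e1, e2, hdist, hdist, fluxDens, fluxDens]
    simp only [PiLp.sub_apply, PiLp.smul_apply, dirVec_zero, dirVec_one, smul_eq_mul]
    rw [Real.cos_sub (φ + π), Real.cos_sub φ, Real.cos_add_pi, Real.sin_add_pi]
    constructor
    · rw [div_eq_mul_inv]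
      linear_combination ρ ^ 2 * (max (sqDist ρ (d l) (φ - ψ l)) (R ^ 2))⁻¹ * hcs
    · rw [div_eq_mul_inv]
      linear_combination -ρ ^ 2 * (max (sqDist ρ (d l) (φ + π - ψ l)) (R ^ 2))⁻¹ * hcs
  have hpair : max ‖(2 * ρ) • dirVec φ‖ R ^ 2 = 4 * ρ ^ 2 := by
    rw [norm_smul, norm_dirVec, Real.norm_of_nonneg (by positivity), mul_one, max_eq_left hρR]
    ring
  have ejk : y j - y k = (2 * ρ) • dirVec φ := by
    rw [hy, pairConf_left hjk, pairConf_right]; module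
  have hAj : ρ * ∑ i : Fin 2, perp (dirVec φ) i * magA R y j (y j) i = 1 / 2 +
      ∑ l ∈ (Finset.univ.erase j).erase k, fluxDens R ρ (d l) (φ - ψ l) := by
    have : ∀ i : Fin 2, magA R y j (y j) i = ∑ l ∈ Finset.univ.erase j,
        (((max ‖y j - y l‖ R) ^ 2)⁻¹ • perp (y j - y l)) i := fun i => by
      rw [magA, WithLp.ofLp_sum, Finset.sum_apply]
    simp_rw [this, Finset.mul_sum]
    rw [Finset.sum_comm]
    simp_rw [← Finset.mul_sum, hkey]
    rw [Finset.mul_sum, ← Finset.add_sum_erase _ _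
      (Finset.mem_erase.2 ⟨hjk.symm, Finset.mem_univ k⟩)]
    congr 1
    · rw [ejk, hpair]
      simp only [PiLp.smul_apply, dirVec_zero, dirVec_one, smul_eq_mul]
      field_simp
      linear_combination 4 * hcs
    · refine Finset.sum_congr rfl fun l h => ?_
      rw [Finset.mem_erase, Finset.mem_erase] at h
      exact (hl l h.2.1 h.1).1
  have hAk : ρ * ∑ i : Fin 2, perp (dirVec φ) i * magA R y k (y k) i = -(1 / 2) +
      ∑ l ∈ (Finset.univ.erase j).erase k, -fluxDens R ρ (d l) (φ + π - ψ l) := by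
    have : ∀ i : Fin 2, magA R y k (y k) i = ∑ l ∈ Finset.univ.erase k,
        (((max ‖y k - y l‖ R) ^ 2)⁻¹ • perp (y k - y l)) i := fun i => by
      rw [magA, WithLp.ofLp_sum, Finset.sum_apply]
    simp_rw [this, Finset.mul_sum]
    rw [Finset.sum_comm]
    simp_rw [← Finset.mul_sum, hkey]
    rw [Finset.mul_sum, ← Finset.add_sum_erase _ _
      (Finset.mem_erase.2 ⟨hjk, Finset.mem_univ j⟩), Finset.erase_right_comm]
    congr 1
    · rw [show y k - y j = -((2 * ρ) • dirVec φ) by rw [← ejk]; abel, norm_neg, hpair]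
      simp only [PiLp.smul_apply, PiLp.neg_apply, dirVec_zero, dirVec_one, smul_eq_mul]
      field_simp
      linear_combination (-4) * hcs
    · refine Finset.sum_congr rfl fun l h => ?_
      rw [Finset.mem_erase, Finset.mem_erase] at h
      exact (hl l h.2.1 h.1).2
  simp_rw [mul_sub]
  rw [Finset.sum_sub_distrib, mul_sub, hAj, hAk, Finset.sum_add_distrib, Finset.sum_neg_distrib]
  ring

/-! ### The angular inequality on a circle -/

theorem continuous_fluxDens {R ρ d : ℝ} (hρ : 0 ≤ ρ) (hd : 0 ≤ d) (h : 0 < R ∨ ρ ≠ d) :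
    Continuous (fluxDens R ρ d) := by
  unfold fluxDens
  refine Continuous.div (by fun_prop) (by unfold sqDist; fun_prop) fun φ => ?_
  rcases h with h | h
  · exact (lt_max_of_lt_right (by positivity)).ne'
  · refine (lt_max_of_lt_left (lt_of_lt_of_le ?_ (sq_sub_le_sqDist hρ hd φ))).ne'
    have := sub_ne_zero.2 h
    positivity

/-- If the total flux through the circle of radius `ρ` has distance at least `γ` to the even integers,
the angular energy on the circle bounds `γ²‖Ψ‖²/ρ`. The symmetry of `Ψ` under exchange of the pair
makes it `π`-periodic in the angle, so that `circle_gap` applies on two half circles. For `R = 0` the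
circle must not run through another particle. -/
theorem circle_step {α R : ℝ} (hR : 0 ≤ R) {Ψ : (Fin N → Plane) → ℂ}
    (hΨ : ContDiff ℝ (⊤ : ℕ∞) Ψ)
    (hsym : ∀ (σ : Equiv.Perm (Fin N)) (x : Fin N → Plane), Ψ (x ∘ σ) = Ψ x)
    (x : Fin N → Plane) {j k : Fin N} (hjk : j ≠ k) (X : Plane) {ρ : ℝ} (hρ : 0 < ρ)
    (hρR : R ≤ 2 * ρ) (hd : 0 < R ∨ ∀ l, ρ ≠ ‖x l - X‖) {γ : ℝ} (hγ0 : 0 ≤ γ)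
    (hγ : ∀ q : ℤ, γ ≤ |α * (1 + 2 * ∑ l ∈ (Finset.univ.erase j).erase k,
      flux R ρ ‖x l - X‖) - 2 * q|) {C : ℝ} (hC : C ≤ γ ^ 2) :
    ∫⁻ φ in Ioo (-π) π, ENNReal.ofReal (C * (‖Ψ (pairConf x j k X (ρ • dirVec φ))‖ ^ 2 / ρ)) ≤
      ∫⁻ φ in Ioo (-π) π, ENNReal.ofReal
        (ρ * angSq α R Ψ j k (pairConf x j k X (ρ • dirVec φ))) := by
  have hpi := Real.pi_pos
  choose ψ hψ using fun l => exists_polar (x l - X)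
  set S := (Finset.univ.erase j).erase k
  set Γ : ℝ → (Fin N → Plane) := fun φ => pairConf x j k X (ρ • dirVec φ) with hΓ
  set u : ℝ → ℂ := fun φ => Ψ (Γ φ) with hu
  set u' : ℝ → ℂ := fun φ => fderiv ℝ Ψ (Γ φ) (relDir j k (ρ • perp (dirVec φ))) with hu'
  set h : Fin N → ℝ → ℝ := fun l φ => fluxDens R ρ ‖x l - X‖ (φ - ψ l) with hh
  set a : ℝ → ℝ := fun φ => α * (1 + ∑ l ∈ S, (h l φ + h l (φ + π))) with ha
  have hder : ∀ φ, HasDerivAt u (u' φ) φ := fun φ =>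
    hasDerivAt_comp_pairConf (hΨ.differentiable (by simp)) hjk X
      ((hasDerivAt_dirVec φ).const_smul ρ)
  have hperp : Continuous fun φ => perp (dirVec φ) := by
    have : (fun φ => perp (dirVec φ)) = fun φ => dirVec (φ + π / 2) := by
      funext φ; apply plane_ext <;> simp [Real.cos_add_pi_div_two, Real.sin_add_pi_div_two]
    rw [this]; exact continuous_dirVec.comp (by fun_prop)
  have hΓc : Continuous Γ := by
    have hcd := continuous_dirVec
    have e : Γ = fun φ => pairConf x j k X 0 + relDir j k (ρ • dirVec φ) :=
      funext fun φ => pairConf_eq hjk X _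
    rw [e]
    unfold relDir
    refine continuous_const.add (Continuous.sub ?_ ?_)
    · exact (continuous_single j).comp (by fun_prop)
    · exact (continuous_single k).comp (by fun_prop)
  have hu'c : Continuous u' := by
    refine ((hΨ.continuous_fderiv (by simp)).comp hΓc).clm_apply ?_
    unfold relDir
    refine Continuous.sub ?_ ?_
    · exact (continuous_single j).comp (by fun_prop)
    · exact (continuous_single k).comp (by fun_prop)
  have hhc : ∀ l, Continuous (h l) := fun l =>
    (continuous_fluxDens hρ.le (norm_nonneg _) (hd.imp_right fun h => h l)).comp (by fun_prop)
  have hhc' : ∀ l, Continuous fun φ => h l (φ + π) := fun l => (hhc l).comp (by fun_prop)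
  have hhs : Continuous fun φ => ∑ l ∈ S, (h l φ + h l (φ + π)) :=
    continuous_finsetSum _ fun l _ => (hhc l).add (hhc' l)
  have hac : Continuous a := continuous_const.mul (continuous_const.add hhs)
  have huc : Continuous u := continuous_iff_continuousAt.2 fun φ => (hder φ).continuousAt
  have hper : ∀ φ, u (φ + π) = u φ := fun φ => by
    simp only [hu, hΓ]
    rw [dirVec_add_pi, smul_neg, pairConf_neg hjk, hsym]
  have hflux : ∀ b, ∫ φ in b..(b + π), a φ = π * (α * (1 + 2 * ∑ l ∈ S, flux R ρ ‖x l - X‖)) := by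
    intro b
    have h1 : ∀ l, ∫ φ in b..(b + π), (h l φ + h l (φ + π)) = 2 * π * flux R ρ ‖x l - X‖ := by
      intro l
      have hp : Function.Periodic (h l) (2 * π) := fun t => by
        simp only [hh, fluxDens, sqDist]
        rw [show t + 2 * π - ψ l = t - ψ l + 2 * π by ring, Real.cos_add_two_pi]
      have hp' : Function.Periodic (fluxDens R ρ ‖x l - X‖) (2 * π) := fun t => by
        simp [fluxDens, sqDist]
      rw [intervalIntegral.integral_add ((hhc l).intervalIntegrable _ _)
        ((hhc' l).intervalIntegrable _ _),
        intervalIntegral.integral_comp_add_right (h l) π,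
        intervalIntegral.integral_add_adjacent_intervals ((hhc l).intervalIntegrable _ _)
          ((hhc l).intervalIntegrable _ _), flux]
      have e1 := intervalIntegral.integral_comp_sub_right (a := b) (b := b + π + π)
        (fluxDens R ρ ‖x l - X‖) (ψ l)
      have e2 := hp'.intervalIntegral_add_eq (b - ψ l) (-π)
      simp only [hh]
      rw [e1, show b + π + π - ψ l = b - ψ l + 2 * π by ring, e2,
        show -π + 2 * π = π by ring]
      field_simp
    simp only [ha]
    rw [intervalIntegral.integral_const_mul, intervalIntegral.integral_add
      (continuous_const.intervalIntegrable _ _) (hhs.intervalIntegrable _ _),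
      intervalIntegral.integral_finsetSum fun l _ =>
        Continuous.intervalIntegrable (u := fun φ => h l φ + h l (φ + π))
          ((hhc l).add (hhc' l)) _ _]
    simp_rw [h1]
    rw [← Finset.mul_sum]
    simp
    ring
  have hang : ∀ φ, ρ ^ 2 * angSq α R Ψ j k (Γ φ) = ‖-Complex.I * u' φ + a φ * u φ‖ ^ 2 := by
    intro φ
    have hp := potential_pairConf hR hjk X hρ hρR φ (fun l => ‖x l - X‖) ψ hψ
    rw [angSq, hΓ]
    simp only
    rw [relUnit_pairConf hjk X hρ, sum_mul_covDer_sub]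
    have hs : ρ ^ 2 = ‖(ρ : ℂ)‖ ^ 2 := by simp
    rw [hs, ← mul_pow, ← norm_mul]
    congr 2
    have e1 : u' φ = ρ * fderiv ℝ Ψ (Γ φ) (relDir j k (perp (dirVec φ))) := by
      simp only [hu']
      rw [relDir_smul, map_smul, Complex.real_smul]
    have e2 : a φ = ρ * (α * ∑ i : Fin 2, perp (dirVec φ) i *
      (magA R (Γ φ) j (Γ φ j) i - magA R (Γ φ) k (Γ φ k) i)) := by
      simp only [ha, hh]
      rw [← hp]
      ring
    rw [e1, e2]
    push_cast
    ring
  have hgap : γ ^ 2 * ∫ φ in (-π)..π, ‖u φ‖ ^ 2 ≤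
      ∫ φ in (-π)..π, ‖-Complex.I * u' φ + a φ * u φ‖ ^ 2 := by
    have c1 : Continuous fun φ => ‖u φ‖ ^ 2 := by fun_prop
    have c2 : Continuous fun φ => ‖-Complex.I * u' φ + a φ * u φ‖ ^ 2 := by fun_prop
    -- the full circle is two half circles, each with the gap
    have g1 := circle_gap (-π) hder hu'c hac (hper _) (hflux _) hγ0 hγ
    have g2 := circle_gap 0 hder hu'c hac (hper _) (hflux _) hγ0 hγ
    rw [neg_add_cancel] at g1
    rw [zero_add] at g2
    rw [← intervalIntegral.integral_add_adjacent_intervals (c1.intervalIntegrable (-π) 0)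
      (c1.intervalIntegrable 0 π), ← intervalIntegral.integral_add_adjacent_intervals
      (c2.intervalIntegrable (-π) 0) (c2.intervalIntegrable 0 π)]
    linarith
  have hang' : ∀ φ, ρ * angSq α R Ψ j k (Γ φ) = ρ⁻¹ * ‖-Complex.I * u' φ + a φ * u φ‖ ^ 2 := by
    intro φ; rw [← hang]; field_simp
  change ∫⁻ φ in Ioo (-π) π, ENNReal.ofReal (C * (‖u φ‖ ^ 2 / ρ)) ≤
    ∫⁻ φ in Ioo (-π) π, ENNReal.ofReal (ρ * angSq α R Ψ j k (Γ φ))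
  simp_rw [hang']
  have c1 : Continuous fun φ => γ ^ 2 * (‖u φ‖ ^ 2 / ρ) := by fun_prop
  have c2 : Continuous fun φ => ρ⁻¹ * ‖-Complex.I * u' φ + a φ * u φ‖ ^ 2 := by fun_prop
  have hle : -π ≤ π := by linarith
  calc _ ≤ ∫⁻ φ in Ioo (-π) π, ENNReal.ofReal (γ ^ 2 * (‖u φ‖ ^ 2 / ρ)) := by
        refine lintegral_mono fun φ => ENNReal.ofReal_le_ofReal ?_
        gcongr
    _ = ENNReal.ofReal (∫ φ in (-π)..π, γ ^ 2 * (‖u φ‖ ^ 2 / ρ)) := by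
        rw [intervalIntegral.integral_of_le hle, integral_Ioc_eq_integral_Ioo,
          ofReal_integral_eq_lintegral_ofReal]
        · exact (c1.integrableOn_Icc).mono_set Ioo_subset_Icc_self
        · exact Filter.Eventually.of_forall fun φ => by positivity
    _ ≤ ENNReal.ofReal (∫ φ in (-π)..π, ρ⁻¹ * ‖-Complex.I * u' φ + a φ * u φ‖ ^ 2) := by
        refine ENNReal.ofReal_le_ofReal ?_
        rw [intervalIntegral.integral_const_mul, intervalIntegral.integral_const_mul,
          intervalIntegral.integral_div, mul_div_assoc', div_eq_inv_mul]
        gcongr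
    _ = _ := by
        rw [intervalIntegral.integral_of_le hle, integral_Ioc_eq_integral_Ioo,
          ofReal_integral_eq_lintegral_ofReal]
        · exact (c2.integrableOn_Icc).mono_set Ioo_subset_Icc_self
        · exact Filter.Eventually.of_forall fun φ => by positivity

/-! ### The radial and angular components -/

/-- The radial derivative of `|Ψ|` equals `Re (Ψ̄ ∂_rΨ) / |Ψ|`, also (with both sides zero) at the
zeros of `Ψ`: there either `|Ψ|` is not differentiable or it has a minimum. -/
theorem radDerAbs_eq {Ψ : (Fin N → Plane) → ℂ} (hΨ : Differentiable ℝ Ψ) (j k : Fin N)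
    (x : Fin N → Plane) :
    radDerAbs Ψ j k x =
      (starRingEnd ℂ (Ψ x) * fderiv ℝ Ψ x (relDir j k (relUnit x j k))).re / ‖Ψ x‖ := by
  change fderiv ℝ (fun w => ‖Ψ w‖) x (relDir j k (relUnit x j k)) = _
  set v := relDir j k (relUnit x j k)
  by_cases h0 : Ψ x = 0
  · have hmin : IsLocalMin (fun w => ‖Ψ w‖) x :=
      Filter.Eventually.of_forall fun w => by simp [h0]
    rw [hmin.fderiv_eq_zero, h0]; simp
  · have hd : DifferentiableAt ℝ (fun w => ‖Ψ w‖) x := (hΨ x).norm ℝ h0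
    have h1 := hd.hasFDerivAt.pow 2
    have h2 := (hΨ x).hasFDerivAt.norm_sq
    have h3 := congrArg (fun L => L v) (h1.unique h2)
    have hn : ‖Ψ x‖ ≠ 0 := norm_ne_zero_iff.2 h0
    simp [Complex.inner] at h3
    rw [eq_div_iff hn]
    simp
    linarith

/-- The diamagnetic inequality at a point: a real potential `r` only contributes to the component of
`-i f + r ψ` that is in phase with `ψ`. -/
theorem sq_re_div_le (ψ f : ℂ) (r : ℝ) :
    ((starRingEnd ℂ ψ * f).re / ‖ψ‖) ^ 2 ≤ ‖-Complex.I * f + r * ψ‖ ^ 2 := by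
  by_cases h0 : ψ = 0
  · simp [h0]
  have hn : 0 < ‖ψ‖ := norm_pos_iff.2 h0
  rw [← sq_abs ((starRingEnd ℂ ψ * f).re / ‖ψ‖)]
  gcongr
  rw [abs_div, abs_norm, div_le_iff₀ hn, ← Complex.norm_conj ψ, ← norm_mul]
  refine le_trans (le_of_eq ?_) (Complex.abs_im_le_norm _)
  rw [← abs_neg]
  congr 1
  simp
  ring

/-- Splitting `D_jΨ - D_kΨ` along the relative coordinate, the radial part dominates the radial
derivative of `|Ψ|` by the diamagnetic inequality. -/
theorem radDerAbs_sq_add_angSq_le {Ψ : (Fin N → Plane) → ℂ} (hΨ : Differentiable ℝ Ψ) (α R : ℝ)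
    (j k : Fin N) (x : Fin N → Plane) :
    radDerAbs Ψ j k x ^ 2 + angSq α R Ψ j k x ≤
      ∑ i : Fin 2, ‖covDer α R Ψ j x i - covDer α R Ψ k x i‖ ^ 2 := by
  have hr := sq_re_div_le (Ψ x) (fderiv ℝ Ψ x (relDir j k (relUnit x j k)))
    (α * ∑ i : Fin 2, relUnit x j k i * (magA R x j (x j) i - magA R x k (x k) i))
  rw [← radDerAbs_eq hΨ, ← sum_mul_covDer_sub α R Ψ j k x] at hr
  refine (add_le_add_left hr _).trans ?_
  rw [angSq]
  set e := relUnit x j k with he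
  have hee : e 0 ^ 2 + e 1 ^ 2 ≤ 1 := by
    rw [← plane_norm_sq, he, relUnit, norm_smul, norm_inv, norm_norm]
    by_cases h : ‖x j - x k‖ = 0
    · simp [h]
    · rw [inv_mul_cancel₀ h]; simp
  simp only [Fin.sum_univ_two, perp_zero, perp_one, Complex.sq_norm, Complex.normSq_apply]
  generalize covDer α R Ψ j x 0 - covDer α R Ψ k x 0 = a
  generalize covDer α R Ψ j x 1 - covDer α R Ψ k x 1 = b
  simp
  nlinarith [mul_le_mul_of_nonneg_right hee
    (show 0 ≤ a.re * a.re + a.im * a.im + (b.re * b.re + b.im * b.im) by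
      nlinarith [sq_nonneg a.re, sq_nonneg a.im, sq_nonneg b.re, sq_nonneg b.im])]

theorem continuous_perp : Continuous perp := by
  have : perp = fun v : Plane => !₂[-(v 1), v 0] := rfl
  rw [this]
  fun_prop

theorem measurable_magA (R : ℝ) (j : Fin N) : Measurable fun x : Fin N → Plane => magA R x j (x j) := by
  unfold magA
  refine Finset.measurable_fun_sum _ fun k _ => ?_
  have h1 : Measurable fun x : Fin N → Plane => ((max ‖x j - x k‖ R) ^ 2)⁻¹ := by fun_prop
  have h2 : Measurable fun x : Fin N → Plane => perp (x j - x k) :=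
    continuous_perp.measurable.comp (by fun_prop)
  exact h1.smul h2

theorem measurable_covDer {Ψ : (Fin N → Plane) → ℂ} (hΨ : ContDiff ℝ (⊤ : ℕ∞) Ψ) (α R : ℝ)
    (j : Fin N) (i : Fin 2) : Measurable fun x => covDer α R Ψ j x i := by
  unfold covDer
  have h1 := hΨ.continuous_fderiv (by simp)
  have h2 : Measurable fun x => fderiv ℝ Ψ x (Pi.single j (EuclideanSpace.single i (1:ℝ))) :=
    (h1.clm_apply continuous_const).measurable
  have h3 : Measurable fun x : Fin N → Plane => magA R x j (x j) i :=
    (EuclideanSpace.proj (𝕜 := ℝ) i : Plane →L[ℝ] ℝ).continuous.measurable.comp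
      (measurable_magA R j)
  exact (h2.const_mul _).add (((Complex.measurable_ofReal.comp h3).const_mul _).mul
    hΨ.continuous.measurable)

theorem measurable_relUnit (j k : Fin N) : Measurable fun x : Fin N → Plane => relUnit x j k := by
  unfold relUnit
  fun_prop

theorem measurable_plane_apply (i : Fin 2) : Measurable fun v : Plane => v i :=
  (EuclideanSpace.proj (𝕜 := ℝ) i : Plane →L[ℝ] ℝ).continuous.measurable

theorem measurable_angSq {Ψ : (Fin N → Plane) → ℂ} (hΨ : ContDiff ℝ (⊤ : ℕ∞) Ψ) (α R : ℝ)
    (j k : Fin N) : Measurable (angSq α R Ψ j k) := by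
  unfold angSq
  refine (Measurable.norm (Finset.measurable_fun_sum _ fun i _ => ?_)).pow_const 2
  refine Measurable.mul ?_ ((measurable_covDer hΨ α R j i).sub (measurable_covDer hΨ α R k i))
  exact Complex.measurable_ofReal.comp ((measurable_plane_apply i).comp
    (continuous_perp.measurable.comp (measurable_relUnit j k)))

theorem measurable_radDerAbs {Ψ : (Fin N → Plane) → ℂ} (hΨ : ContDiff ℝ (⊤ : ℕ∞) Ψ)
    (j k : Fin N) : Measurable (radDerAbs Ψ j k) := by
  have e : radDerAbs Ψ j k = fun x => (starRingEnd ℂ (Ψ x) * ∑ i : Fin 2, (relUnit x j k i : ℂ) *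
      fderiv ℝ Ψ x (relDir j k (EuclideanSpace.single i (1:ℝ)))).re / ‖Ψ x‖ := by
    funext x
    rw [radDerAbs_eq (hΨ.differentiable (by simp)), relDir_eq_sum, map_sum]
    simp only [map_smul, Complex.real_smul]
  rw [e]
  have h1 := hΨ.continuous.measurable
  have h2 : ∀ i : Fin 2, Measurable fun x =>
      fderiv ℝ Ψ x (relDir j k (EuclideanSpace.single i (1:ℝ))) := fun i =>
    ((hΨ.continuous_fderiv (by simp)).clm_apply continuous_const).measurable
  have h3 : ∀ i : Fin 2, Measurable fun x : Fin N → Plane => (relUnit x j k i : ℂ) := fun i =>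
    Complex.measurable_ofReal.comp ((measurable_plane_apply i).comp (measurable_relUnit j k))
  have h4 : Measurable fun x => ∑ i : Fin 2, (relUnit x j k i : ℂ) *
      fderiv ℝ Ψ x (relDir j k (EuclideanSpace.single i (1:ℝ))) :=
    Finset.measurable_fun_sum _ fun i _ => (h3 i).mul (h2 i)
  have h5 : Measurable fun x => starRingEnd ℂ (Ψ x) := Complex.continuous_conj.measurable.comp h1
  exact (Complex.measurable_re.comp (h5.mul h4)).div h1.norm

/-! ### The statistics parameter -/

theorem alphaN_nonneg (α : ℝ) (N : ℕ) : 0 ≤ alphaN α N := by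
  refine Real.sInf_nonneg ?_
  rintro _ ⟨p, _, q, rfl⟩
  positivity

theorem alphaN_le (α : ℝ) {N p : ℕ} (hp : p + 1 < N) (q : ℤ) :
    alphaN α N ≤ |(2 * (p : ℝ) + 1) * α - 2 * (q : ℝ)| := by
  refine csInf_le ⟨0, ?_⟩ ⟨p, hp, q, rfl⟩
  rintro _ ⟨p, _, q, rfl⟩
  positivity

theorem alphaN_le_one (α : ℝ) {N : ℕ} (hN : 2 ≤ N) : alphaN α N ≤ 1 := by
  refine (alphaN_le α (p := 0) (by omega) (round (α / 2))).trans ?_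
  have h := abs_sub_round (α / 2)
  rw [show (2 * ((0 : ℕ) : ℝ) + 1) * α - 2 * (round (α / 2) : ℝ)
    = 2 * (α / 2 - round (α / 2)) by push_cast; ring, abs_mul, abs_two]
  linarith

theorem card_erase_erase {j k : Fin N} (hjk : j ≠ k) :
    ((Finset.univ.erase j).erase k).card + 2 = N := by
  have h1 := Finset.card_erase_add_one (Finset.mem_erase.2 ⟨hjk.symm, Finset.mem_univ k⟩)
  have h2 := Finset.card_erase_add_one (Finset.mem_univ j)
  rw [Finset.card_univ, Fintype.card_fin] at h2
  omega

/-! ### The inequality in the relative coordinate of a pair -/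

theorem flux_eq_zero_or_one {ρ d : ℝ} (hρ : 0 < ρ) (hd : 0 ≤ d) (h : ρ ≠ d) :
    flux 0 ρ d = 0 ∨ flux 0 ρ d = 1 := by
  rcases lt_or_gt_of_ne h with h | h
  · exact Or.inl (flux_eq_zero le_rfl hρ h (by linarith))
  · exact Or.inr (flux_eq_one le_rfl hd h (by linarith))

/-- For point-like fluxes, the total flux seen by the relative coordinate is an odd multiple of `α`
on almost every circle. -/
theorem alphaN_le_of_zero (α : ℝ) {j k : Fin N} (hjk : j ≠ k) {ρ : ℝ} (hρ : 0 < ρ)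
    (d : Fin N → ℝ) (hd : ∀ l, 0 ≤ d l) (h : ∀ l, ρ ≠ d l) (q : ℤ) :
    alphaN α N ≤ |α * (1 + 2 * ∑ l ∈ (Finset.univ.erase j).erase k, flux 0 ρ (d l)) - 2 * q| := by
  classical
  set S := (Finset.univ.erase j).erase k
  have hS : S.card + 2 = N := card_erase_erase hjk
  have hf : ∀ l, flux 0 ρ (d l) = if flux 0 ρ (d l) = 1 then 1 else 0 := by
    intro l
    rcases flux_eq_zero_or_one hρ (hd l) (h l) with e | e <;> simp [e]
  rw [Finset.sum_congr rfl fun l _ => hf l, Finset.sum_boole]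
  have hp : (S.filter fun l => flux 0 ρ (d l) = 1).card ≤ S.card := Finset.card_filter_le _ _
  convert! alphaN_le α (N := N) (p := (S.filter fun l => flux 0 ρ (d l) = 1).card)
    (by omega) q using 2
  ring

theorem continuous_pairConf_polar (x : Fin N → Plane) {j k : Fin N} (hjk : j ≠ k) (X : Plane) :
    Continuous fun p : ℝ × ℝ => pairConf x j k X (p.1 • dirVec p.2) := by
  have hcd := continuous_dirVec
  have e : (fun p : ℝ × ℝ => pairConf x j k X (p.1 • dirVec p.2)) =
      fun p => pairConf x j k X 0 + relDir j k (p.1 • dirVec p.2) :=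
    funext fun p => pairConf_eq hjk X _
  rw [e]
  unfold relDir
  refine continuous_const.add (Continuous.sub ?_ ?_)
  · exact (continuous_single j).comp (by fun_prop)
  · exact (continuous_single k).comp (by fun_prop)

/-- The interaction inequality on an annulus of width `R/2`. In the radial direction the density
may be moved, at the price of the radial derivative, to those circles whose flux is not
close to an even integer; there the angular derivative has a gap. -/
theorem window_step {α R : ℝ} (hR : 0 < R) {Ψ : (Fin N → Plane) → ℂ}
    (hΨ : ContDiff ℝ (⊤ : ℕ∞) Ψ)
    (hsym : ∀ (σ : Equiv.Perm (Fin N)) (x : Fin N → Plane), Ψ (x ∘ σ) = Ψ x)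
    (x : Fin N → Plane) {j k : Fin N} (hjk : j ≠ k) (X : Plane) {s : ℝ} (hs : 3 * R ≤ s)
    {κ c : ℝ} (hκ0 : 0 ≤ κ) (hcκ : c ^ 2 ≤ 9 * κ) (hc2 : 14 / 3 * c ^ 2 ≤ (1 / 1000) ^ 2) :
    ∫⁻ ρ in Icc s (s + R / 2), ∫⁻ φ in Ioo (-π) π, ENNReal.ofReal
      (c ^ 2 * alphaN α N ^ 2 * (‖Ψ (pairConf x j k X (ρ • dirVec φ))‖ ^ 2 / ρ)) ≤
    ∫⁻ ρ in Icc s (s + R / 2), ∫⁻ φ in Ioo (-π) π, ENNReal.ofReal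
      (ρ * (κ * radDerAbs Ψ j k (pairConf x j k X (ρ • dirVec φ)) ^ 2 +
        angSq α R Ψ j k (pairConf x j k X (ρ • dirVec φ)))) := by
  have hN : 2 ≤ N := by have := card_erase_erase hjk; omega
  set A := alphaN α N with hA
  have hA1 : A ≤ 1 := alphaN_le_one α hN
  rcases (alphaN_nonneg α N).eq_or_lt with h0 | hA0
  · rw [hA, ← h0]; simp
  set S := (Finset.univ.erase j).erase k with hS
  have hScard : S.card + 2 = N := card_erase_erase hjk
  set I := Icc s (s + R / 2) with hI
  set Φ : ℝ → ℝ := fun ρ => |α| * (1 + 2 * ∑ l ∈ S, flux R ρ ‖x l - X‖) with hΦ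
  set B := I ∩ Φ ⁻¹' nearEven (A / 1000) with hB
  have hpos : ∀ ρ ∈ I, 0 < ρ := fun ρ h => by have := h.1; linarith
  have hΦc : ContinuousOn Φ I := by
    intro ρ hρ
    refine (continuousAt_const.mul (continuousAt_const.add (continuousAt_const.mul
      (tendsto_finsetSum _ fun l _ => ?_)))).continuousWithinAt
    obtain ⟨f', hf, -⟩ := hasDerivAt_flux_bounds hR (norm_nonneg (x l - X))
      (ρ := ρ) (by have := hρ.1; linarith)
    exact hf.continuousAt
  have hBm : MeasurableSet B :=
    (hΦc.preimage_isClosed_of_isClosed isClosed_Icc (isClosed_nearEven _)).measurableSet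
  have habs : ∀ p : ℕ, p ≤ S.card → ∀ q : ℤ, A ≤ |(2 * (p : ℝ) + 1) * |α| - 2 * (q : ℝ)| := by
    intro p hp q
    rcases abs_cases α with ⟨e, -⟩ | ⟨e, -⟩
    · rw [e]; exact alphaN_le α (by omega) q
    · rw [e, ← abs_neg]
      convert! alphaN_le α (N := N) (p := p) (by omega) (-q) using 2
      push_cast; ring
  have hBv : volume B ≤ ENNReal.ofReal (R / 4) :=
    volume_bad_window S (fun l => ‖x l - X‖) (fun l => norm_nonneg _) hR (abs_nonneg α) hA0 hA1
      habs hs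
  set J := I \ B with hJ
  have hJm : MeasurableSet J := measurableSet_Icc.diff hBm
  have hJv : ENNReal.ofReal (R / 2 / 2) ≤ volume J := by
    have h1 : volume I = ENNReal.ofReal (R / 4) + ENNReal.ofReal (R / 2 / 2) := by
      rw [hI, Real.volume_Icc, ← ENNReal.ofReal_add (by positivity) (by positivity)]
      congr 1; ring
    have h2 : volume I ≤ volume B + volume J := by
      refine (measure_mono ?_).trans (measure_union_le _ _)
      intro t ht
      by_cases h : t ∈ B
      · exact Or.inl h
      · exact Or.inr ⟨ht, h⟩
    rw [h1] at h2
    exact (ENNReal.add_le_add_iff_left ENNReal.ofReal_ne_top).1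
      (h2.trans (by gcongr))
  have hgood : ∀ ρ ∈ J, ∀ q : ℤ, A / 1000 ≤ |α * (1 + 2 * ∑ l ∈ S, flux R ρ ‖x l - X‖) - 2 * q| := by
    intro ρ hρ q
    by_contra! h
    refine hρ.2 ⟨hρ.1, ?_⟩
    change Φ ρ ∈ nearEven (A / 1000)
    rcases abs_cases α with ⟨e, -⟩ | ⟨e, -⟩
    · exact ⟨q, by rw [hΦ]; simp only [e]; exact h.le⟩
    · rw [← neg_mem_nearEven]
      refine ⟨q, ?_⟩
      rw [hΦ]
      simp only [e]
      convert! h.le using 2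
      ring
  have hpc := continuous_pairConf_polar x hjk X
  set F : ℝ → ℝ → ℂ := fun ρ φ => Ψ (pairConf x j k X (ρ • dirVec φ)) with hF
  set F' : ℝ → ℝ → ℂ := fun ρ φ =>
    fderiv ℝ Ψ (pairConf x j k X (ρ • dirVec φ)) (relDir j k (dirVec φ)) with hF'
  have hFc : Continuous fun p : ℝ × ℝ => F p.1 p.2 := hΨ.continuous.comp hpc
  have hF'c : Continuous fun p : ℝ × ℝ => F' p.1 p.2 := by
    refine ((hΨ.continuous_fderiv (by simp)).comp hpc).clm_apply ?_
    have hcd := continuous_dirVec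
    unfold relDir
    refine Continuous.sub ?_ ?_
    · exact (continuous_single j).comp (by fun_prop)
    · exact (continuous_single k).comp (by fun_prop)
  set w : ℝ → ℝ → ℝ := fun ρ φ => (starRingEnd ℂ (F ρ φ) * F' ρ φ).re / ‖F ρ φ‖ with hw
  have hwm : Measurable fun p : ℝ × ℝ => w p.1 p.2 :=
    (Complex.measurable_re.comp ((Complex.continuous_conj.measurable.comp hFc.measurable).mul
      hF'c.measurable)).div hFc.measurable.norm
  have hwr : ∀ ρ, 0 < ρ → ∀ φ, radDerAbs Ψ j k (pairConf x j k X (ρ • dirVec φ)) = w ρ φ := by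
    intro ρ hρ φ
    rw [radDerAbs_eq (hΨ.differentiable (by simp)), relUnit_pairConf hjk X hρ]
  have hder : ∀ φ ρ, HasDerivAt (fun ρ => F ρ φ) (F' ρ φ) ρ := by
    intro φ ρ
    have h1 : HasDerivAt (fun ρ : ℝ => ρ • dirVec φ) (dirVec φ) ρ := by
      simpa using (hasDerivAt_id ρ).smul_const (dirVec φ)
    exact hasDerivAt_comp_pairConf (hΨ.differentiable (by simp)) hjk X h1
  have hwb : ∀ ρ φ, |w ρ φ| ≤ ‖F' ρ φ‖ := by
    intro ρ φ
    rw [hw]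
    simp only
    rw [abs_div, abs_norm]
    refine div_le_of_le_mul₀ (norm_nonneg _) (norm_nonneg _) ?_
    rw [mul_comm ‖F' ρ φ‖, ← Complex.norm_conj (F ρ φ), ← norm_mul]
    exact Complex.abs_re_le_norm _
  set C := c ^ 2 * A ^ 2 with hC
  set E := (A / 1000) ^ 2 with hE
  have hrad : ∀ φ, ∫⁻ ρ in I, ENNReal.ofReal (C * (‖F ρ φ‖ ^ 2 / ρ)) ≤
      (∫⁻ ρ in J, ENNReal.ofReal (E * (‖F ρ φ‖ ^ 2 / ρ))) +
        ∫⁻ ρ in I, ENNReal.ofReal (κ * (ρ * w ρ φ ^ 2)) := by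
    intro φ
    refine window_ineq (hder φ) (hF'c.comp (by fun_prop : Continuous fun ρ : ℝ => (ρ, φ)))
      (hwm.comp (by fun_prop : Measurable fun ρ : ℝ => (ρ, φ))) (fun ρ => hwb ρ φ)
      (fun ρ _ => rfl) (by positivity) (by linarith) (by positivity) ?_ ?_ hJm sdiff_subset hJv
    · rw [hC, hE]; nlinarith [sq_nonneg A]
    · exact (mul_le_of_le_one_right (sq_nonneg c) (pow_le_one₀ hA0.le hA1)).trans hcκ
  have hm1 : ∀ K : ℝ, Measurable fun p : ℝ × ℝ => ENNReal.ofReal (K * (‖F p.1 p.2‖ ^ 2 / p.1)) :=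
    fun K => by
      have := hFc.measurable
      fun_prop
  have hm2 : Measurable fun p : ℝ × ℝ => ENNReal.ofReal (κ * (p.1 * w p.1 p.2 ^ 2)) := by
    fun_prop
  have hm3 : Measurable fun p : ℝ × ℝ => ENNReal.ofReal
      (p.1 * angSq α R Ψ j k (pairConf x j k X (p.1 • dirVec p.2))) := by
    have : Measurable fun p : ℝ × ℝ => angSq α R Ψ j k (pairConf x j k X (p.1 • dirVec p.2)) :=
      (measurable_angSq hΨ α R j k).comp hpc.measurable
    fun_prop
  have hswap : ∀ (T : Set ℝ) (f : ℝ → ℝ → ENNReal), Measurable (fun p : ℝ × ℝ => f p.1 p.2) →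
      ∫⁻ φ in Ioo (-π) π, ∫⁻ ρ in T, f ρ φ = ∫⁻ ρ in T, ∫⁻ φ in Ioo (-π) π, f ρ φ :=
    fun T f hf => lintegral_lintegral_swap (f := fun φ ρ => f ρ φ)
      (hf.comp measurable_swap).aemeasurable
  calc ∫⁻ ρ in I, ∫⁻ φ in Ioo (-π) π, ENNReal.ofReal (C * (‖F ρ φ‖ ^ 2 / ρ))
      = ∫⁻ φ in Ioo (-π) π, ∫⁻ ρ in I, ENNReal.ofReal (C * (‖F ρ φ‖ ^ 2 / ρ)) :=
        (hswap I (fun ρ φ => ENNReal.ofReal (C * (‖F ρ φ‖ ^ 2 / ρ))) (hm1 C)).symm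
    _ ≤ ∫⁻ φ in Ioo (-π) π, ((∫⁻ ρ in J, ENNReal.ofReal (E * (‖F ρ φ‖ ^ 2 / ρ))) +
        ∫⁻ ρ in I, ENNReal.ofReal (κ * (ρ * w ρ φ ^ 2))) := lintegral_mono hrad
    _ = (∫⁻ ρ in J, ∫⁻ φ in Ioo (-π) π, ENNReal.ofReal (E * (‖F ρ φ‖ ^ 2 / ρ))) +
        ∫⁻ ρ in I, ∫⁻ φ in Ioo (-π) π, ENNReal.ofReal (κ * (ρ * w ρ φ ^ 2)) := by
        have hm4 : Measurable fun φ => ∫⁻ ρ in J, ENNReal.ofReal (E * (‖F ρ φ‖ ^ 2 / ρ)) :=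
          ((hm1 E).comp measurable_swap).lintegral_prod_right'
        rw [lintegral_add_left hm4,
          hswap J (fun ρ φ => ENNReal.ofReal (E * (‖F ρ φ‖ ^ 2 / ρ))) (hm1 E),
          hswap I (fun ρ φ => ENNReal.ofReal (κ * (ρ * w ρ φ ^ 2))) hm2]
    _ ≤ (∫⁻ ρ in J, ∫⁻ φ in Ioo (-π) π, ENNReal.ofReal
          (ρ * angSq α R Ψ j k (pairConf x j k X (ρ • dirVec φ)))) +
        ∫⁻ ρ in I, ∫⁻ φ in Ioo (-π) π, ENNReal.ofReal (κ * (ρ * w ρ φ ^ 2)) := by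
        refine add_le_add_left (setLIntegral_mono' hJm fun ρ hρ => ?_) _
        exact circle_step hR.le hΨ hsym x hjk X (hpos ρ hρ.1)
          (by have := hρ.1.1; linarith) (Or.inl hR) (by positivity) (hgood ρ hρ) le_rfl
    _ ≤ (∫⁻ ρ in I, ∫⁻ φ in Ioo (-π) π, ENNReal.ofReal
          (ρ * angSq α R Ψ j k (pairConf x j k X (ρ • dirVec φ)))) +
        ∫⁻ ρ in I, ∫⁻ φ in Ioo (-π) π, ENNReal.ofReal (κ * (ρ * w ρ φ ^ 2)) :=
        add_le_add_left (lintegral_mono_set sdiff_subset) _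
    _ = ∫⁻ ρ in I, ∫⁻ φ in Ioo (-π) π, ENNReal.ofReal
      (ρ * (κ * radDerAbs Ψ j k (pairConf x j k X (ρ • dirVec φ)) ^ 2 +
        angSq α R Ψ j k (pairConf x j k X (ρ • dirVec φ)))) := by
        rw [← lintegral_add_left hm3.lintegral_prod_right']
        refine setLIntegral_congr_fun measurableSet_Icc fun ρ hρ => ?_
        have h0 := hpos ρ hρ
        simp only
        have hm4 : Measurable fun φ => ENNReal.ofReal
            (ρ * angSq α R Ψ j k (pairConf x j k X (ρ • dirVec φ))) :=
          hm3.comp (by fun_prop : Measurable fun φ : ℝ => (ρ, φ))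
        rw [← lintegral_add_left hm4]
        refine lintegral_congr fun φ => ?_
        rw [hwr ρ h0, ← ENNReal.ofReal_add]
        · congr 1; ring
        · rw [angSq]; positivity
        · positivity

/-! ### The inequality in polar coordinates -/

/-- The interaction inequality in polar coordinates of the relative position, for a fixed centre
of mass `X` and fixed other particles. -/
theorem polar_ineq {α R : ℝ} (hR : 0 ≤ R) {Ψ : (Fin N → Plane) → ℂ}
    (hΨ : ContDiff ℝ (⊤ : ℕ∞) Ψ)
    (hsym : ∀ (σ : Equiv.Perm (Fin N)) (x : Fin N → Plane), Ψ (x ∘ σ) = Ψ x)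
    (x : Fin N → Plane) {j k : Fin N} (hjk : j ≠ k) (X : Plane) (δ : ℝ)
    {κ c : ℝ} (hκ0 : 0 ≤ κ) (hc1 : c ^ 2 ≤ 1)
    (hc : 0 < R → c ^ 2 ≤ 9 * κ ∧ 14 / 3 * c ^ 2 ≤ (1 / 1000) ^ 2) :
    ∫⁻ ρ in Ioo 0 δ, ∫⁻ φ in Ioo (-π) π, ENNReal.ofReal
      (ρ * (c ^ 2 * alphaN α N ^ 2 / ρ ^ 2 * (if 3 * R ≤ ρ ∧ ρ < δ - 3 * R then 1 else 0) *
        ‖Ψ (pairConf x j k X (ρ • dirVec φ))‖ ^ 2)) ≤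
    ∫⁻ ρ in Ioo 0 δ, ∫⁻ φ in Ioo (-π) π, ENNReal.ofReal
      (ρ * (κ * radDerAbs Ψ j k (pairConf x j k X (ρ • dirVec φ)) ^ 2 +
        angSq α R Ψ j k (pairConf x j k X (ρ • dirVec φ)))) := by
  set A := alphaN α N with hA
  set f : ℝ → ENNReal := fun ρ => ∫⁻ φ in Ioo (-π) π, ENNReal.ofReal
      (c ^ 2 * A ^ 2 * (‖Ψ (pairConf x j k X (ρ • dirVec φ))‖ ^ 2 / ρ)) with hf
  set g : ℝ → ENNReal := fun ρ => ∫⁻ φ in Ioo (-π) π, ENNReal.ofReal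
      (ρ * (κ * radDerAbs Ψ j k (pairConf x j k X (ρ • dirVec φ)) ^ 2 +
        angSq α R Ψ j k (pairConf x j k X (ρ • dirVec φ)))) with hg
  have hle : ∀ ρ, 0 < ρ → ∀ φ, ρ * (c ^ 2 * A ^ 2 / ρ ^ 2 *
      (if 3 * R ≤ ρ ∧ ρ < δ - 3 * R then 1 else 0) *
        ‖Ψ (pairConf x j k X (ρ • dirVec φ))‖ ^ 2) =
      if 3 * R ≤ ρ ∧ ρ < δ - 3 * R then
        c ^ 2 * A ^ 2 * (‖Ψ (pairConf x j k X (ρ • dirVec φ))‖ ^ 2 / ρ) else 0 := by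
    intro ρ hρ φ
    split_ifs
    · field_simp
    · simp
  rcases hR.eq_or_lt with rfl | hR
  · have hae : ∀ᵐ ρ : ℝ, ∀ l : Fin N, ρ ≠ ‖x l - X‖ := by
      rw [ae_all_iff]
      exact fun l => compl_mem_ae_iff.2 (measure_singleton _)
    refine lintegral_mono_ae ?_
    filter_upwards [ae_restrict_mem measurableSet_Ioo, ae_restrict_of_ae hae] with ρ hρ hne
    refine (lintegral_mono fun φ => ENNReal.ofReal_le_ofReal ?_).trans
      ((circle_step le_rfl hΨ hsym x hjk X hρ.1 (by linarith [hρ.1]) (Or.inr hne)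
        (alphaN_nonneg α N) (alphaN_le_of_zero α hjk hρ.1 _ (fun l => norm_nonneg _) hne)
        (C := c ^ 2 * A ^ 2) (mul_le_of_le_one_left (sq_nonneg _) hc1)).trans
        (lintegral_mono fun φ => ENNReal.ofReal_le_ofReal ?_))
    · have h0 := hρ.1
      rw [hle ρ h0]
      split_ifs
      · exact le_rfl
      · positivity
    · have h0 := hρ.1
      gcongr
      have := sq_nonneg (radDerAbs Ψ j k (pairConf x j k X (ρ • dirVec φ)))
      nlinarith
  obtain ⟨hc2, hc3⟩ := hc hR
  have hwin : ∀ m : ℕ, ∫⁻ ρ in Ico (3 * R) (3 * R + m * (R / 2)), f ρ ≤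
      ∫⁻ ρ in Ico (3 * R) (3 * R + m * (R / 2)), g ρ := by
    intro m
    induction m with
    | zero => simp
    | succ m ih =>
      have e : Ico (3 * R) (3 * R + (m + 1 : ℕ) * (R / 2)) =
          Ico (3 * R) (3 * R + m * (R / 2)) ∪
            Ico (3 * R + m * (R / 2)) (3 * R + m * (R / 2) + R / 2) := by
        rw [Ico_union_Ico_eq_Ico (by have : 0 ≤ (m : ℝ) * (R / 2) := by positivity
                                     linarith) (by linarith)]
        congr 1; push_cast; ring
      have hdisj : Disjoint (Ico (3 * R) (3 * R + m * (R / 2)))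
          (Ico (3 * R + m * (R / 2)) (3 * R + m * (R / 2) + R / 2)) :=
        Set.disjoint_left.2 fun t h1 h2 => absurd h1.2 (not_lt.2 h2.1)
      rw [e, lintegral_union measurableSet_Ico hdisj, lintegral_union measurableSet_Ico hdisj]
      refine add_le_add ih ?_
      rw [setLIntegral_congr Ico_ae_eq_Icc, setLIntegral_congr Ico_ae_eq_Icc]
      refine window_step hR hΨ hsym x hjk X ?_ hκ0 hc2 hc3
      have : 0 ≤ (m : ℝ) * (R / 2) := by positivity
      linarith
  by_cases hδ : δ - 3 * R ≤ 3 * R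
  · refine le_trans (le_of_eq ?_) bot_le
    refine (setLIntegral_congr_fun (g := fun _ => (0 : ENNReal)) measurableSet_Ioo
      fun ρ hρ => ?_).trans lintegral_zero
    simp only
    rw [lintegral_congr fun φ => by rw [hle ρ hρ.1, if_neg fun h => by linarith [h.1, h.2]]]
    simp
  push Not at hδ
  set m := ⌈(δ - 6 * R) / (R / 2)⌉₊
  have hm1 : δ - 3 * R ≤ 3 * R + m * (R / 2) := by
    have h : (δ - 6 * R) / (R / 2) ≤ (m : ℝ) := Nat.le_ceil _
    rw [div_le_iff₀ (by positivity)] at h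
    linarith
  -- the last window ends before `δ`, since it starts below `δ - 3R` and has length `R/2`
  have hm2 : 3 * R + m * (R / 2) < δ := by
    have h : (m : ℝ) < (δ - 6 * R) / (R / 2) + 1 :=
      Nat.ceil_lt_add_one (div_nonneg (by linarith) (by positivity))
    have h2 : (m : ℝ) * (R / 2) < ((δ - 6 * R) / (R / 2) + 1) * (R / 2) := by gcongr
    rw [add_mul, div_mul_cancel₀ _ (by positivity)] at h2
    linarith
  set W := Ico (3 * R) (3 * R + m * (R / 2))
  calc _ ≤ ∫⁻ ρ in Ioo 0 δ, W.indicator f ρ := by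
        refine setLIntegral_mono' measurableSet_Ioo fun ρ hρ => ?_
        rw [lintegral_congr fun φ => by rw [hle ρ hρ.1]]
        by_cases h : 3 * R ≤ ρ ∧ ρ < δ - 3 * R
        · rw [indicator_of_mem (show ρ ∈ W from ⟨h.1, h.2.trans_le hm1⟩)]
          simp [h, hf]
        · simp [h]
    _ ≤ ∫⁻ ρ, W.indicator f ρ := setLIntegral_le_lintegral _ _
    _ = ∫⁻ ρ in W, f ρ := lintegral_indicator measurableSet_Ico _
    _ ≤ ∫⁻ ρ in W, g ρ := hwin m
    _ ≤ ∫⁻ ρ in Ioo 0 δ, g ρ := lintegral_mono_set fun ρ hρ =>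
        ⟨lt_of_lt_of_le (by positivity) hρ.1, hρ.2.trans hm2⟩

/-! ### From the relative coordinate to the configuration space -/

theorem lintegral_plane_polar (f : Plane → ENNReal) (hf : Measurable f) :
    ∫⁻ v, f v = ∫⁻ ρ in Ioi (0 : ℝ), ∫⁻ φ in Ioo (-π) π,
      ENNReal.ofReal ρ * f (ρ • dirVec φ) := by
  have hmp : MeasurePreserving (Complex.orthonormalBasisOneI.repr) volume volume :=
    LinearIsometryEquiv.measurePreserving _
  rw [← hmp.lintegral_comp hf, ← Complex.lintegral_comp_polarCoord_symm,
    polarCoord_target, Measure.volume_eq_prod, ← Measure.prod_restrict]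
  have e : ∀ p : ℝ × ℝ, Complex.orthonormalBasisOneI.repr (Complex.polarCoord.symm p) =
      p.1 • dirVec p.2 := by
    intro p
    rw [Complex.polarCoord_symm_apply]
    apply plane_ext <;>
      simp [Complex.orthonormalBasisOneI_repr_apply, Complex.cos_ofReal_re, Complex.sin_ofReal_re]
  simp_rw [e, smul_eq_mul]
  have hc : Continuous fun p : ℝ × ℝ => p.1 • dirVec p.2 := by
    have := continuous_dirVec
    fun_prop
  have hm : Measurable fun p : ℝ × ℝ => ENNReal.ofReal p.1 * f (p.1 • dirVec p.2) :=
    (by fun_prop : Measurable fun p : ℝ × ℝ => ENNReal.ofReal p.1).mul (hf.comp hc.measurable)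
  rw [lintegral_prod _ hm.aemeasurable]

/-- Comparison of two pair integrals by comparing, for each centre of mass, the integrals over the
relative coordinate: the Jacobian of the change of variables is constant. -/
theorem lintegral_pair_mono {F G : Plane → Plane → ENNReal}
    (hF : Measurable fun p : Plane × Plane => F p.1 p.2)
    (hG : Measurable fun p : Plane × Plane => G p.1 p.2)
    (h : ∀ X, ∫⁻ r, F (X + r) (X - r) ≤ ∫⁻ r, G (X + r) (X - r)) :
    ∫⁻ a, ∫⁻ b, F a b ≤ ∫⁻ a, ∫⁻ b, G a b := by
  set q := ENNReal.ofReal |((2 : ℝ) ^ Module.finrank ℝ Plane)⁻¹| with hq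
  have hq0 : q ≠ 0 := by rw [hq]; simp
  have hqt : q ≠ ⊤ := ENNReal.ofReal_ne_top
  have key : ∀ H : Plane → Plane → ENNReal, (Measurable fun p : Plane × Plane => H p.1 p.2) →
      q * ∫⁻ a, ∫⁻ b, H a b = ∫⁻ X, ∫⁻ r, H (X + r) (X - r) := by
    intro H hH
    have hsc : ∀ f : Plane → ENNReal, Measurable f →
        q * ∫⁻ b, f b = ∫⁻ r, f ((2 : ℝ) • r) := by
      intro f hf
      have hm := lintegral_map (μ := volume) hf
        (measurable_const_smul (2 : ℝ) : Measurable fun r : Plane => (2 : ℝ) • r)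
      rw [← hm, Measure.map_addHaar_smul _ two_ne_zero, lintegral_smul_measure, smul_eq_mul]
    have hmi : Measurable fun a => ∫⁻ b, H a b := hH.lintegral_prod_right'
    have m2 : Measurable fun p : Plane × Plane => H p.1 (p.1 - (2 : ℝ) • p.2) :=
      hH.comp (by fun_prop : Measurable fun p : Plane × Plane => (p.1, p.1 - (2 : ℝ) • p.2))
    have m3 : Measurable fun p : Plane × Plane => H (p.2 + p.1) (p.2 - p.1) :=
      hH.comp (by fun_prop : Measurable fun p : Plane × Plane => (p.2 + p.1, p.2 - p.1))
    calc q * ∫⁻ a, ∫⁻ b, H a b = ∫⁻ a, q * ∫⁻ b, H a b := (lintegral_const_mul _ hmi).symm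
      _ = ∫⁻ a, ∫⁻ r, H a (a - (2 : ℝ) • r) := by
          refine lintegral_congr fun a => ?_
          have m1 : Measurable fun b => H a (a - b) :=
            hH.comp (by fun_prop : Measurable fun b : Plane => (a, a - b))
          rw [← lintegral_sub_left_eq_self _ a, hsc _ m1]
      _ = ∫⁻ r, ∫⁻ a, H a (a - (2 : ℝ) • r) := lintegral_lintegral_swap m2.aemeasurable
      _ = ∫⁻ r, ∫⁻ X, H (X + r) (X - r) := by
          refine lintegral_congr fun r => ?_
          rw [← lintegral_add_right_eq_self _ r]
          refine lintegral_congr fun X => ?_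
          congr 1
          module
      _ = ∫⁻ X, ∫⁻ r, H (X + r) (X - r) := lintegral_lintegral_swap m3.aemeasurable
  have : q * ∫⁻ a, ∫⁻ b, F a b ≤ q * ∫⁻ a, ∫⁻ b, G a b := by
    rw [key F hF, key G hG]
    exact lintegral_mono h
  exact (ENNReal.mul_le_mul_iff_right hq0 hqt).1 this

/-- A ball about a point of `Ω` that does not reach the boundary of `Ω` stays in `Ω`. -/
theorem mem_of_norm_lt_infDist {Ω : Set Plane} {X r : Plane} (hX : X ∈ Ω)
    (hr : ‖r‖ < Metric.infDist X (frontier Ω)) : X + r ∈ Ω := by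
  by_contra hn
  have hpos : 0 < Metric.infDist X (frontier Ω) := (norm_nonneg r).trans_lt hr
  have hpre : IsPreconnected (Metric.ball X (Metric.infDist X (frontier Ω))) :=
    (convex_ball _ _).isPreconnected
  have hfr : ∀ y ∈ Metric.ball X (Metric.infDist X (frontier Ω)), y ∉ frontier Ω := fun y hy hf =>
    absurd (Metric.infDist_le_dist_of_mem hf) (not_le.2 (by rw [dist_comm]; exact hy))
  have hmX : X ∈ Metric.ball X (Metric.infDist X (frontier Ω)) := Metric.mem_ball_self hpos
  have hmr : X + r ∈ Metric.ball X (Metric.infDist X (frontier Ω)) := by simpa using hr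
  obtain ⟨y, -, hy1, hy2⟩ := hpre (interior Ω) (closure Ω)ᶜ isOpen_interior
    isClosed_closure.isOpen_compl
    (fun y hy => by
      by_cases hi : y ∈ interior Ω
      · exact Or.inl hi
      · exact Or.inr fun hcl => hfr y hy ⟨hcl, hi⟩)
    ⟨X, hmX, by
      by_contra hi
      exact hfr X hmX ⟨subset_closure hX, hi⟩⟩
    ⟨X + r, hmr, fun hcl => hfr _ hmr ⟨hcl, fun hi => hn (interior_subset hi)⟩⟩
  exact hy2 (subset_closure (interior_subset hy1))

/-- The long-range interaction potential of the pair `j, k` times `|Ψ|²`. -/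
def pairPot (Ω : Set Plane) (α R c : ℝ) (Ψ : (Fin N → Plane) → ℂ) (j k : Fin N)
    (x : Fin N → Plane) : ℝ :=
  c ^ 2 * alphaN α N ^ 2 / relLen x j k ^ 2 * annulusInd Ω R x j k * ‖Ψ x‖ ^ 2

theorem pairPot_nonneg (Ω : Set Plane) (α R c : ℝ) (Ψ : (Fin N → Plane) → ℂ) (j k : Fin N)
    (x : Fin N → Plane) : 0 ≤ pairPot Ω α R c Ψ j k x := by
  unfold pairPot annulusInd
  split_ifs <;> positivity

theorem measurable_pairPot (Ω : Set Plane) (α R c : ℝ) {Ψ : (Fin N → Plane) → ℂ}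
    (hΨ : Continuous Ψ) (j k : Fin N) : Measurable (pairPot Ω α R c Ψ j k) := by
  have h1 : Measurable fun x : Fin N → Plane => relLen x j k := by unfold relLen; fun_prop
  have h2 : Measurable fun x : Fin N → Plane =>
      Metric.infDist (comXY x j k) (frontier Ω) - 3 * R := by
    have : Continuous fun x : Fin N → Plane => comXY x j k := by unfold comXY; fun_prop
    exact (((Metric.continuous_infDist_pt _).comp this).sub continuous_const).measurable
  have h3 : Measurable fun x : Fin N → Plane => annulusInd Ω R x j k := by
    unfold annulusInd
    exact Measurable.ite ((measurableSet_le measurable_const h1).inter (measurableSet_lt h1 h2))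
      measurable_const measurable_const
  have h4 := hΨ.measurable
  unfold pairPot
  fun_prop

/-- The part of the radial and angular energy of the pair `j, k` that controls `pairPot`. -/
def pairKin (α R κ : ℝ) (Ψ : (Fin N → Plane) → ℂ) (j k : Fin N) (x : Fin N → Plane) : ℝ :=
  κ * radDerAbs Ψ j k x ^ 2 + angSq α R Ψ j k x

theorem measurable_pairKin (α R κ : ℝ) {Ψ : (Fin N → Plane) → ℂ}
    (hΨ : ContDiff ℝ (⊤ : ℕ∞) Ψ) (j k : Fin N) : Measurable (pairKin α R κ Ψ j k) :=
  (((measurable_radDerAbs hΨ j k).pow_const 2).const_mul κ).add (measurable_angSq hΨ α R j k)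

/-- The interaction inequality for the relative coordinate in a disk of radius `δ(X)`, for a fixed
centre of mass `X` and fixed other particles. -/
theorem relative_ineq {α R : ℝ} (hR : 0 ≤ R) {Ψ : (Fin N → Plane) → ℂ}
    (hΨ : ContDiff ℝ (⊤ : ℕ∞) Ψ)
    (hsym : ∀ (σ : Equiv.Perm (Fin N)) (x : Fin N → Plane), Ψ (x ∘ σ) = Ψ x)
    (x : Fin N → Plane) {j k : Fin N} (hjk : j ≠ k) (Ω : Set Plane) (X : Plane)
    {κ c : ℝ} (hκ0 : 0 ≤ κ) (hc1 : c ^ 2 ≤ 1)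
    (hc : 0 < R → c ^ 2 ≤ 9 * κ ∧ 14 / 3 * c ^ 2 ≤ (1 / 1000) ^ 2) :
    ∫⁻ r, {r | ‖r‖ < Metric.infDist X (frontier Ω)}.indicator
      (fun r => ENNReal.ofReal (pairPot Ω α R c Ψ j k (pairConf x j k X r))) r ≤
    ∫⁻ r, {r | ‖r‖ < Metric.infDist X (frontier Ω)}.indicator
      (fun r => ENNReal.ofReal (pairKin α R κ Ψ j k (pairConf x j k X r))) r := by
  set δ := Metric.infDist X (frontier Ω) with hδ
  have hpc : Continuous fun r => pairConf x j k X r := by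
    unfold pairConf
    have h1 : Continuous fun r : Plane => X + r := by fun_prop
    have h2 : Continuous fun r : Plane => X - r := by fun_prop
    exact (continuous_const.update j h1).update k h2
  have hms : MeasurableSet {r : Plane | ‖r‖ < δ} :=
    measurableSet_lt measurable_norm measurable_const
  have key : ∀ f : (Fin N → Plane) → ℝ, Measurable f →
      ∫⁻ r, {r | ‖r‖ < δ}.indicator (fun r => ENNReal.ofReal (f (pairConf x j k X r))) r =
      ∫⁻ ρ in Ioo 0 δ, ∫⁻ φ in Ioo (-π) π,
        ENNReal.ofReal (ρ * f (pairConf x j k X (ρ • dirVec φ))) := by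
    intro f hf
    have hfm : Measurable fun r => ENNReal.ofReal (f (pairConf x j k X r)) :=
      (hf.comp hpc.measurable).ennreal_ofReal
    rw [lintegral_plane_polar _ (hfm.indicator hms),
      show Ioo 0 δ = Iio δ ∩ Ioi 0 by rw [inter_comm]; rfl,
      ← setLIntegral_indicator measurableSet_Iio]
    refine setLIntegral_congr_fun measurableSet_Ioi fun ρ (hρ : 0 < ρ) => ?_
    have hn : ∀ φ, ‖ρ • dirVec φ‖ = ρ := fun φ => by
      rw [norm_smul, norm_dirVec, mul_one, Real.norm_of_nonneg hρ.le]
    by_cases h : ρ < δ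
    · rw [indicator_of_mem (show ρ ∈ Iio δ from h)]
      refine lintegral_congr fun φ => ?_
      rw [indicator_of_mem (by simpa [hn] using h), ENNReal.ofReal_mul hρ.le]
    · rw [indicator_of_notMem (show ρ ∉ Iio δ from h)]
      refine (lintegral_congr fun φ => ?_).trans lintegral_zero
      rw [indicator_of_notMem (by simpa [hn] using h), mul_zero]
  rw [key _ (measurable_pairPot Ω α R c hΨ.continuous j k), key _ (measurable_pairKin α R κ hΨ j k)]
  convert! polar_ineq hR hΨ hsym x hjk X δ hκ0 hc1 hc using 1
  refine setLIntegral_congr_fun measurableSet_Ioo fun ρ hρ => ?_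
  refine lintegral_congr fun φ => ?_
  rw [pairPot, annulusInd, relLen_pairConf hjk, comXY_pairConf hjk, norm_smul, norm_dirVec, mul_one,
    Real.norm_of_nonneg hρ.1.le]

/-! ### Integration over the remaining coordinates -/

theorem continuous_ext {n : ℕ} {z : Fin N → Plane} {ext : (Fin n → Plane) → Fin N → Plane}
    (hext : ∀ (y : Fin n → Plane) (j : Fin N),
      ext y j = if h : (j : ℕ) < n then y ⟨j, h⟩ else z j) : Continuous ext := by
  refine continuous_pi fun j => ?_
  simp_rw [hext]
  split_ifs with h
  · exact continuous_apply _
  · exact continuous_const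

theorem ext_castLE {n : ℕ} (hnN : n ≤ N) {z : Fin N → Plane}
    {ext : (Fin n → Plane) → Fin N → Plane}
    (hext : ∀ (y : Fin n → Plane) (j : Fin N),
      ext y j = if h : (j : ℕ) < n then y ⟨j, h⟩ else z j) (y : Fin n → Plane) (j : Fin n) :
    ext y (Fin.castLE hnN j) = y j := by
  rw [hext]; simp

theorem ext_update {n : ℕ} (hnN : n ≤ N) {z : Fin N → Plane}
    {ext : (Fin n → Plane) → Fin N → Plane}
    (hext : ∀ (y : Fin n → Plane) (j : Fin N),
      ext y j = if h : (j : ℕ) < n then y ⟨j, h⟩ else z j) (y : Fin n → Plane) (j : Fin n)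
    (a : Plane) :
    ext (Function.update y j a) = Function.update (ext y) (Fin.castLE hnN j) a := by
  funext l
  by_cases hl : (l : ℕ) < n
  · by_cases h : l = Fin.castLE hnN j
    · subst h; rw [ext_castLE hnN hext]; simp
    · rw [Function.update_of_ne h, hext, hext, dif_pos hl, dif_pos hl, Function.update_of_ne]
      rintro rfl
      exact h rfl
  · have h : l ≠ Fin.castLE hnN j := by
      rintro rfl
      exact hl j.2
    rw [Function.update_of_ne h, hext, hext, dif_neg hl, dif_neg hl]

/-- The pair inequality on `Ω^n`. By Fubini the positions of particles `j` and `k` are integrated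
first. Dropping from the right side the positions with `r` outside the disk of radius `δ(X)` costs
nothing, and inside that disk both particles lie in `Ω` by `mem_of_norm_lt_infDist`; on the left side
the indicator of the annulus confines `r` to the disk, and convexity puts the centre of mass in
`Ω`. -/
theorem pair_lintegral {α R : ℝ} (hR : 0 ≤ R) {n : ℕ} (hnN : n ≤ N) {Ω : Set Plane}
    (hΩopen : IsOpen Ω) (hΩconv : Convex ℝ Ω)
    {Ψ : (Fin N → Plane) → ℂ} (hΨ : ContDiff ℝ (⊤ : ℕ∞) Ψ)
    (hsym : ∀ (σ : Equiv.Perm (Fin N)) (x : Fin N → Plane), Ψ (x ∘ σ) = Ψ x)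
    {z : Fin N → Plane} {ext : (Fin n → Plane) → Fin N → Plane}
    (hext : ∀ (y : Fin n → Plane) (j : Fin N),
      ext y j = if h : (j : ℕ) < n then y ⟨j, h⟩ else z j)
    {j k : Fin n} (hjk : j ≠ k)
    {κ c : ℝ} (hκ0 : 0 ≤ κ) (hc1 : c ^ 2 ≤ 1)
    (hc : 0 < R → c ^ 2 ≤ 9 * κ ∧ 14 / 3 * c ^ 2 ≤ (1 / 1000) ^ 2) :
    ∫⁻ y in Set.univ.pi fun _ : Fin n => Ω, ENNReal.ofReal
      (pairPot Ω α R c Ψ (Fin.castLE hnN j) (Fin.castLE hnN k) (ext y)) ≤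
    ∫⁻ y in Set.univ.pi fun _ : Fin n => Ω, ENNReal.ofReal
      (pairKin α R κ Ψ (Fin.castLE hnN j) (Fin.castLE hnN k) (ext y)) := by
  classical
  set J := Fin.castLE hnN j with hJ
  set K := Fin.castLE hnN k with hK
  have hJK : J ≠ K := fun h => hjk (Fin.castLE_injective hnN h)
  set S := Set.univ.pi fun _ : Fin n => Ω with hS
  have hSm : MeasurableSet S := (isOpen_set_pi finite_univ fun _ _ => hΩopen).measurableSet
  have hem : Measurable ext := (continuous_ext hext).measurable
  have hVm : Measurable fun y => ENNReal.ofReal (pairPot Ω α R c Ψ J K (ext y)) :=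
    ((measurable_pairPot Ω α R c hΨ.continuous J K).comp hem).ennreal_ofReal
  have hKm : Measurable fun y => ENNReal.ofReal (pairKin α R κ Ψ J K (ext y)) :=
    ((measurable_pairKin α R κ hΨ J K).comp hem).ennreal_ofReal
  rw [← lintegral_indicator hSm, ← lintegral_indicator hSm, volume_pi]
  have hVi := hVm.indicator hSm
  have hKi := hKm.indicator hSm
  refine lintegral_le_of_lmarginal_le {j, k} hVi hKi fun y => ?_
  have hnot : j ∉ ({k} : Finset (Fin n)) := by simpa using hjk
  rw [lmarginal_insert _ hVi hnot, lmarginal_insert _ hKi hnot]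
  simp_rw [lmarginal_singleton]
  have hup : Continuous fun p : Plane × Plane =>
      Function.update (Function.update y j p.1) k p.2 := by
    have h1 : Continuous fun p : Plane × Plane => p.1 := continuous_fst
    have h2 : Continuous fun p : Plane × Plane => p.2 := continuous_snd
    exact (continuous_const.update j h1).update k h2
  refine lintegral_pair_mono (hVi.comp hup.measurable) (hKi.comp hup.measurable) fun X => ?_
  have hconf : ∀ r, ext (Function.update (Function.update y j (X + r)) k (X - r)) =
      pairConf (ext y) J K X r := fun r => by
    rw [ext_update hnN hext, ext_update hnN hext]; rfl
  have hmem : ∀ r, Function.update (Function.update y j (X + r)) k (X - r) ∈ S ↔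
      (∀ i, i ≠ j → i ≠ k → y i ∈ Ω) ∧ X + r ∈ Ω ∧ X - r ∈ Ω := by
    intro r
    simp only [hS, mem_univ_pi]
    constructor
    · intro h
      refine ⟨fun i hij hik => ?_, ?_, ?_⟩
      · simpa [hij, hik] using h i
      · simpa [hjk] using h j
      · simpa using h k
    · rintro ⟨h1, h2, h3⟩ i
      by_cases hik : i = k
      · subst hik; simpa using h3
      by_cases hij : i = j
      · subst hij; simpa [hik] using h2
      · simpa [hij, hik] using h1 i hij hik
  by_cases hcase : (∀ i, i ≠ j → i ≠ k → y i ∈ Ω) ∧ X ∈ Ω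
  · obtain ⟨hrest, hX⟩ := hcase
    refine le_trans ?_ ((relative_ineq (α := α) hR hΨ hsym (ext y) hJK Ω X hκ0 hc1 hc).trans ?_)
    · refine lintegral_mono fun r => ?_
      by_cases hr : ‖r‖ < Metric.infDist X (frontier Ω)
      · rw [indicator_of_mem (show r ∈ {r : Plane | ‖r‖ < Metric.infDist X (frontier Ω)} from hr),
          ← hconf r]
        exact indicator_le_self _ _ _
      · have h0 : ENNReal.ofReal (pairPot Ω α R c Ψ J K (pairConf (ext y) J K X r)) = 0 := by
          rw [pairPot, annulusInd, relLen_pairConf hJK, comXY_pairConf hJK, if_neg]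
          · simp
          · rintro ⟨-, h⟩
            exact hr (by linarith)
        refine (indicator_le_self _ _ _).trans ?_
        rw [hconf r, h0]
        exact bot_le
    · refine lintegral_mono fun r => ?_
      by_cases hr : ‖r‖ < Metric.infDist X (frontier Ω)
      · have hr' : ‖-r‖ < Metric.infDist X (frontier Ω) := by rwa [norm_neg]
        rw [indicator_of_mem (show r ∈ {r : Plane | ‖r‖ < Metric.infDist X (frontier Ω)} from hr),
          indicator_of_mem ((hmem r).2 ⟨hrest, mem_of_norm_lt_infDist hX hr,
            by simpa [sub_eq_add_neg] using mem_of_norm_lt_infDist hX hr'⟩), hconf r]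
      · rw [indicator_of_notMem
          (show r ∉ {r : Plane | ‖r‖ < Metric.infDist X (frontier Ω)} from hr)]
        exact bot_le
  · refine (lintegral_congr fun r => ?_).trans_le (lintegral_zero.trans_le bot_le)
    refine indicator_of_notMem (fun h => hcase ?_) _
    obtain ⟨h1, h2, h3⟩ := (hmem r).1 h
    refine ⟨h1, ?_⟩
    have := hΩconv h2 h3 (by norm_num : (0 : ℝ) ≤ 1 / 2) (by norm_num : (0 : ℝ) ≤ 1 / 2)
      (by norm_num)
    convert! this using 1
    module

/-! ### Continuity, algebra and constants -/

theorem continuousAt_magA (R : ℝ) (j : Fin N) {x : Fin N → Plane}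
    (hx : ∀ k, k ≠ j → x j ≠ x k) :
    ContinuousAt (fun x : Fin N → Plane => magA R x j (x j)) x := by
  unfold magA
  refine tendsto_finsetSum _ fun k hk => ?_
  have h1 : ContinuousAt (fun x : Fin N → Plane => ((max ‖x j - x k‖ R) ^ 2)⁻¹) x := by
    refine ContinuousAt.inv₀ (by fun_prop) ?_
    have : 0 < ‖x j - x k‖ := norm_pos_iff.2 (sub_ne_zero.2 (hx k (Finset.ne_of_mem_erase hk)))
    have : 0 < max ‖x j - x k‖ R := this.trans_le (le_max_left _ _)
    positivity
  have h2 : ContinuousAt (fun x : Fin N → Plane => perp (x j - x k)) x :=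
    (continuous_perp.comp ((continuous_apply j).sub (continuous_apply k))).continuousAt
  exact h1.smul h2

theorem covDer_eq_zero {Ψ : (Fin N → Plane) → ℂ} (α R : ℝ) (j : Fin N) (i : Fin 2)
    {x : Fin N → Plane} (hx : x ∉ tsupport Ψ) : covDer α R Ψ j x i = 0 := by
  have h1 : fderiv ℝ Ψ x = 0 := by
    by_contra h
    exact hx (support_fderiv_subset ℝ h)
  rw [covDer, h1, image_eq_zero_of_notMem_tsupport hx]
  simp

/-- The potential is singular only on the fat diagonal (for `R = 0`), which the support of `Ψ` avoids. -/
theorem continuous_covDer {Ψ : (Fin N → Plane) → ℂ} (hΨ : ContDiff ℝ (⊤ : ℕ∞) Ψ)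
    (hdiag : ∀ x ∈ tsupport Ψ, ∀ j k : Fin N, j ≠ k → x j ≠ x k) (α R : ℝ)
    (j : Fin N) (i : Fin 2) : Continuous fun x => covDer α R Ψ j x i := by
  refine continuous_iff_continuousAt.2 fun x => ?_
  by_cases hx : x ∈ tsupport Ψ
  · unfold covDer
    have h1 := hΨ.continuous_fderiv (by simp)
    have h2 : Continuous fun x => fderiv ℝ Ψ x (Pi.single j (EuclideanSpace.single i (1:ℝ))) :=
      h1.clm_apply continuous_const
    have h3 : ContinuousAt (fun x : Fin N → Plane => magA R x j (x j) i) x :=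
      (EuclideanSpace.proj (𝕜 := ℝ) i : Plane →L[ℝ] ℝ).continuous.continuousAt.comp
        (continuousAt_magA R j fun k hk => hdiag x hx j k hk.symm)
    have h4 : ContinuousAt (fun x : Fin N → Plane => ((magA R x j (x j) i : ℝ) : ℂ)) x :=
      Complex.continuous_ofReal.continuousAt.comp h3
    exact (continuousAt_const.mul h2.continuousAt).add
      ((continuousAt_const.mul h4).mul hΨ.continuous.continuousAt)
  · have : (fun x => covDer α R Ψ j x i) =ᶠ[nhds x] fun _ => 0 := by
      filter_upwards [(isClosed_tsupport Ψ).isOpen_compl.mem_nhds hx] with w hw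
      exact covDer_eq_zero α R j i hw
    exact continuousAt_const.congr this.symm

/-- Lagrange's identity for `n` complex numbers. -/
theorem lagrange_identity {n : ℕ} (hn : 1 ≤ n) (w : Fin n → ℂ) :
    ∑ j, ‖w j‖ ^ 2 = (n : ℝ)⁻¹ * ‖∑ j, w j‖ ^ 2 +
      (n : ℝ)⁻¹ * ∑ j, ∑ k ∈ Finset.Ioi j, ‖w j - w k‖ ^ 2 := by
  have h2 : ∑ j, ∑ k, ‖w j - w k‖ ^ 2 = 2 * ∑ j, ∑ k ∈ Finset.Ioi j, ‖w j - w k‖ ^ 2 := by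
    have h := Finset.sum_sum_Ioi_add_eq_sum_sum_off_diag fun a b : Fin n => ‖w a - w b‖ ^ 2
    rw [Finset.mul_sum]
    simp_rw [Finset.mul_sum]
    calc ∑ j, ∑ k, ‖w j - w k‖ ^ 2 = ∑ j, ∑ k ∈ {j}ᶜ, ‖w k - w j‖ ^ 2 := by
          refine Finset.sum_congr rfl fun j _ => ?_
          rw [← Finset.sum_compl_add_sum {j}]
          simp [norm_sub_rev]
      _ = _ := by
          rw [← h]
          refine Finset.sum_congr rfl fun j _ => Finset.sum_congr rfl fun k _ => ?_
          rw [norm_sub_rev (w k)]; ring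
  have h3 : ∑ j, ∑ k, ‖w j - w k‖ ^ 2 = 2 * n * ∑ j, ‖w j‖ ^ 2 - 2 * ‖∑ j, w j‖ ^ 2 := by
    have e : ∀ a b : ℂ, ‖a - b‖ ^ 2 = ‖a‖ ^ 2 + ‖b‖ ^ 2 - 2 * (a.re * b.re + a.im * b.im) := by
      intro a b
      simp only [← Complex.normSq_eq_norm_sq, Complex.normSq_apply, Complex.sub_re, Complex.sub_im]
      ring
    have e2 : ‖∑ j, w j‖ ^ 2 =
        (∑ j, (w j).re) * (∑ j, (w j).re) + (∑ j, (w j).im) * ∑ j, (w j).im := by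
      rw [← Complex.normSq_eq_norm_sq, Complex.normSq_apply, Complex.re_sum, Complex.im_sum]
    rw [e2]
    simp_rw [e, Finset.sum_sub_distrib, ← Finset.mul_sum, Finset.sum_add_distrib, ← Finset.mul_sum,
      ← Finset.sum_mul, Finset.sum_const, Finset.card_univ, Fintype.card_fin, nsmul_eq_mul,
      ← Finset.mul_sum]
    ring
  have hn' : (n : ℝ) ≠ 0 := by positivity
  field_simp
  linarith

/-- The two numerical requirements on the coupling constant: `c² ≤ 9κ` pays for the radial transport,
and `14/3 c² ≤ (1/1000)²` for the angular gap on the good part of a window. -/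
theorem const_bounds {R κ c : ℝ} (hκ : 0 ≤ κ ∧ κ < 1)
    (hc : c = 4.7e-4 * κ / (1 + 2 * κ) ∨ (R = 0 ∧ c = 1 ∧ κ = 0)) :
    c ^ 2 ≤ 1 ∧ (0 < R → c ^ 2 ≤ 9 * κ ∧ 14 / 3 * c ^ 2 ≤ (1 / 1000) ^ 2) := by
  rcases hc with hc | ⟨h1, h2, -⟩
  · obtain ⟨h0, h1⟩ := hκ
    have hp : 0 < 1 + 2 * κ := by linarith
    have hc0 : 0 ≤ c := by rw [hc]; positivity
    have hcκ : c ≤ κ := by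
      rw [hc, div_le_iff₀ hp]; norm_num; nlinarith
    have hc3 : c ≤ 4.7e-4 / 3 := by
      rw [hc, div_le_iff₀ hp]; norm_num; nlinarith
    norm_num at hc3
    refine ⟨by nlinarith, fun _ => ⟨by nlinarith, by nlinarith⟩⟩
  · subst h2
    exact ⟨by norm_num, fun h => absurd h1 h.ne'⟩

/-! ### The interaction inequality -/

theorem pairKin_nonneg {α R κ : ℝ} (hκ : 0 ≤ κ) (Ψ : (Fin N → Plane) → ℂ) (j k : Fin N)
    (x : Fin N → Plane) : 0 ≤ pairKin α R κ Ψ j k x := by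
  unfold pairKin angSq; positivity

/-- The pair inequality for Bochner integrals, with the radial energy split into the shares `1 - κ`
and `κ`. -/
theorem integral_pair_le {α R : ℝ} (hR : 0 ≤ R) {n : ℕ} (hnN : n ≤ N) {Ω : Set Plane}
    (hΩopen : IsOpen Ω) (hΩconv : Convex ℝ Ω)
    {Ψ : (Fin N → Plane) → ℂ} (hΨ : ContDiff ℝ (⊤ : ℕ∞) Ψ)
    (hsym : ∀ (σ : Equiv.Perm (Fin N)) (x : Fin N → Plane), Ψ (x ∘ σ) = Ψ x)
    {z : Fin N → Plane} {ext : (Fin n → Plane) → Fin N → Plane}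
    (hext : ∀ (y : Fin n → Plane) (j : Fin N),
      ext y j = if h : (j : ℕ) < n then y ⟨j, h⟩ else z j)
    {j k : Fin n} (hjk : j ≠ k)
    {κ c : ℝ} (hκ : 0 ≤ κ ∧ κ < 1) (hc1 : c ^ 2 ≤ 1)
    (hc : 0 < R → c ^ 2 ≤ 9 * κ ∧ 14 / 3 * c ^ 2 ≤ (1 / 1000) ^ 2)
    (hInt : IntegrableOn (fun y => ∑ i : Fin 2, ‖covDer α R Ψ (Fin.castLE hnN j) (ext y) i -
      covDer α R Ψ (Fin.castLE hnN k) (ext y) i‖ ^ 2) (Set.univ.pi fun _ : Fin n => Ω)) :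
    ∫ y in Set.univ.pi fun _ : Fin n => Ω,
      ((1 - κ) * radDerAbs Ψ (Fin.castLE hnN j) (Fin.castLE hnN k) (ext y) ^ 2
        + pairPot Ω α R c Ψ (Fin.castLE hnN j) (Fin.castLE hnN k) (ext y)) ≤
    ∫ y in Set.univ.pi fun _ : Fin n => Ω,
      ∑ i : Fin 2, ‖covDer α R Ψ (Fin.castLE hnN j) (ext y) i -
        covDer α R Ψ (Fin.castLE hnN k) (ext y) i‖ ^ 2 := by
  have hlin := pair_lintegral (α := α) hR hnN hΩopen hΩconv hΨ hsym hext hjk hκ.1 hc1 hc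
  set J := Fin.castLE hnN j
  set K := Fin.castLE hnN k
  set S := Set.univ.pi fun _ : Fin n => Ω
  have hem : Measurable ext := (continuous_ext hext).measurable
  have hZ : ∀ y, radDerAbs Ψ J K (ext y) ^ 2 + angSq α R Ψ J K (ext y) ≤
      ∑ i : Fin 2, ‖covDer α R Ψ J (ext y) i - covDer α R Ψ K (ext y) i‖ ^ 2 := fun y =>
    radDerAbs_sq_add_angSq_le (hΨ.differentiable (by simp)) α R J K (ext y)
  have hang : ∀ y, 0 ≤ angSq α R Ψ J K (ext y) := fun y => by unfold angSq; positivity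
  have hWi : IntegrableOn (fun y => radDerAbs Ψ J K (ext y) ^ 2) S := by
    refine hInt.mono' (((measurable_radDerAbs hΨ J K).comp hem).pow_const 2).aestronglyMeasurable
      (ae_of_all _ fun y => ?_)
    rw [Real.norm_of_nonneg (sq_nonneg _)]
    linarith [hZ y, hang y]
  have hKi : IntegrableOn (fun y => pairKin α R κ Ψ J K (ext y)) S := by
    refine hInt.mono' ((measurable_pairKin α R κ hΨ J K).comp hem).aestronglyMeasurable
      (ae_of_all _ fun y => ?_)
    rw [Real.norm_of_nonneg (pairKin_nonneg hκ.1 Ψ J K _), pairKin]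
    nlinarith [hZ y, sq_nonneg (radDerAbs Ψ J K (ext y)), hκ.2]
  have hK0 : 0 ≤ᵐ[volume.restrict S] fun y => pairKin α R κ Ψ J K (ext y) :=
    ae_of_all _ fun y => pairKin_nonneg hκ.1 Ψ J K _
  have hV0 : 0 ≤ᵐ[volume.restrict S] fun y => pairPot Ω α R c Ψ J K (ext y) :=
    ae_of_all _ fun y => pairPot_nonneg Ω α R c Ψ J K _
  rw [← ofReal_integral_eq_lintegral_ofReal hKi hK0] at hlin
  have hVi : IntegrableOn (fun y => pairPot Ω α R c Ψ J K (ext y)) S := by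
    refine ⟨((measurable_pairPot Ω α R c hΨ.continuous J K).comp hem).aestronglyMeasurable, ?_⟩
    rw [hasFiniteIntegral_iff_ofReal hV0]
    exact hlin.trans_lt ENNReal.ofReal_lt_top
  rw [← ofReal_integral_eq_lintegral_ofReal hVi hV0,
    ENNReal.ofReal_le_ofReal_iff (integral_nonneg_of_ae hK0)] at hlin
  calc ∫ y in S, ((1 - κ) * radDerAbs Ψ J K (ext y) ^ 2 + pairPot Ω α R c Ψ J K (ext y))
      = (∫ y in S, (1 - κ) * radDerAbs Ψ J K (ext y) ^ 2) +
        ∫ y in S, pairPot Ω α R c Ψ J K (ext y) := integral_add (hWi.const_mul _) hVi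
    _ ≤ (∫ y in S, (1 - κ) * radDerAbs Ψ J K (ext y) ^ 2) +
        ∫ y in S, pairKin α R κ Ψ J K (ext y) := by gcongr
    _ = ∫ y in S, ((1 - κ) * radDerAbs Ψ J K (ext y) ^ 2 + pairKin α R κ Ψ J K (ext y)) :=
        (integral_add (hWi.const_mul _) hKi).symm
    _ ≤ _ := by
        refine integral_mono ((hWi.const_mul _).add hKi) hInt fun y => ?_
        refine le_trans (le_of_eq ?_) (hZ y)
        simp only [pairKin]
        ring

theorem integrable_normSq_sum {n : ℕ} {D : Fin 2 → (Fin n → Plane) → ℂ}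
    (hc : ∀ i, Continuous (D i)) (hs : ∀ i, HasCompactSupport (D i)) (S : Set (Fin n → Plane)) :
    IntegrableOn (fun y => ∑ i, ‖D i y‖ ^ 2) S := by
  refine (integrable_finsetSum _ fun i _ => ?_).integrableOn
  refine Continuous.integrable_of_hasCompactSupport ((hc i).norm.pow 2) ?_
  exact (hs i).comp_left (g := fun w : ℂ => ‖w‖ ^ 2) (by simp)

end

/-- **Long-range magnetic interaction** (Theorem 1.3, first inequality).  For `α ∈ ℝ`,
`R ≥ 0`, `N ≥ n ≥ 1`, `Ω ⊆ ℝ²` open and convex, `κ ∈ [0,1)` and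
`c = 4.7·10⁻⁴ κ/(1+2κ)` (or `c = 1`, `κ = 0` in the ideal case `R = 0`), every smooth
compactly supported symmetric `Ψ` vanishing near the fat diagonal, and every fixed
configuration `z` of the last `N - n` particles (`ext y` places the first `n` particles
at `y ∈ Ω^n` and the remaining ones at `z`):
`Σ_{j=1}^n ∫_{Ω^n} |D_jΨ|² ≥ (1/n) ∫_{Ω^n} |Σ_j D_jΨ|²
  + (1/n) Σ_{j<k} ∫_{Ω^n} ((1-κ)|∂_{r_jk}|Ψ||² + c² α_N² r_jk⁻² 1_A |Ψ|²)`. -/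
theorem long_range_magnetic_interaction
    (α R : ℝ) (hR : 0 ≤ R) (N n : ℕ) (hn : 1 ≤ n) (hnN : n ≤ N)
    (Ω : Set Plane) (hΩopen : IsOpen Ω) (hΩconv : Convex ℝ Ω)
    (κ c : ℝ) (hκ : 0 ≤ κ ∧ κ < 1)
    (hc : c = 4.7e-4 * κ / (1 + 2 * κ) ∨ (R = 0 ∧ c = 1 ∧ κ = 0))
    (Ψ : (Fin N → Plane) → ℂ)
    (hsmooth : ContDiff ℝ (⊤ : ℕ∞) Ψ) (hsupp : HasCompactSupport Ψ)
    (hdiag : ∀ x ∈ tsupport Ψ, ∀ j k : Fin N, j ≠ k → x j ≠ x k)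
    (hsym : ∀ (σ : Equiv.Perm (Fin N)) (x : Fin N → Plane), Ψ (x ∘ σ) = Ψ x)
    (z : Fin N → Plane)
    (ext : (Fin n → Plane) → Fin N → Plane)
    (hext : ∀ (y : Fin n → Plane) (j : Fin N),
      ext y j = if h : (j : ℕ) < n then y ⟨j, h⟩ else z j) :
    (n : ℝ)⁻¹ * (∫ y in Set.univ.pi fun _ : Fin n => Ω,
        ∑ i : Fin 2, ‖∑ j : Fin n, covDer α R Ψ (Fin.castLE hnN j) (ext y) i‖ ^ 2)
    + (n : ℝ)⁻¹ * ∑ j : Fin n, ∑ k ∈ Finset.Ioi j,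
        ∫ y in Set.univ.pi fun _ : Fin n => Ω,
          ((1 - κ) * radDerAbs Ψ (Fin.castLE hnN j) (Fin.castLE hnN k) (ext y) ^ 2
            + c ^ 2 * alphaN α N ^ 2
              / relLen (ext y) (Fin.castLE hnN j) (Fin.castLE hnN k) ^ 2
              * annulusInd Ω R (ext y) (Fin.castLE hnN j) (Fin.castLE hnN k)
              * ‖Ψ (ext y)‖ ^ 2)
    ≤ ∑ j : Fin n, ∫ y in Set.univ.pi fun _ : Fin n => Ω,
        ∑ i : Fin 2, ‖covDer α R Ψ (Fin.castLE hnN j) (ext y) i‖ ^ 2 := by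
  obtain ⟨hc1, hc2⟩ := const_bounds hκ hc
  have hemb : Topology.IsClosedEmbedding ext :=
    Function.LeftInverse.isClosedEmbedding (f := fun x j => x (Fin.castLE hnN j))
      (fun y => funext fun j => ext_castLE hnN hext y j)
      (continuous_pi fun j => continuous_apply _) (continuous_ext hext)
  have hDc : ∀ (j : Fin n) (i : Fin 2),
      Continuous fun y => covDer α R Ψ (Fin.castLE hnN j) (ext y) i := fun j i =>
    (continuous_covDer hsmooth hdiag α R (Fin.castLE hnN j) i).comp hemb.continuous
  have hDs : ∀ (j : Fin n) (i : Fin 2),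
      HasCompactSupport fun y => covDer α R Ψ (Fin.castLE hnN j) (ext y) i := fun j i =>
    (HasCompactSupport.intro hsupp.isCompact fun x hx =>
      covDer_eq_zero α R (Fin.castLE hnN j) i hx).comp_isClosedEmbedding hemb
  set S := Set.univ.pi fun _ : Fin n => Ω with hS
  have hint1 : ∀ j : Fin n, IntegrableOn (fun y => ∑ i : Fin 2,
      ‖covDer α R Ψ (Fin.castLE hnN j) (ext y) i‖ ^ 2) S := fun j =>
    integrable_normSq_sum (hDc j) (hDs j) S
  have hint2 : ∀ j k : Fin n, IntegrableOn (fun y => ∑ i : Fin 2,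
      ‖covDer α R Ψ (Fin.castLE hnN j) (ext y) i -
        covDer α R Ψ (Fin.castLE hnN k) (ext y) i‖ ^ 2) S := fun j k =>
    integrable_normSq_sum (fun i => (hDc j i).sub (hDc k i)) (fun i => (hDs j i).sub (hDs k i)) S
  have hint3 : IntegrableOn (fun y => ∑ i : Fin 2,
      ‖∑ j : Fin n, covDer α R Ψ (Fin.castLE hnN j) (ext y) i‖ ^ 2) S := by
    refine integrable_normSq_sum (fun i => continuous_finsetSum _ fun j _ => hDc j i)
      (fun i => ?_) S
    have h : HasCompactSupport fun x => ∑ j : Fin n, covDer α R Ψ (Fin.castLE hnN j) x i :=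
      HasCompactSupport.intro hsupp.isCompact fun x hx =>
        Finset.sum_eq_zero fun j _ => covDer_eq_zero α R (Fin.castLE hnN j) i hx
    exact h.comp_isClosedEmbedding hemb
  have hpt : ∀ y, ∑ j : Fin n, ∑ i : Fin 2, ‖covDer α R Ψ (Fin.castLE hnN j) (ext y) i‖ ^ 2 =
      (n : ℝ)⁻¹ * (∑ i : Fin 2, ‖∑ j : Fin n, covDer α R Ψ (Fin.castLE hnN j) (ext y) i‖ ^ 2) +
      (n : ℝ)⁻¹ * ∑ j : Fin n, ∑ k ∈ Finset.Ioi j, ∑ i : Fin 2,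
        ‖covDer α R Ψ (Fin.castLE hnN j) (ext y) i -
          covDer α R Ψ (Fin.castLE hnN k) (ext y) i‖ ^ 2 := by
    intro y
    rw [Finset.sum_comm]
    simp_rw [lagrange_identity hn, Fin.sum_univ_two, Finset.sum_add_distrib]
    ring
  calc _ ≤ (n : ℝ)⁻¹ * (∫ y in S,
        ∑ i : Fin 2, ‖∑ j : Fin n, covDer α R Ψ (Fin.castLE hnN j) (ext y) i‖ ^ 2)
      + (n : ℝ)⁻¹ * ∑ j : Fin n, ∑ k ∈ Finset.Ioi j, ∫ y in S, ∑ i : Fin 2,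
        ‖covDer α R Ψ (Fin.castLE hnN j) (ext y) i -
          covDer α R Ψ (Fin.castLE hnN k) (ext y) i‖ ^ 2 := by
        refine add_le_add le_rfl (mul_le_mul_of_nonneg_left ?_ (by positivity))
        refine Finset.sum_le_sum fun j _ => Finset.sum_le_sum fun k hk => ?_
        exact integral_pair_le hR hnN hΩopen hΩconv hsmooth hsym hext
          (Finset.mem_Ioi.1 hk).ne hκ hc1 hc2 (hint2 j k)
    _ = ∫ y in S, ∑ j : Fin n, ∑ i : Fin 2, ‖covDer α R Ψ (Fin.castLE hnN j) (ext y) i‖ ^ 2 := by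
        simp_rw [hpt]
        rw [integral_add (hint3.const_mul _) ((integrable_finsetSum _ fun j _ =>
          integrable_finsetSum _ fun k _ => hint2 j k).const_mul _), integral_const_mul,
          integral_const_mul, integral_finsetSum _ fun j _ =>
            integrable_finsetSum _ fun k _ => hint2 j k]
        congr 2
        refine Finset.sum_congr rfl fun j _ => ?_
        rw [integral_finsetSum _ fun k _ => hint2 j k]
    _ = _ := integral_finsetSum _ fun j _ => hint1 j
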